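/- For every G-bounded subset U ⊂ 𝓜 there exist constants 0 < c ≤ C < ∞ such that c ≤ |γ'(x)| ≤ C for all γ ∈ U and all x ∈ 𝕋; that is, the maps γ ↦ ‖|γ'|‖_{L∞} and γ ↦ ‖1/|γ'|‖_{L∞} are bounded on G-bounded sets. -/

import Mathlib

open MeasureTheory Real Filter Set
open scoped ENNReal Topology RealInnerProductSpace

noncomputable section

/-- Euclidean space `ℝⁿ`. -/
abbrev En (n : ℕ) : Type := EuclideanSpace ℝ (Fin n)

/-- A fundamental domain for the circle `𝕋 = ℝ/ℤ`. -/
def I01 : Set ℝ := Set.Ico (0 : ℝ) 1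

/-- The intrinsic distance on `𝕋 = ℝ/ℤ`, expressed for real representatives. -/
def dT (x y : ℝ) : ℝ := ⨅ k : ℤ, |x - y - (k : ℝ)|

/-- Supremum norm of a (periodic) function on the circle. -/
def supNorm {E : Type*} [NormedAddCommGroup E] (f : ℝ → E) : ℝ := ⨆ x : ℝ, ‖f x‖

/-- The squared Gagliardo seminorm `[v]_{H^σ}²` of a function on the circle, valued in `[0,∞]`. -/
def gagliardoSqE {E : Type*} [NormedAddCommGroup E] (σ : ℝ) (v : ℝ → E) : ℝ≥0∞ :=
  ∫⁻ x in I01, ∫⁻ y in I01, ENNReal.ofReal (‖v y - v x‖ ^ 2 / dT x y ^ (2 * σ + 1))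

/-- Membership in the Sobolev–Slobodeckij space `H^s(𝕋, ℝⁿ)`; for `s ∈ (3/2,2)` such
functions have a `C¹` representative, which we take as the defining data. -/
def InHs {n : ℕ} (s : ℝ) (u : ℝ → En n) : Prop :=
  Function.Periodic u 1 ∧ ContDiff ℝ 1 u ∧ gagliardoSqE (s - 1) (deriv u) < ⊤

/-- The squared `H^s` norm `‖u‖²_{L²} + ‖u'‖²_{L²} + [u']²_{H^{s-1}}`. -/
def HsNormSq {n : ℕ} (s : ℝ) (u : ℝ → En n) : ℝ :=
  (∫ x in I01, ‖u x‖ ^ 2) + (∫ x in I01, ‖deriv u x‖ ^ 2) +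
    (gagliardoSqE (s - 1) (deriv u)).toReal

/-- The `H^s` norm. -/
def HsNorm {n : ℕ} (s : ℝ) (u : ℝ → En n) : ℝ := Real.sqrt (HsNormSq s u)

/-- The `H^s` inner product. -/
def HsInner {n : ℕ} (s : ℝ) (u v : ℝ → En n) : ℝ :=
  (∫ x in I01, ⟪u x, v x⟫) + (∫ x in I01, ⟪deriv u x, deriv v x⟫) +
    ∫ x in I01, ∫ y in I01,
      ⟪deriv u y - deriv u x, deriv v y - deriv v x⟫ / dT x y ^ (2 * (s - 1) + 1)

/-- The manifold `𝓜` of embedded closed curves of class `H^s`: injective (on the circle)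
immersions. -/
def InM {n : ℕ} (s : ℝ) (γ : ℝ → En n) : Prop :=
  InHs s γ ∧ Set.InjOn γ I01 ∧ ∀ x, deriv γ x ≠ 0

/-- The length `L(γ)`. -/
def arcLen {n : ℕ} (γ : ℝ → En n) : ℝ := ∫ x in I01, ‖deriv γ x‖

/-- The arc-length distance `d_γ(x,y)`: the length of the shorter of the two arcs of `γ`
between `x` and `y`. -/
def arcDist {n : ℕ} (γ : ℝ → En n) (x y : ℝ) : ℝ :=
  ⨅ k : ℤ, |∫ t in x..(y + (k : ℝ)), ‖deriv γ t‖|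

/-- Derivative with respect to arc length, `D_γ u = u' / |γ'|`. -/
def Dg {n : ℕ} (γ u : ℝ → En n) (x : ℝ) : En n := ‖deriv γ x‖⁻¹ • deriv u x

/-- `𝒟_γ u (x)`, the pointwise linear map `w ↦ |γ'(x)|⁻² ⟪γ'(x), w⟫ u'(x)`. -/
def DDg {n : ℕ} (γ u : ℝ → En n) (x : ℝ) (w : En n) : En n :=
  ((‖deriv γ x‖ ^ 2)⁻¹ * ⟪deriv γ x, w⟫) • deriv u x

/-- The operator `R^s_γ`. -/
def Rop {n : ℕ} (s : ℝ) (γ u : ℝ → En n) (x y : ℝ) : En n :=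
  (‖γ y - γ x‖ ^ s)⁻¹ • (u y - u x - DDg γ u x (γ y - γ x))

/-- Density of the measure `μ_γ` with respect to `λ ⊗ λ` on `𝕋 × 𝕋`. -/
def muW {n : ℕ} (γ : ℝ → En n) (x y : ℝ) : ℝ :=
  ‖deriv γ x‖ * ‖deriv γ y‖ / ‖γ y - γ x‖

/-- Density of the measure `ν_γ` with respect to `λ ⊗ λ` on `𝕋 × 𝕋`. -/
def nuW {n : ℕ} (γ : ℝ → En n) (x y : ℝ) : ℝ :=
  ‖deriv γ x‖ * ‖deriv γ y‖ / arcDist γ x y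

/-- The tangent-point energy, valued in `[0,∞]`. -/
def EtpE {n : ℕ} (s : ℝ) (γ : ℝ → En n) : ℝ≥0∞ :=
  ∫⁻ x in I01, ∫⁻ y in I01, ENNReal.ofReal (‖Rop s γ γ x y‖ ^ 2 * muW γ x y)

/-- The tangent-point energy, real-valued (finite on `𝓜`). -/
def Etp {n : ℕ} (s : ℝ) (γ : ℝ → En n) : ℝ := (EtpE s γ).toReal

/-- `‖R^s_γ u‖²_{L²(ν_γ)}`, valued in `[0,∞]`. -/
def RnuSqE {n : ℕ} (s : ℝ) (γ u : ℝ → En n) : ℝ≥0∞ :=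
  ∫⁻ x in I01, ∫⁻ y in I01, ENNReal.ofReal (‖Rop s γ u x y‖ ^ 2 * nuW γ x y)

/-- `‖R^s_γ u‖²_{L²(ν_γ)}`, real-valued. -/
def RnuSq {n : ℕ} (s : ℝ) (γ u : ℝ → En n) : ℝ := (RnuSqE s γ u).toReal

/-- The squared `γ`-dependent seminorm `[u]²_{H^s(γ)}`, valued in `[0,∞]`. -/
def gagGammaSqE {n : ℕ} (s : ℝ) (γ u : ℝ → En n) : ℝ≥0∞ :=
  ∫⁻ x in I01, ∫⁻ y in I01,
    ENNReal.ofReal (‖Dg γ u y - Dg γ u x‖ ^ 2 / arcDist γ x y ^ (2 * (s - 1)) * nuW γ x y)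

/-- The squared `γ`-dependent seminorm `[u]²_{H^s(γ)}`, real-valued. -/
def gagGammaSq {n : ℕ} (s : ℝ) (γ u : ℝ → En n) : ℝ := (gagGammaSqE s γ u).toReal

/-- The inner product `⟨u,v⟩_{L²(γ)}`. -/
def innerL2g {n : ℕ} (γ u v : ℝ → En n) : ℝ := ∫ x in I01, ⟪u x, v x⟫ * ‖deriv γ x‖

/-- The inner product `⟨u,v⟩_{H¹(γ)}`. -/
def innerH1g {n : ℕ} (γ u v : ℝ → En n) : ℝ :=
  ∫ x in I01, ⟪Dg γ u x, Dg γ v x⟫ * ‖deriv γ x‖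

/-- The squared `γ`-dependent norm `‖u‖²_{H^s(γ)}`. -/
def HsGammaNormSq {n : ℕ} (s : ℝ) (γ u : ℝ → En n) : ℝ :=
  innerL2g γ u u + innerH1g γ u u + gagGammaSq s γ u

/-- The `γ`-dependent norm `‖u‖_{H^s(γ)}`. -/
def HsGammaNorm {n : ℕ} (s : ℝ) (γ u : ℝ → En n) : ℝ := Real.sqrt (HsGammaNormSq s γ u)

/-- The bilinear form `B¹_γ`. -/
def B1 {n : ℕ} (s : ℝ) (γ u v : ℝ → En n) : ℝ :=
  ∫ x in I01, ∫ y in I01, ⟪Rop s γ u x y, Rop s γ v x y⟫ * muW γ x y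

/-- The bilinear form `B²_γ`. -/
def B2 {n : ℕ} (s : ℝ) (γ u v : ℝ → En n) : ℝ :=
  ∫ x in I01, ∫ y in I01,
    ‖Rop s γ γ x y‖ ^ 2 * (⟪u y - u x, v y - v x⟫ / ‖γ y - γ x‖ ^ 2) * muW γ x y

/-- The bilinear form `B³_γ`. -/
def B3 {n : ℕ} (s : ℝ) (γ u v : ℝ → En n) : ℝ :=
  ∫ x in I01, ∫ y in I01,
    ‖Rop s γ γ x y‖ ^ 2 * (⟪Dg γ u x, Dg γ v x⟫ + ⟪Dg γ u y, Dg γ v y⟫) * muW γ x y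

/-- The Riemannian metric `G_γ(u,v)`. -/
def Gmet {n : ℕ} (s : ℝ) (γ u v : ℝ → En n) : ℝ :=
  2 * B1 s γ u v + (2 * s + 1) * B2 s γ u v + B3 s γ u v + innerH1g γ u v + innerL2g γ u v

/-- The distortion `distor(γ) = sup_{x ≠ y} d_γ(x,y)/|γ(y) − γ(x)|`, valued in `[0,∞]`. -/
def distorE {n : ℕ} (γ : ℝ → En n) : ℝ≥0∞ :=
  ⨆ (x ∈ I01) (y ∈ I01) (_ : x ≠ y), ENNReal.ofReal (arcDist γ x y / ‖γ y - γ x‖)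

/-- The distortion, real-valued. -/
def distor {n : ℕ} (γ : ℝ → En n) : ℝ := (distorE γ).toReal

/-- A `C¹` path `[0,1] → 𝓜 ⊂ H^s(𝕋,ℝⁿ)` (with respect to the `H^s` topology), recorded
together with its velocity field `V`. -/
structure C1Path (s : ℝ) (n : ℕ) where
  Γ : ℝ → ℝ → En n
  V : ℝ → ℝ → En n
  mem : ∀ t ∈ Set.Icc (0 : ℝ) 1, InM s (Γ t)
  memV : ∀ t ∈ Set.Icc (0 : ℝ) 1, InHs s (V t)
  isDeriv : ∀ t ∈ Set.Icc (0 : ℝ) 1,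
    Tendsto (fun h : ℝ => HsNorm s fun x => h⁻¹ • (Γ (t + h) x - Γ t x) - V t x)
      (𝓝[{h : ℝ | t + h ∈ Set.Icc (0 : ℝ) 1 ∧ h ≠ 0}] 0) (𝓝 0)
  contV : ∀ t ∈ Set.Icc (0 : ℝ) 1,
    Tendsto (fun τ : ℝ => HsNorm s fun x => V τ x - V t x) (𝓝[Set.Icc (0 : ℝ) 1] t) (𝓝 0)

/-- Length of a path with respect to `G`. -/
def pathLen {s : ℝ} {n : ℕ} (P : C1Path s n) : ℝ :=
  ∫ t in (0 : ℝ)..1, Real.sqrt (Gmet s (P.Γ t) (P.V t) (P.V t))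

/-- The path (Dirichlet) energy of a path with respect to `G`. -/
def pathEnergy {s : ℝ} {n : ℕ} (P : C1Path s n) : ℝ :=
  (1 / 2) * ∫ t in (0 : ℝ)..1, Gmet s (P.Γ t) (P.V t) (P.V t)

/-- The geodesic distance induced by `G`, valued in `[0,∞]` (`∞` if there is no path). -/
def geodDist (s : ℝ) {n : ℕ} (γ₀ γ₁ : ℝ → En n) : ℝ≥0∞ :=
  ⨅ (P : C1Path s n) (_ : P.Γ 0 = γ₀ ∧ P.Γ 1 = γ₁), ENNReal.ofReal (pathLen P)

/-- `U ⊆ 𝓜` is bounded with respect to the geodesic distance `d_G`. -/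
def GBounded (s : ℝ) {n : ℕ} (U : Set (ℝ → En n)) : Prop :=
  (∀ γ ∈ U, InM s γ) ∧
    ∃ γ₀, InM s γ₀ ∧ ∃ R : ℝ, ∀ γ ∈ U, geodDist s γ γ₀ ≤ ENNReal.ofReal R

/-- Weak convergence in the Hilbert space `H^s(𝕋,ℝⁿ)`. -/
def WeakHsTendsto {n : ℕ} (s : ℝ) (γk : ℕ → ℝ → En n) (γ : ℝ → En n) : Prop :=
  ∀ v : ℝ → En n, InHs s v →
    Tendsto (fun k => HsInner s (γk k) v) atTop (𝓝 (HsInner s γ v))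

/-- Directional derivative of `γ ↦ G_γ(u,v)` at `γ` in direction `w`. -/
def DGdir {n : ℕ} (s : ℝ) (γ w u v : ℝ → En n) : ℝ :=
  deriv (fun t : ℝ => Gmet s (fun x => γ x + t • w x) u v) 0

/-- `F'` is the derivative of the path `F` with respect to the `H^s` norm, on `S`. -/
def IsHsDerivOn {n : ℕ} (s : ℝ) (F F' : ℝ → ℝ → En n) (S : Set ℝ) : Prop :=
  ∀ t ∈ S,
    Tendsto (fun h : ℝ => HsNorm s fun x => h⁻¹ • (F (t + h) x - F t x) - F' t x)
      (𝓝[{h : ℝ | t + h ∈ S ∧ h ≠ 0}] 0) (𝓝 0)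

/-- The path `F` is continuous on `S` with respect to the `H^s` norm. -/
def HsContOn {n : ℕ} (s : ℝ) (F : ℝ → ℝ → En n) (S : Set ℝ) : Prop :=
  ∀ t ∈ S, Tendsto (fun τ : ℝ => HsNorm s fun x => F τ x - F t x) (𝓝[S] t) (𝓝 0)

/-- A solution of the geodesic initial value problem on `[0,∞)`, recorded as a triple
(position `Γ`, velocity `V`, acceleration `W`); the geodesic equation
`Γ̈ + A_Γ(Γ̇)Γ̇ = 0` is expressed weakly via the Koszul formula for the
Christoffel operator `A`. -/
def GeodesicSol {n : ℕ} (s : ℝ) (γ₀ v₀ : ℝ → En n) (Γ V W : ℝ → ℝ → En n) : Prop :=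
  (∀ t ∈ Set.Ici (0 : ℝ), InM s (Γ t) ∧ InHs s (V t) ∧ InHs s (W t)) ∧
  Γ 0 = γ₀ ∧ V 0 = v₀ ∧
  IsHsDerivOn s Γ V (Set.Ici 0) ∧ IsHsDerivOn s V W (Set.Ici 0) ∧
  HsContOn s V (Set.Ici 0) ∧ HsContOn s W (Set.Ici 0) ∧
  ∀ t ∈ Set.Ici (0 : ℝ), ∀ w : ℝ → En n, InHs s w →
    Gmet s (Γ t) (W t) w + DGdir s (Γ t) (V t) (V t) w
      - (1 / 2) * DGdir s (Γ t) w (V t) (V t) = 0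

/-!
Along a path with velocity `u`, the speed satisfies `|∂ₜ log |γ'|| ≤ ‖D_γ u‖_∞`, so it suffices to
bound `‖D_γ u‖_∞` by a constant times `√G_γ(u, u)` on each `d_G`-ball. In arc length parametrization
`D_γ u` is a derivative whose oscillation on short intervals is controlled, in the manner of
Campanato, by the tangent-point remainders `R_γ u` and `R_γ γ` in `L²(μ_γ)`; as `2s - 3 > 0` the
dyadic sums converge. This yields the estimate with a constant depending only on an upper bound for
the energy `‖R_γ γ‖²`. The energy stays bounded on `d_G`-balls: its derivative in the direction `u`
is a quadratic expression which the Cauchy–Schwarz inequality bounds by a constant times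
`√(energy) √G_γ(u, u)`, so `√(energy)` grows at most linearly in the length of the path.
-/

section Campanato

variable {E : Type*} [NormedAddCommGroup E] {f : ℝ → E} {α K a b : ℝ}

/-- The constant of the one-sided Campanato estimate: if the `L¹`-oscillation of `f` on intervals of
length `r` is at most `K r ^ (1 + α)`, then summing over dyadic scales costs
`∑ 4 K (r / 2 ^ k) ^ α`. -/
def campanatoConst (α : ℝ) : ℝ := 4 / (1 - 2 ^ (-α))

theorem two_rpow_neg_lt_one (hα : 0 < α) : (2 : ℝ) ^ (-α) < 1 :=
  rpow_lt_one_of_one_lt_of_neg one_lt_two (neg_lt_zero.2 hα)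

theorem campanatoConst_pos (hα : 0 < α) : 0 < campanatoConst α :=
  div_pos four_pos (sub_pos.2 (two_rpow_neg_lt_one hα))

theorem rpow_one_add_eq_mul {r : ℝ} (hr : 0 < r) (α : ℝ) : r ^ (1 + α) = r * r ^ α := by
  rw [rpow_add hr, rpow_one]

theorem mul_norm_sub_le_integral_add_integral (hf : Continuous f) (hab : a ≤ b) (p q : E) :
    (b - a) * ‖p - q‖ ≤ (∫ x in a..b, ‖f x - p‖) + ∫ x in a..b, ‖f x - q‖ := by
  have integrable (e : E) : IntervalIntegrable (fun x => ‖f x - e‖) volume a b :=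
    (hf.sub continuous_const).norm.intervalIntegrable _ _
  calc (b - a) * ‖p - q‖ = ∫ _ in a..b, ‖p - q‖ := by simp
    _ ≤ ∫ x in a..b, (‖f x - p‖ + ‖f x - q‖) := by
      refine intervalIntegral.integral_mono_on hab (by simp) ((integrable p).add (integrable q))
        fun x _ => ?_
      simpa only [norm_sub_rev (f x) p] using norm_sub_le_norm_sub_add_norm_sub p (f x) q
    _ = _ := intervalIntegral.integral_add (integrable p) (integrable q)

theorem norm_center_half_sub_center_le (hf : Continuous f) (hα : 0 < α) {l : ℝ} {c : ℝ → E}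
    (h : ∀ r ∈ Ioc 0 l, ∫ x in a..(a + r), ‖f x - c r‖ ≤ K * r ^ (1 + α))
    {r : ℝ} (hr : r ∈ Ioc 0 l) : ‖c (r / 2) - c r‖ ≤ 4 * K * r ^ α := by
  obtain ⟨hr0, hrl⟩ := hr
  have hhalf : r / 2 ∈ Ioc 0 l := ⟨by linarith, by linarith⟩
  have hK : 0 ≤ K := by
    have hint : 0 ≤ ∫ x in a..(a + r), ‖f x - c r‖ :=
      intervalIntegral.integral_nonneg (by linarith) fun _ _ => norm_nonneg _
    exact nonneg_of_mul_nonneg_left (hint.trans (h r ⟨hr0, hrl⟩)) (by positivity)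
  have hmono : ∫ x in a..(a + r / 2), ‖f x - c r‖ ≤ ∫ x in a..(a + r), ‖f x - c r‖ :=
    intervalIntegral.integral_mono_interval le_rfl (by linarith) (by linarith)
      (Eventually.of_forall fun x => norm_nonneg _)
      ((hf.sub continuous_const).norm.intervalIntegrable _ _)
  have hpow : (r / 2) ^ (1 + α) ≤ r ^ (1 + α) :=
    rpow_le_rpow (by linarith) (by linarith) (by linarith)
  refine le_of_mul_le_mul_left ?_ hhalf.1
  calc r / 2 * ‖c (r / 2) - c r‖
      ≤ (∫ x in a..(a + r / 2), ‖f x - c (r / 2)‖) + ∫ x in a..(a + r / 2), ‖f x - c r‖ := by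
        simpa using mul_norm_sub_le_integral_add_integral hf (by linarith : a ≤ a + r / 2)
          (c (r / 2)) (c r)
    _ ≤ K * (r / 2) ^ (1 + α) + K * r ^ (1 + α) :=
        add_le_add (h _ hhalf) (hmono.trans (h r ⟨hr0, hrl⟩))
    _ ≤ K * r ^ (1 + α) + K * r ^ (1 + α) := by gcongr
    _ = r / 2 * (4 * K * r ^ α) := by rw [rpow_one_add_eq_mul hr0]; ring

theorem tendsto_center (hf : Continuous f) (hα : 0 < α) {l : ℝ} (hl : 0 < l) {c : ℝ → E}
    (h : ∀ r ∈ Ioc 0 l, ∫ x in a..(a + r), ‖f x - c r‖ ≤ K * r ^ (1 + α)) :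
    Tendsto c (𝓝[>] 0) (𝓝 (f a)) := by
  have hmean : Tendsto (fun r => r⁻¹ * ∫ x in a..(a + r), ‖f x - f a‖) (𝓝[>] 0) (𝓝 0) := by
    have hcont : Continuous fun x => ‖f x - f a‖ := (hf.sub continuous_const).norm
    simpa using (hcont.integral_hasStrictDerivAt a a).hasDerivAt.tendsto_slope_zero_right
  have hpow : Tendsto (fun r : ℝ => K * r ^ α) (𝓝[>] 0) (𝓝 0) := by
    have : ContinuousAt (fun r : ℝ => K * r ^ α) 0 :=
      continuousAt_const.mul (continuousAt_rpow_const _ _ (Or.inr hα.le))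
    simpa [zero_rpow hα.ne'] using this.tendsto.mono_left nhdsWithin_le_nhds
  refine tendsto_iff_norm_sub_tendsto_zero.2 (squeeze_zero' (Eventually.of_forall fun _ =>
    norm_nonneg _) ?_ (by simpa using hmean.add hpow))
  filter_upwards [Ioc_mem_nhdsGT hl] with r hr
  have hmul := mul_norm_sub_le_integral_add_integral hf
    (le_add_of_nonneg_right hr.1.le : a ≤ a + r) (f a) (c r)
  rw [add_sub_cancel_left, norm_sub_rev] at hmul
  rw [← mul_le_mul_iff_right₀ hr.1, mul_add, mul_inv_cancel_left₀ hr.1.ne', mul_left_comm,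
    ← rpow_one_add_eq_mul hr.1]
  linarith [h r hr]

theorem norm_center_sub_le (hf : Continuous f) (hα : 0 < α) {l : ℝ} (hl : 0 < l) {c : ℝ → E}
    (h : ∀ r ∈ Ioc 0 l, ∫ x in a..(a + r), ‖f x - c r‖ ≤ K * r ^ (1 + α)) :
    ‖c l - f a‖ ≤ campanatoConst α * K * l ^ α := by
  have hpos (k : ℕ) : 0 < l / 2 ^ k := by positivity
  have hstep (k : ℕ) :
      dist (c (l / 2 ^ k)) (c (l / 2 ^ (k + 1))) ≤ 4 * K * l ^ α * (2 ^ (-α)) ^ k := by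
    have hmem : l / 2 ^ k ∈ Ioc 0 l := ⟨hpos k, div_le_self hl.le (one_le_pow₀ one_le_two)⟩
    have hscale : (l / 2 ^ k) ^ α = l ^ α * (2 ^ (-α)) ^ k := by
      rw [div_rpow hl.le (by positivity), ← rpow_natCast_mul zero_le_two, mul_comm (k : ℝ),
        rpow_mul_natCast zero_le_two, rpow_neg zero_le_two, inv_pow, div_eq_mul_inv]
    have := norm_center_half_sub_center_le hf hα h hmem
    rwa [hscale, ← mul_assoc, div_div, ← pow_succ, norm_sub_rev, ← dist_eq_norm] at this
  have hscales : Tendsto (fun k : ℕ => l / 2 ^ k) atTop (𝓝[>] 0) := by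
    refine tendsto_nhdsWithin_iff.2 ⟨?_, Eventually.of_forall hpos⟩
    exact tendsto_const_nhds.div_atTop (tendsto_pow_atTop_atTop_of_one_lt one_lt_two)
  have := dist_le_of_le_geometric_of_tendsto₀ _ _ (two_rpow_neg_lt_one hα) hstep
    ((tendsto_center hf hα hl h).comp hscales)
  rw [pow_zero, div_one, dist_eq_norm] at this
  exact this.trans_eq (by rw [campanatoConst]; ring)

theorem norm_sub_le_of_integral_norm_sub_le (hf : Continuous f) (hα : 0 < α) (hab : a < b)
    (h : ∀ c d, a ≤ c → c < d → d ≤ b →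
      ∃ e : E, ∫ x in c..d, ‖f x - e‖ ≤ K * (d - c) ^ (1 + α)) :
    ‖f a - f b‖ ≤ 2 * campanatoConst α * K * (b - a) ^ α := by
  choose! e he using h
  have hleft := norm_center_sub_le (c := fun r => e a (a + r)) hf hα (sub_pos.2 hab) fun r hr => by
    simpa using he a (a + r) le_rfl (by linarith [hr.1]) (by linarith [hr.2])
  have hright := norm_center_sub_le (f := fun x => f (-x)) (a := -b) (c := fun r => e (b - r) b)
    (by fun_prop) hα (sub_pos.2 hab) fun r hr => by
      have hint := intervalIntegral.integral_comp_neg (a := -b) (b := -b + r)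
        fun x => ‖f x - e (b - r) b‖
      rw [hint, neg_neg, neg_add', neg_neg]
      simpa using he (b - r) b (by linarith [hr.2]) (by linarith [hr.1]) le_rfl
  rw [add_sub_cancel, norm_sub_rev] at hleft
  rw [sub_sub_cancel, neg_neg] at hright
  linarith [norm_sub_le_norm_sub_add_norm_sub (f a) (e a b) (f b)]

end Campanato

section IntervalIntegral

variable {a b : ℝ}

theorem sq_integral_le_mul_integral_sq {g : ℝ → ℝ} (hg : Continuous g) (hab : a ≤ b) :
    (∫ x in a..b, g x) ^ 2 ≤ (b - a) * ∫ x in a..b, g x ^ 2 := by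
  rcases hab.eq_or_lt with rfl | hab
  · simp
  set m := ∫ x in a..b, g x with hm
  have hnonneg : 0 ≤ ∫ x in a..b, ((b - a) * g x - m) ^ 2 :=
    intervalIntegral.integral_nonneg hab.le fun _ _ => sq_nonneg _
  have hexpand : ∫ x in a..b, ((b - a) * g x - m) ^ 2 =
      (b - a) * ((b - a) * (∫ x in a..b, g x ^ 2) - m ^ 2) := by
    have hpoint (x : ℝ) : ((b - a) * g x - m) ^ 2 =
        (b - a) ^ 2 * g x ^ 2 - 2 * (b - a) * m * g x + m ^ 2 := by ring
    simp_rw [hpoint]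
    rw [intervalIntegral.integral_add, intervalIntegral.integral_sub,
      intervalIntegral.integral_const_mul, intervalIntegral.integral_const_mul,
      intervalIntegral.integral_const, ← hm, smul_eq_mul]
    · ring
    all_goals exact Continuous.intervalIntegrable (by fun_prop) _ _
  rw [hexpand] at hnonneg
  linarith [nonneg_of_mul_nonneg_right hnonneg (sub_pos.2 hab)]

theorem sq_integral_integral_le_mul_integral_integral_sq {g : ℝ → ℝ → ℝ}
    (hg : Continuous (Function.uncurry g)) (hab : a ≤ b) :
    (∫ x in a..b, ∫ y in a..b, g x y) ^ 2 ≤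
      (b - a) ^ 2 * ∫ x in a..b, ∫ y in a..b, g x y ^ 2 := by
  have hinner : Continuous fun x => ∫ y in a..b, g x y :=
    intervalIntegral.continuous_parametric_intervalIntegral_of_continuous' hg a b
  have hinner_sq : Continuous fun x => ∫ y in a..b, g x y ^ 2 :=
    intervalIntegral.continuous_parametric_intervalIntegral_of_continuous' (hg.pow 2) a b
  calc (∫ x in a..b, ∫ y in a..b, g x y) ^ 2
      ≤ (b - a) * ∫ x in a..b, (∫ y in a..b, g x y) ^ 2 := sq_integral_le_mul_integral_sq hinner hab
    _ ≤ (b - a) * ∫ x in a..b, (b - a) * ∫ y in a..b, g x y ^ 2 := by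
      refine mul_le_mul_of_nonneg_left ?_ (sub_nonneg.2 hab)
      exact intervalIntegral.integral_mono_on hab ((hinner.pow 2).intervalIntegrable _ _)
        ((hinner_sq.const_mul _).intervalIntegrable _ _)
        fun x _ => sq_integral_le_mul_integral_sq (hg.comp (Continuous.prodMk_right x)) hab
    _ = _ := by rw [intervalIntegral.integral_const_mul]; ring

theorem exists_mul_le_integral {f : ℝ → ℝ} (hf : Continuous f) (hab : a < b) :
    ∃ x ∈ Icc a b, (b - a) * f x ≤ ∫ y in a..b, f y := by
  obtain ⟨x, hx, hfx⟩ := exists_eq_interval_average hab.ne hf.continuousOn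
  rw [uIoo_of_le hab.le] at hx
  refine ⟨x, Ioo_subset_Icc_self hx, ?_⟩
  rw [hfx, interval_average_eq, smul_eq_mul, mul_inv_cancel_left₀ (sub_pos.2 hab).ne']

theorem exists_norm_le_div_sqrt {E : Type*} [NormedAddCommGroup E] {f : ℝ → E} (hf : Continuous f)
    {Q : ℝ} (hQ : 0 ≤ Q) (hab : a < b) (h : ∫ x in a..b, ‖f x‖ ^ 2 ≤ Q ^ 2) :
    ∃ x ∈ Icc a b, ‖f x‖ ≤ Q / √(b - a) := by
  obtain ⟨x, hx, hfx⟩ := exists_mul_le_integral (hf.norm.pow 2) hab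
  refine ⟨x, hx, (sq_le_sq₀ (norm_nonneg _) (by positivity)).1 ?_⟩
  rw [div_pow, sq_sqrt (sub_pos.2 hab).le, le_div_iff₀ (sub_pos.2 hab), mul_comm]
  exact hfx.trans h

end IntervalIntegral

section FirstMoment

variable {E : Type*} [NormedAddCommGroup E] [NormedSpace ℝ E] {f : ℝ → E} {a b : ℝ}

/-- The first moment of `f` on `[a, b]` about the midpoint. It does not see constants, and for
real-valued functions it measures growth. -/
def firstMoment (f : ℝ → E) (a b : ℝ) : E := ∫ y in a..b, (y - (a + b) / 2) • f y

theorem norm_firstMoment_le (hf : Continuous f) (hab : a ≤ b) :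
    ‖firstMoment f a b‖ ≤ (b - a) / 2 * ∫ y in a..b, ‖f y‖ := by
  rw [← intervalIntegral.integral_const_mul]
  refine (intervalIntegral.norm_integral_le_integral_norm hab).trans
    (intervalIntegral.integral_mono_on hab
      (Continuous.intervalIntegrable (by fun_prop) _ _)
      (Continuous.intervalIntegrable (by fun_prop) _ _) fun y hy => ?_)
  rw [norm_smul, norm_eq_abs]
  gcongr
  exact abs_le.2 ⟨by linarith [hy.1], by linarith [hy.2]⟩

theorem integral_sub_midpoint_sq (a b : ℝ) :
    ∫ y in a..b, (y - (a + b) / 2) ^ 2 = (b - a) ^ 3 / 12 := by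
  rw [intervalIntegral.integral_comp_sub_right (fun y => y ^ 2), integral_pow]
  ring

theorem firstMoment_sub_const [CompleteSpace E] (hf : Continuous f) (e : E) (a b : ℝ) :
    firstMoment (fun y => f y - e) a b = firstMoment f a b := by
  have hzero : ∫ y in a..b, (y - (a + b) / 2) • e = 0 := by
    rw [intervalIntegral.integral_smul_const,
      intervalIntegral.integral_comp_sub_right (fun y => y), integral_id]
    convert zero_smul ℝ e using 2
    ring
  simp only [firstMoment, smul_sub]
  rw [intervalIntegral.integral_sub, hzero, sub_zero]
  all_goals exact Continuous.intervalIntegrable (by fun_prop) _ _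

theorem inner_firstMoment {E : Type*} [NormedAddCommGroup E] [InnerProductSpace ℝ E]
    [CompleteSpace E] {f : ℝ → E} (hf : Continuous f) (e : E) (a b : ℝ) :
    ⟪e, firstMoment f a b⟫ = firstMoment (fun y => ⟪e, f y⟫) a b := by
  have hint : IntervalIntegrable (fun y => (y - (a + b) / 2) • f y) volume a b :=
    Continuous.intervalIntegrable (by fun_prop) _ _
  simpa [firstMoment, inner_smul_right] using
    ((innerSL ℝ e).intervalIntegral_comp_comm hint).symm

theorem mul_pow_three_le_firstMoment {g g' : ℝ → ℝ} {c : ℝ} (hg : ∀ y, HasDerivAt g (g' y) y)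
    (hab : a ≤ b) (hc : ∀ y ∈ Icc a b, c ≤ g' y) :
    c * ((b - a) ^ 3 / 12) ≤ firstMoment g a b := by
  have hgc : Continuous g := continuous_iff_continuousAt.2 fun y => (hg y).continuousAt
  have hgrowth : ∀ y ∈ Icc a b, ∀ z ∈ Icc a b, y ≤ z → c * (z - y) ≤ g z - g y :=
    (convex_Icc a b).mul_sub_le_image_sub_of_le_deriv hgc.continuousOn
      (fun y _ => (hg y).differentiableAt.differentiableWithinAt)
      fun y hy => (hg y).deriv ▸ hc y (interior_subset hy)
  have hmid : (a + b) / 2 ∈ Icc a b := ⟨by linarith, by linarith⟩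
  rw [← firstMoment_sub_const hgc (g ((a + b) / 2)), ← integral_sub_midpoint_sq, firstMoment,
    ← intervalIntegral.integral_const_mul]
  refine intervalIntegral.integral_mono_on hab (Continuous.intervalIntegrable (by fun_prop) _ _)
    (Continuous.intervalIntegrable (by fun_prop) _ _) fun y hy => ?_
  rw [smul_eq_mul]
  rcases le_total y ((a + b) / 2) with h | h
  · nlinarith [hgrowth y hy _ hmid h]
  · nlinarith [hgrowth _ hmid y hy h]

end FirstMoment

section TangentRemainder

variable {E : Type*} [NormedAddCommGroup E] [InnerProductSpace ℝ E]
variable {γ τ u v : ℝ → E} {a b B s : ℝ}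

theorem one_half_le_inner_of_dist_le_one {x y : E} (hx : ‖x‖ = 1) (hy : ‖y‖ = 1)
    (h : dist x y ≤ 1) : 1 / 2 ≤ ⟪x, y⟫ := by
  have hexpand := norm_sub_sq_real x y
  have hsq : ‖x - y‖ ^ 2 ≤ 1 := pow_le_one₀ (norm_nonneg _) (dist_eq_norm x y ▸ h)
  rw [hx, hy] at hexpand
  linarith

/-- The remainder of the first-order expansion of `u` along the curve `γ` with unit tangent `τ`,
where `v` plays the role of the derivative of `u` with respect to arc length. -/
def tangentRemainder (γ τ u v : ℝ → E) (x y : ℝ) : E :=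
  u y - u x - ⟪τ x, γ y - γ x⟫ • v x

theorem continuous_tangentRemainder (hγ : Continuous γ) (hτ : Continuous τ) (hu : Continuous u)
    (hv : Continuous v) : Continuous fun z : ℝ × ℝ => tangentRemainder γ τ u v z.1 z.2 := by
  unfold tangentRemainder
  fun_prop

theorem firstMoment_tangentRemainder [CompleteSpace E] (hγ : Continuous γ) (hu : Continuous u)
    (x : ℝ) : firstMoment (tangentRemainder γ τ u v x) a b =
      firstMoment u a b - ⟪τ x, firstMoment γ a b⟫ • v x := by
  have hsmul : firstMoment (fun y => ⟪τ x, γ y⟫ • v x) a b =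
      firstMoment (fun y => ⟪τ x, γ y⟫) a b • v x := by
    simp only [firstMoment, smul_smul, smul_eq_mul, intervalIntegral.integral_smul_const]
  have hsub : firstMoment (fun y => u y - ⟪τ x, γ y⟫ • v x) a b =
      firstMoment u a b - firstMoment (fun y => ⟪τ x, γ y⟫ • v x) a b := by
    simp only [firstMoment, smul_sub]
    rw [intervalIntegral.integral_sub]
    all_goals exact Continuous.intervalIntegrable (by fun_prop) _ _
  have hsplit : tangentRemainder γ τ u v x =
      fun y => u y - ⟪τ x, γ y⟫ • v x - (u x - ⟪τ x, γ x⟫ • v x) := by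
    funext y
    rw [tangentRemainder, inner_sub_right]
    module
  rw [hsplit, firstMoment_sub_const (by fun_prop), hsub, hsmul, inner_firstMoment hγ]

theorem norm_firstMoment_sub_le [CompleteSpace E] (hγ : Continuous γ) (hu : Continuous u)
    (hab : a ≤ b) (x : ℝ) : ‖firstMoment u a b - ⟪τ x, firstMoment γ a b⟫ • v x‖ ≤
      (b - a) / 2 * ∫ y in a..b, ‖tangentRemainder γ τ u v x y‖ := by
  rw [← firstMoment_tangentRemainder hγ hu]
  refine norm_firstMoment_le ?_ hab
  unfold tangentRemainder
  fun_prop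

/-- Decay of the remainder at scales up to `l`: its squared `L²`-norm on a square of side `r ≤ l`
is at most `B ^ 2 * r ^ (2 * s + 1)`. -/
def RemainderDecay (γ τ u v : ℝ → E) (s B l : ℝ) : Prop :=
  ∀ a b, a < b → b - a ≤ l →
    ∫ x in a..b, ∫ y in a..b, ‖tangentRemainder γ τ u v x y‖ ^ 2 ≤ B ^ 2 * (b - a) ^ (2 * s + 1)

theorem RemainderDecay.mono {l l' : ℝ} (h : RemainderDecay γ τ u v s B l) (hl : l' ≤ l) :
    RemainderDecay γ τ u v s B l' :=
  fun a b hab hba => h a b hab (hba.trans hl)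

theorem RemainderDecay.integral_norm_le (h : RemainderDecay γ τ u v s B (b - a))
    (hγ : Continuous γ) (hτ : Continuous τ) (hu : Continuous u) (hv : Continuous v)
    (hab : a < b) (hB : 0 ≤ B) :
    ∫ x in a..b, ∫ y in a..b, ‖tangentRemainder γ τ u v x y‖ ≤ B * (b - a) ^ (s + 3 / 2) := by
  have hl : 0 < b - a := sub_pos.2 hab
  have hpow : (b - a) ^ (2 * s + 1) * (b - a) ^ 2 = ((b - a) ^ (s + 3 / 2)) ^ 2 := by
    rw [← rpow_natCast _ 2, ← rpow_add hl, ← rpow_mul_natCast hl.le]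
    congr 1
    push_cast
    ring
  refine le_of_sq_le_sq ?_ (by positivity)
  calc (∫ x in a..b, ∫ y in a..b, ‖tangentRemainder γ τ u v x y‖) ^ 2
      ≤ (b - a) ^ 2 * ∫ x in a..b, ∫ y in a..b, ‖tangentRemainder γ τ u v x y‖ ^ 2 :=
        sq_integral_integral_le_mul_integral_integral_sq
          (continuous_tangentRemainder hγ hτ hu hv).norm hab.le
    _ ≤ (b - a) ^ 2 * (B ^ 2 * (b - a) ^ (2 * s + 1)) := by gcongr; exact h a b hab le_rfl
    _ = (B * (b - a) ^ (s + 3 / 2)) ^ 2 := by rw [mul_pow, ← hpow]; ring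

end TangentRemainder

/-- Continuous induction on the scale: an oscillation bound which improves itself by a factor `1/2`
at each scale up to `l` propagates from infinitesimal scales to scale `l`. -/
theorem dist_le_of_forall_le_imp_dist_le_half {V X : Type*} [SeminormedAddCommGroup V]
    [NormedSpace ℝ V] [PseudoMetricSpace X] {f : V → X} (hf : UniformContinuous f) {ε l : ℝ}
    (hε : 0 < ε)
    (himp : ∀ l' ≤ l, (∀ x y, dist x y ≤ l' → dist (f x) (f y) ≤ ε) →
      ∀ x y, dist x y ≤ l' → dist (f x) (f y) ≤ ε / 2) (x y : V) (hxy : dist x y ≤ l) :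
    dist (f x) (f y) ≤ ε := by
  obtain ⟨δ, hδ, hfδ⟩ := Metric.uniformContinuous_iff_le.1 hf (ε / 2) (half_pos hε)
  have hscale (N : ℕ) : ∀ x y, dist x y ≤ min (N * δ) l → dist (f x) (f y) ≤ ε := by
    induction N with
    | zero =>
      intro x y h
      have hxy : dist x y ≤ δ := (h.trans (min_le_left _ _)).trans (by simpa using hδ.le)
      linarith [hfδ hxy]
    | succ N ih =>
      intro x y h
      have hl : 0 ≤ l := dist_nonneg.trans (h.trans (min_le_right _ _))
      have hle : min ((N + 1 : ℕ) * δ) l ≤ δ + min (N * δ) l := by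
        rw [← min_add_add_left]
        exact min_le_min (by push_cast; linarith) (by linarith)
      obtain ⟨z, hxz, hzy⟩ := exists_dist_le_le (by positivity) hδ.le (h.trans hle)
      linarith [dist_triangle (f x) (f z) (f y), himp _ (min_le_right _ _) ih x z hxz, hfδ hzy]
  obtain ⟨N, hN⟩ := exists_nat_ge (dist x y / δ)
  exact hscale N x y (le_min ((div_le_iff₀ hδ).1 hN) hxy)

/-- A curve parametrized by arc length together with its tangent field, which is
required to be uniformly continuous. -/
structure IsUnitSpeed {E : Type*} [NormedAddCommGroup E] [NormedSpace ℝ E] (γ τ : ℝ → E) :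
    Prop where
  hasDerivAt (x : ℝ) : HasDerivAt γ (τ x) x
  norm_tangent (x : ℝ) : ‖τ x‖ = 1
  uniformContinuous_tangent : UniformContinuous τ

namespace IsUnitSpeed

variable {E : Type*} [NormedAddCommGroup E] [InnerProductSpace ℝ E]
variable {γ τ u v : ℝ → E} {a b A B M s l L : ℝ}

theorem continuous (h : IsUnitSpeed γ τ) : Continuous γ :=
  continuous_iff_continuousAt.2 fun x => (h.hasDerivAt x).continuousAt

theorem continuous_tangent (h : IsUnitSpeed γ τ) : Continuous τ :=
  h.uniformContinuous_tangent.continuous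

theorem hasDerivAt_inner (h : IsUnitSpeed γ τ) (e : E) (y : ℝ) :
    HasDerivAt (fun y => ⟪e, γ y⟫) ⟪e, τ y⟫ y :=
  (innerSL ℝ e).hasFDerivAt.comp_hasDerivAt y (h.hasDerivAt y)

theorem exists_one_lt_dist_tangent (h : IsUnitSpeed γ τ) (hL : 0 < L)
    (hper : Function.Periodic γ L) : ∃ x y, dist x y ≤ L ∧ 1 < dist (τ x) (τ y) := by
  by_contra! hτ
  have hhalf : ∀ y ∈ interior (Icc 0 L), 1 / 2 ≤ deriv (fun y => ⟪τ 0, γ y⟫) y := by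
    intro y hy
    rw [(h.hasDerivAt_inner _ y).deriv]
    refine one_half_le_inner_of_dist_le_one (h.norm_tangent 0) (h.norm_tangent y) (hτ 0 y ?_)
    simpa using Real.dist_le_of_mem_Icc (left_mem_Icc.2 hL.le) (interior_subset hy)
  have hgrowth := (convex_Icc 0 L).mul_sub_le_image_sub_of_le_deriv
    (fun y _ => (h.hasDerivAt_inner _ y).continuousAt.continuousWithinAt)
    (fun y _ => (h.hasDerivAt_inner _ y).differentiableAt.differentiableWithinAt) hhalf
    0 (left_mem_Icc.2 hL.le) L (right_mem_Icc.2 hL.le) hL.le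
  have hclosed : γ L = γ 0 := by simpa using hper 0
  rw [hclosed] at hgrowth
  linarith

variable [CompleteSpace E]

theorem pow_three_div_le_inner_firstMoment (h : IsUnitSpeed γ τ) (hab : a ≤ b) {x : ℝ}
    (hτ : ∀ y ∈ Icc a b, 1 / 2 ≤ ⟪τ x, τ y⟫) :
    (b - a) ^ 3 / 24 ≤ ⟪τ x, firstMoment γ a b⟫ := by
  rw [inner_firstMoment h.continuous]
  have := mul_pow_three_le_firstMoment (h.hasDerivAt_inner (τ x)) hab hτ
  linarith

/-- Eliminating the tangent component of the moment of `γ` shows that `v x` is close to the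
`x`-independent vector `‖w‖⁻¹ • U`, where `w` and `U` are the first moments of `γ` and `u`. -/
theorem norm_sub_inv_smul_firstMoment_le (h : IsUnitSpeed γ τ) (hu : Continuous u) (hab : a < b)
    {x : ℝ} (hτ : ∀ y ∈ Icc a b, 1 / 2 ≤ ⟪τ x, τ y⟫) (hM : ‖v x‖ ≤ M) :
    ‖v x - ‖firstMoment γ a b‖⁻¹ • firstMoment u a b‖ ≤
      12 / (b - a) ^ 2 * ((∫ y in a..b, ‖tangentRemainder γ τ u v x y‖) +
        M * ∫ y in a..b, ‖tangentRemainder γ τ γ τ x y‖) := by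
  have hl : 0 < b - a := sub_pos.2 hab
  have hU := norm_firstMoment_sub_le (τ := τ) (v := v) h.continuous hu hab.le x
  have hw := norm_firstMoment_sub_le (τ := τ) (v := τ) h.continuous h.continuous hab.le x
  have hβ := h.pow_three_div_le_inner_firstMoment hab.le hτ
  set w := firstMoment γ a b
  set U := firstMoment u a b
  set β := ⟪τ x, w⟫
  set R := ∫ y in a..b, ‖tangentRemainder γ τ u v x y‖
  set S := ∫ y in a..b, ‖tangentRemainder γ τ γ τ x y‖
  have hβ0 : 0 < β := lt_of_lt_of_le (by positivity) hβ
  have hβw : β ≤ ‖w‖ := by simpa [h.norm_tangent] using real_inner_le_norm (τ x) w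
  have hw0 : 0 < ‖w‖ := hβ0.trans_le hβw
  have hdiff : |‖w‖ - β| ≤ (b - a) / 2 * S := by
    have := abs_norm_sub_norm_le w (β • τ x)
    rw [norm_smul, h.norm_tangent, mul_one, norm_of_nonneg hβ0.le] at this
    exact this.trans hw
  have hS : 0 ≤ (b - a) / 2 * S := (abs_nonneg _).trans hdiff
  have hscaled : ‖‖w‖ • v x - U‖ ≤ (b - a) / 2 * (R + M * S) := by
    calc ‖‖w‖ • v x - U‖ = ‖(‖w‖ - β) • v x - (U - β • v x)‖ := by congr 1; module
      _ ≤ |‖w‖ - β| * ‖v x‖ + ‖U - β • v x‖ := by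
        rw [← norm_eq_abs, ← norm_smul]; exact norm_sub_le _ _
      _ ≤ (b - a) / 2 * S * M + (b - a) / 2 * R := by gcongr
      _ = _ := by ring
  have hinv : ‖w‖⁻¹ ≤ 24 / (b - a) ^ 3 := by
    rw [inv_le_comm₀ hw0 (by positivity), inv_div]
    exact hβ.trans hβw
  calc ‖v x - ‖w‖⁻¹ • U‖ = ‖w‖⁻¹ * ‖‖w‖ • v x - U‖ := by
        rw [← norm_smul_of_nonneg (inv_nonneg.2 hw0.le), smul_sub, inv_smul_smul₀ hw0.ne']
    _ ≤ 24 / (b - a) ^ 3 * ((b - a) / 2 * (R + M * S)) := by gcongr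
    _ = 12 / (b - a) ^ 2 * (R + M * S) := by field_simp; ring

theorem exists_integral_norm_sub_le (h : IsUnitSpeed γ τ) (hu : Continuous u) (hv : Continuous v)
    (hab : a < b) (hA : 0 ≤ A) (hB : 0 ≤ B)
    (hτ : ∀ x ∈ Icc a b, ∀ y ∈ Icc a b, dist (τ x) (τ y) ≤ 1) (hM : ∀ x ∈ Icc a b, ‖v x‖ ≤ M)
    (hγB : RemainderDecay γ τ γ τ s A (b - a)) (huB : RemainderDecay γ τ u v s B (b - a)) :
    ∃ c : E, ∫ x in a..b, ‖v x - c‖ ≤ 12 * (B + M * A) * (b - a) ^ (1 + (s - 3 / 2)) := by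
  have hl : 0 < b - a := sub_pos.2 hab
  have hM0 : 0 ≤ M := (norm_nonneg _).trans (hM a (left_mem_Icc.2 hab.le))
  have hγ := h.continuous
  have hτc := h.continuous_tangent
  have hcont {u v : ℝ → E} (hu : Continuous u) (hv : Continuous v) :
      Continuous fun x => ∫ y in a..b, ‖tangentRemainder γ τ u v x y‖ :=
    intervalIntegral.continuous_parametric_intervalIntegral_of_continuous'
      (continuous_tangentRemainder hγ hτc hu hv).norm a b
  have hcu := hcont hu hv
  have hcγ := hcont hγ hτc
  have hpow : (b - a) ^ (s + 3 / 2) = (b - a) ^ (1 + (s - 3 / 2)) * (b - a) ^ 2 := by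
    rw [← rpow_natCast _ 2, ← rpow_add hl]
    congr 1
    push_cast
    ring
  refine ⟨‖firstMoment γ a b‖⁻¹ • firstMoment u a b, ?_⟩
  calc ∫ x in a..b, ‖v x - ‖firstMoment γ a b‖⁻¹ • firstMoment u a b‖
      ≤ ∫ x in a..b, 12 / (b - a) ^ 2 * ((∫ y in a..b, ‖tangentRemainder γ τ u v x y‖) +
          M * ∫ y in a..b, ‖tangentRemainder γ τ γ τ x y‖) := by
        refine intervalIntegral.integral_mono_on hab.le
          (Continuous.intervalIntegrable (by fun_prop) _ _)
          (Continuous.intervalIntegrable (by fun_prop) _ _) fun x hx => ?_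
        exact h.norm_sub_inv_smul_firstMoment_le hu hab (fun y hy =>
          one_half_le_inner_of_dist_le_one (h.norm_tangent x) (h.norm_tangent y) (hτ x hx y hy))
          (hM x hx)
    _ = 12 / (b - a) ^ 2 * ((∫ x in a..b, ∫ y in a..b, ‖tangentRemainder γ τ u v x y‖) +
          M * ∫ x in a..b, ∫ y in a..b, ‖tangentRemainder γ τ γ τ x y‖) := by
        rw [intervalIntegral.integral_const_mul, intervalIntegral.integral_add
          (hcu.intervalIntegrable _ _) ((hcγ.const_mul M).intervalIntegrable _ _),
          intervalIntegral.integral_const_mul]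
    _ ≤ 12 / (b - a) ^ 2 * (B * (b - a) ^ (s + 3 / 2) + M * (A * (b - a) ^ (s + 3 / 2))) := by
        gcongr
        · exact huB.integral_norm_le hγ hτc hu hv hab hB
        · exact hγB.integral_norm_le hγ hτc hγ hτc hab hA
    _ = 12 * (B + M * A) * (b - a) ^ (1 + (s - 3 / 2)) := by rw [hpow]; field_simp

theorem dist_le_of_dist_tangent_le_one (h : IsUnitSpeed γ τ) (hu : Continuous u)
    (hv : Continuous v) (hs : 3 / 2 < s) (hA : 0 ≤ A) (hB : 0 ≤ B)
    (hτ : ∀ x y, dist x y ≤ l → dist (τ x) (τ y) ≤ 1) (hM : ∀ x, ‖v x‖ ≤ M)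
    (hγB : RemainderDecay γ τ γ τ s A l) (huB : RemainderDecay γ τ u v s B l)
    (x y : ℝ) (hxy : dist x y ≤ l) :
    dist (v x) (v y) ≤ 24 * campanatoConst (s - 3 / 2) * (B + M * A) * l ^ (s - 3 / 2) := by
  have hα : 0 < s - 3 / 2 := sub_pos.2 hs
  have hC := campanatoConst_pos hα
  have hM0 : 0 ≤ M := (norm_nonneg _).trans (hM 0)
  have hl : 0 ≤ l := dist_nonneg.trans hxy
  wlog hlt : x < y generalizing x y
  · rcases (not_lt.1 hlt).eq_or_lt with rfl | hlt'
    · rw [dist_self]; positivity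
    · rw [dist_comm]; exact this y x (by rwa [dist_comm]) hlt'
  rw [dist_comm, dist_eq, abs_of_pos (sub_pos.2 hlt)] at hxy
  rw [dist_eq_norm]
  calc ‖v x - v y‖
      ≤ 2 * campanatoConst (s - 3 / 2) * (12 * (B + M * A)) * (y - x) ^ (s - 3 / 2) := by
        refine norm_sub_le_of_integral_norm_sub_le hv hα hlt fun a b ha hab hb => ?_
        have hba : b - a ≤ l := by linarith
        refine h.exists_integral_norm_sub_le hu hv hab hA hB (fun p hp q hq => hτ p q ?_)
          (fun p _ => hM p) (hγB.mono hba) (huB.mono hba)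
        exact (Real.dist_le_of_mem_Icc hp hq).trans hba
    _ = 24 * campanatoConst (s - 3 / 2) * (B + M * A) * (y - x) ^ (s - 3 / 2) := by ring
    _ ≤ _ := by gcongr

theorem dist_tangent_le_one (h : IsUnitSpeed γ τ) (hs : 3 / 2 < s) (hA : 0 ≤ A)
    (hl : 48 * campanatoConst (s - 3 / 2) * A * l ^ (s - 3 / 2) ≤ 1 / 2)
    (hγB : RemainderDecay γ τ γ τ s A l) (x y : ℝ) (hxy : dist x y ≤ l) :
    dist (τ x) (τ y) ≤ 1 := by
  have hα : 0 < s - 3 / 2 := sub_pos.2 hs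
  have hC := campanatoConst_pos hα
  refine dist_le_of_forall_le_imp_dist_le_half h.uniformContinuous_tangent one_pos
    (fun l' hl' hτ p q hpq => ?_) x y hxy
  have hl'0 : 0 ≤ l' := dist_nonneg.trans hpq
  calc dist (τ p) (τ q)
      ≤ 24 * campanatoConst (s - 3 / 2) * (A + 1 * A) * l' ^ (s - 3 / 2) :=
        h.dist_le_of_dist_tangent_le_one h.continuous h.continuous_tangent hs hA hA hτ
          (fun x => (h.norm_tangent x).le) (hγB.mono hl') (hγB.mono hl') p q hpq
    _ = 48 * campanatoConst (s - 3 / 2) * A * l' ^ (s - 3 / 2) := by ring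
    _ ≤ 48 * campanatoConst (s - 3 / 2) * A * l ^ (s - 3 / 2) := by gcongr
    _ ≤ 1 / 2 := hl

theorem lt_period (h : IsUnitSpeed γ τ) (hs : 3 / 2 < s) (hA : 0 ≤ A) (hL : 0 < L)
    (hper : Function.Periodic γ L)
    (hl : 48 * campanatoConst (s - 3 / 2) * A * l ^ (s - 3 / 2) ≤ 1 / 2)
    (hγB : RemainderDecay γ τ γ τ s A L) : l < L := by
  have hα : 0 < s - 3 / 2 := sub_pos.2 hs
  have hC := campanatoConst_pos hα
  by_contra! hLl
  obtain ⟨x, y, hxy, hlt⟩ := h.exists_one_lt_dist_tangent hL hper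
  exact hlt.not_ge (h.dist_tangent_le_one hs hA (le_trans (by gcongr) hl) hγB x y hxy)

/-- The Morrey-type sup bound: at a maximum point `x` of `‖v‖`, compare `v x` with the value of `v`
at a point of `[x, x + l]` where `‖v‖` does not exceed its quadratic mean. -/
theorem norm_le_of_remainderDecay (h : IsUnitSpeed γ τ) (hu : Continuous u) (hv : Continuous v)
    {Q : ℝ} (hs : 3 / 2 < s) (hA : 0 ≤ A) (hQ : 0 ≤ Q) (hl0 : 0 < l) (hL : 0 < L)
    (hper : Function.Periodic γ L)
    (hl : 48 * campanatoConst (s - 3 / 2) * A * l ^ (s - 3 / 2) ≤ 1 / 2)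
    {x : ℝ} (hx : ∀ y, ‖v y‖ ≤ ‖v x‖)
    (hγB : RemainderDecay γ τ γ τ s A L) (huB : RemainderDecay γ τ u v s Q L)
    (hvQ : ∫ y in x..(x + l), ‖v y‖ ^ 2 ≤ Q ^ 2) :
    ‖v x‖ ≤ 4 / 3 * (1 / √l + 24 * campanatoConst (s - 3 / 2) * l ^ (s - 3 / 2)) * Q := by
  have hlL : l ≤ L := (h.lt_period hs hA hL hper hl hγB).le
  obtain ⟨y, hy, hvy⟩ := exists_norm_le_div_sqrt hv hQ (lt_add_of_pos_right x hl0) hvQ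
  rw [add_sub_cancel_left] at hvy
  have hxy : dist x y ≤ l := by
    simpa using Real.dist_le_of_mem_Icc (left_mem_Icc.2 (by linarith)) hy
  have hosc := h.dist_le_of_dist_tangent_le_one hu hv hs hA hQ
    (h.dist_tangent_le_one hs hA hl (hγB.mono hlL)) hx (hγB.mono hlL) (huB.mono hlL) x y hxy
  have htri : ‖v x‖ ≤ ‖v y‖ + dist (v x) (v y) := by
    rw [dist_eq_norm]; linarith [norm_sub_norm_le (v x) (v y)]
  have habsorb : ‖v x‖ * (48 * campanatoConst (s - 3 / 2) * A * l ^ (s - 3 / 2)) ≤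
      ‖v x‖ * (1 / 2) := by gcongr
  rw [div_eq_mul_one_div] at hvy
  linarith

end IsUnitSpeed

section Periodic

variable {E : Type*} {f : ℝ → E} {T : ℝ}

theorem setLIntegral_Ioc_eq_of_periodic {f : ℝ → ℝ≥0∞} (hf : Function.Periodic f 1) (p : ℝ) :
    ∫⁻ x in Ioc p (p + 1), f x = ∫⁻ x in I01, f x := by
  have hI01 : ∫⁻ x in I01, f x = ∫⁻ x in Ioc (0 : ℝ) (0 + 1), f x := by
    rw [zero_add]
    exact setLIntegral_congr Ico_ae_eq_Ioc
  rw [hI01]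
  exact (isAddFundamentalDomain_Ioc one_pos p).setLIntegral_eq
    (isAddFundamentalDomain_Ioc one_pos 0) f hf.map_vadd_zmultiples

theorem setLIntegral_Ioc_Ioc_eq_of_periodic {F : ℝ → ℝ → ℝ≥0∞} (h₁ : Function.Periodic F 1)
    (h₂ : ∀ x, Function.Periodic (F x) 1) (p : ℝ) :
    ∫⁻ x in Ioc p (p + 1), ∫⁻ y in Ioc p (p + 1), F x y =
      ∫⁻ x in I01, ∫⁻ y in I01, F x y := by
  simp_rw [setLIntegral_Ioc_eq_of_periodic (h₂ _) p]
  exact setLIntegral_Ioc_eq_of_periodic (fun x => by rw [h₁ x]) p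

theorem integral_Ioc_eq_of_periodic [NormedAddCommGroup E] [NormedSpace ℝ E]
    (hf : Function.Periodic f 1) (p : ℝ) : ∫ x in p..p + 1, f x = ∫ x in I01, f x := by
  rw [hf.intervalIntegral_add_eq p 0, zero_add, intervalIntegral.integral_of_le zero_le_one]
  exact setIntegral_congr_set Ico_ae_eq_Ioc.symm

theorem uniformContinuous_of_periodic [UniformSpace E] (hT : 0 < T) (hc : Continuous f)
    (hf : Function.Periodic f T) : UniformContinuous f := by
  have : Fact (0 < T) := ⟨hT⟩
  have hlift : Continuous (hf.lift : AddCircle T → E) := continuous_coinduced_dom.2 hc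
  have hmk : UniformContinuous fun x : ℝ => (x : AddCircle T) :=
    uniformContinuous_addMonoidHom_of_continuous
      (f := QuotientAddGroup.mk' (AddSubgroup.zmultiples T)) (AddCircle.continuous_mk' T)
  exact (CompactSpace.uniformContinuous_of_continuous hlift).comp hmk

theorem exists_forall_norm_le_of_periodic [SeminormedAddCommGroup E] (hT : 0 < T)
    (hc : Continuous f) (hf : Function.Periodic f T) : ∃ x, ∀ y, ‖f y‖ ≤ ‖f x‖ := by
  obtain ⟨x, -, hx⟩ := isCompact_Icc.exists_isMaxOn (nonempty_Icc.2 hT.le) hc.norm.continuousOn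
  refine ⟨x, fun y => ?_⟩
  obtain ⟨z, hz, hyz⟩ := hf.exists_mem_Ico₀ hT y
  rw [hyz]
  exact hx (Ico_subset_Icc_self hz)

theorem periodic_deriv [NormedAddCommGroup E] [NormedSpace ℝ E] (hf : Function.Periodic f T) :
    Function.Periodic (deriv f) T := fun x => by
  rw [← deriv_comp_add_const, funext hf]

theorem apply_add_intCast_of_periodic (hf : Function.Periodic f 1) (x : ℝ) (k : ℤ) :
    f (x + k) = f x := by
  simpa only [mul_one] using hf.int_mul k x

end Periodic

theorem ofReal_integral_integral_eq_lintegral {F : ℝ → ℝ → ℝ}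
    (hF : Continuous fun z : ℝ × ℝ => F z.1 z.2) (hF0 : ∀ x y, 0 ≤ F x y) {a b : ℝ} (hab : a ≤ b) :
    ENNReal.ofReal (∫ x in a..b, ∫ y in a..b, F x y) =
      ∫⁻ x in Ioc a b, ∫⁻ y in Ioc a b, ENNReal.ofReal (F x y) := by
  have hinner : Continuous fun x => ∫ y in a..b, F x y :=
    intervalIntegral.continuous_parametric_intervalIntegral_of_continuous' hF a b
  rw [intervalIntegral.integral_of_le hab, ofReal_integral_eq_lintegral_ofReal
    hinner.integrableOn_Ioc (ae_of_all _ fun x =>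
      intervalIntegral.integral_nonneg hab fun y _ => hF0 x y)]
  refine lintegral_congr fun x => ?_
  have hFx : Continuous (F x) := hF.comp (Continuous.prodMk_right x)
  rw [intervalIntegral.integral_of_le hab,
    ofReal_integral_eq_lintegral_ofReal hFx.integrableOn_Ioc (ae_of_all _ (hF0 x))]

theorem integral_integral_le_mul_of_periodic {F D : ℝ → ℝ → ℝ}
    (hF : Continuous fun z : ℝ × ℝ => F z.1 z.2) (hF0 : ∀ x y, 0 ≤ F x y)
    (hD₁ : Function.Periodic D 1) (hD₂ : ∀ x, Function.Periodic (D x) 1) {a b c C : ℝ}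
    (hab : a ≤ b) (hba : b ≤ a + 1) (hc : 0 ≤ c) (hC : 0 ≤ C)
    (hFD : ∀ x ∈ Icc a b, ∀ y ∈ Icc a b, F x y ≤ c * D x y)
    (hD : ∫⁻ x in I01, ∫⁻ y in I01, ENNReal.ofReal (D x y) ≤ ENNReal.ofReal C) :
    ∫ x in a..b, ∫ y in a..b, F x y ≤ c * C := by
  have hsub : Ioc a b ⊆ Ioc a (a + 1) := Ioc_subset_Ioc_right hba
  rw [← ENNReal.ofReal_le_ofReal_iff (by positivity),
    ofReal_integral_integral_eq_lintegral hF hF0 hab]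
  calc ∫⁻ x in Ioc a b, ∫⁻ y in Ioc a b, ENNReal.ofReal (F x y)
      ≤ ∫⁻ x in Ioc a b, ∫⁻ y in Ioc a b, ENNReal.ofReal c * ENNReal.ofReal (D x y) := by
        refine setLIntegral_mono' measurableSet_Ioc fun x hx =>
          setLIntegral_mono' measurableSet_Ioc fun y hy => ?_
        rw [← ENNReal.ofReal_mul hc]
        exact ENNReal.ofReal_le_ofReal
          (hFD x (Ioc_subset_Icc_self hx) y (Ioc_subset_Icc_self hy))
    _ = ENNReal.ofReal c * ∫⁻ x in Ioc a b, ∫⁻ y in Ioc a b, ENNReal.ofReal (D x y) := by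
        simp_rw [lintegral_const_mul' _ _ ENNReal.ofReal_ne_top]
    _ ≤ ENNReal.ofReal c * ∫⁻ x in I01, ∫⁻ y in I01, ENNReal.ofReal (D x y) := by
        rw [← setLIntegral_Ioc_Ioc_eq_of_periodic (F := fun x y => ENNReal.ofReal (D x y))
          (fun x => by simp only [hD₁ x]) (fun x y => by simp only [hD₂ x y]) a]
        gcongr
    _ ≤ ENNReal.ofReal c * ENNReal.ofReal C := by gcongr
    _ = ENNReal.ofReal (c * C) := (ENNReal.ofReal_mul hc).symm

namespace InHs

variable {n : ℕ} {s : ℝ} {u : ℝ → En n}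

theorem periodic (h : InHs s u) : Function.Periodic u 1 := h.1

theorem periodic_deriv (h : InHs s u) : Function.Periodic (deriv u) 1 := _root_.periodic_deriv h.1

theorem continuous (h : InHs s u) : Continuous u := h.2.1.continuous

theorem continuous_deriv (h : InHs s u) : Continuous (deriv u) := h.2.1.continuous_deriv le_rfl

theorem hasDerivAt (h : InHs s u) (x : ℝ) : HasDerivAt u (deriv u x) x :=
  (h.2.1.differentiable one_ne_zero x).hasDerivAt

end InHs

namespace InM

variable {n : ℕ} {s : ℝ} {γ u : ℝ → En n}

theorem inHs (h : InM s γ) : InHs s γ := h.1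

theorem norm_deriv_pos (h : InM s γ) (x : ℝ) : 0 < ‖deriv γ x‖ := norm_pos_iff.2 (h.2.2 x)

theorem norm_deriv_ne_zero (h : InM s γ) (x : ℝ) : ‖deriv γ x‖ ≠ 0 := (h.norm_deriv_pos x).ne'

theorem exists_int_of_eq (h : InM s γ) {x y : ℝ} (hxy : γ x = γ y) : ∃ k : ℤ, y = x + k := by
  have hfract : ∀ z, γ (Int.fract z) = γ z := fun z => by
    have := apply_add_intCast_of_periodic h.inHs.periodic (Int.fract z) ⌊z⌋
    rwa [Int.fract_add_floor, eq_comm] at this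
  have hmem : ∀ z, Int.fract z ∈ I01 := fun z => ⟨Int.fract_nonneg z, Int.fract_lt_one z⟩
  have := h.2.1 (hmem x) (hmem y) (by rw [hfract, hfract, hxy])
  obtain ⟨k, hk⟩ := Int.fract_eq_fract.1 this.symm
  exact ⟨k, by linarith⟩

theorem continuous_Dg (h : InM s γ) (hu : InHs s u) : Continuous (Dg γ u) :=
  (h.inHs.continuous_deriv.norm.inv₀ h.norm_deriv_ne_zero).smul hu.continuous_deriv

end InM

section Dg

variable {n : ℕ} {s : ℝ} {γ u : ℝ → En n}

theorem periodic_Dg (hγ : InHs s γ) (hu : InHs s u) : Function.Periodic (Dg γ u) 1 := fun x => by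
  simp only [Dg, hγ.periodic_deriv x, hu.periodic_deriv x]

theorem DDg_eq_inner_smul_Dg (γ u : ℝ → En n) (x : ℝ) (w : En n) :
    DDg γ u x w = ⟪Dg γ γ x, w⟫ • Dg γ u x := by
  simp only [DDg, Dg, real_inner_smul_left, smul_smul]
  ring_nf

/-- The numerator `u(y) - u(x) - 𝒟_γ u(x) (γ(y) - γ(x))` of `R^s_γ u`. -/
def remainderNum (γ u : ℝ → En n) (x y : ℝ) : En n := u y - u x - DDg γ u x (γ y - γ x)

theorem remainderNum_eq_tangentRemainder (γ u : ℝ → En n) :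
    remainderNum γ u = tangentRemainder γ (Dg γ γ) u (Dg γ u) := by
  funext x y
  rw [remainderNum, tangentRemainder, DDg_eq_inner_smul_Dg]

theorem continuous_remainderNum (hγ : InM s γ) (hu : InHs s u) :
    Continuous fun z : ℝ × ℝ => remainderNum γ u z.1 z.2 := by
  rw [remainderNum_eq_tangentRemainder]
  exact continuous_tangentRemainder hγ.inHs.continuous (hγ.continuous_Dg hγ.inHs) hu.continuous
    (hγ.continuous_Dg hu)

theorem remainderNum_eq_zero (hγ : InM s γ) (hu : InHs s u) {x y : ℝ} (hxy : γ x = γ y) :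
    remainderNum γ u x y = 0 := by
  obtain ⟨k, rfl⟩ := hγ.exists_int_of_eq hxy
  simp [remainderNum, DDg, apply_add_intCast_of_periodic hu.periodic, ← hxy]

theorem muW_nonneg (γ : ℝ → En n) (x y : ℝ) : 0 ≤ muW γ x y := by
  unfold muW
  positivity

theorem norm_Rop_sq_mul_muW {x y : ℝ} (hxy : γ x ≠ γ y) :
    ‖Rop s γ u x y‖ ^ 2 * muW γ x y = ‖remainderNum γ u x y‖ ^ 2 *
      (‖deriv γ x‖ * ‖deriv γ y‖) * (‖γ y - γ x‖ ^ (2 * s + 1))⁻¹ := by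
  have hpos : 0 < ‖γ y - γ x‖ := norm_pos_iff.2 (sub_ne_zero.2 hxy.symm)
  have hpow : ‖γ y - γ x‖ ^ (2 * s + 1) = (‖γ y - γ x‖ ^ s) ^ 2 * ‖γ y - γ x‖ := by
    rw [rpow_add hpos, rpow_one, mul_comm 2 s, rpow_mul hpos.le, rpow_two]
  have : 0 < ‖γ y - γ x‖ ^ s := rpow_pos_of_pos hpos s
  rw [hpow, muW, Rop, ← remainderNum, norm_smul, norm_inv, norm_of_nonneg this.le]
  field_simp

theorem norm_remainderNum_sq_mul_le (hs : 0 < s) (hγ : InM s γ) (hu : InHs s u) {x y l : ℝ}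
    (hl : ‖γ y - γ x‖ ≤ l) :
    ‖remainderNum γ u x y‖ ^ 2 * (‖deriv γ x‖ * ‖deriv γ y‖) ≤
      l ^ (2 * s + 1) * (‖Rop s γ u x y‖ ^ 2 * muW γ x y) := by
  have hl0 : 0 ≤ l := (norm_nonneg _).trans hl
  by_cases hxy : γ x = γ y
  · rw [remainderNum_eq_zero hγ hu hxy, norm_zero, zero_pow two_ne_zero, zero_mul]
    have := muW_nonneg γ x y
    positivity
  · have hpos : 0 < ‖γ y - γ x‖ := norm_pos_iff.2 (sub_ne_zero.2 (Ne.symm hxy))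
    have hratio : 1 ≤ l ^ (2 * s + 1) * (‖γ y - γ x‖ ^ (2 * s + 1))⁻¹ := by
      rw [← div_eq_mul_inv, one_le_div (by positivity)]
      gcongr
    rw [norm_Rop_sq_mul_muW hxy]
    calc ‖remainderNum γ u x y‖ ^ 2 * (‖deriv γ x‖ * ‖deriv γ y‖)
        ≤ ‖remainderNum γ u x y‖ ^ 2 * (‖deriv γ x‖ * ‖deriv γ y‖) *
          (l ^ (2 * s + 1) * (‖γ y - γ x‖ ^ (2 * s + 1))⁻¹) :=
          le_mul_of_one_le_right (by positivity) hratio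
      _ = _ := by ring

end Dg

theorem norm_sub_le_integral_norm_deriv {E : Type*} [NormedAddCommGroup E] [NormedSpace ℝ E]
    [CompleteSpace E] {γ : ℝ → E} (hγ : ContDiff ℝ 1 γ) {a b x y : ℝ} (hx : x ∈ Icc a b)
    (hy : y ∈ Icc a b) : ‖γ y - γ x‖ ≤ ∫ t in a..b, ‖deriv γ t‖ := by
  wlog hxy : x ≤ y generalizing x y
  · rw [norm_sub_rev]
    exact this hy hx (le_of_not_ge hxy)
  have hc : Continuous (deriv γ) := hγ.continuous_deriv le_rfl
  rw [← intervalIntegral.integral_deriv_eq_sub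
    (fun z _ => hγ.differentiable one_ne_zero z) (hc.intervalIntegrable _ _)]
  exact (intervalIntegral.norm_integral_le_integral_norm hxy).trans
    (intervalIntegral.integral_mono_interval hx.1 hxy hy.2 (ae_of_all _ fun _ => norm_nonneg _)
      (hc.norm.intervalIntegrable _ _))

/-- The squared norm `‖R^s_γ u‖²_{L²(μ_γ)} = B¹_γ(u, u)`, valued in `[0,∞]`. -/
def RmuSqE {n : ℕ} (s : ℝ) (γ u : ℝ → En n) : ℝ≥0∞ :=
  ∫⁻ x in I01, ∫⁻ y in I01, ENNReal.ofReal (‖Rop s γ u x y‖ ^ 2 * muW γ x y)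

section RmuSqE

variable {n : ℕ} {s : ℝ} {γ u : ℝ → En n}

theorem periodic_norm_Rop_sq_mul_muW_left (hγ : InHs s γ) (hu : InHs s u) :
    Function.Periodic (fun x y => ‖Rop s γ u x y‖ ^ 2 * muW γ x y) 1 := fun x => funext fun y => by
  simp only [Rop, DDg, muW, hγ.periodic x, hu.periodic x, hγ.periodic_deriv x,
    hu.periodic_deriv x]

theorem periodic_norm_Rop_sq_mul_muW_right (hγ : InHs s γ) (hu : InHs s u) (x : ℝ) :
    Function.Periodic (fun y => ‖Rop s γ u x y‖ ^ 2 * muW γ x y) 1 := fun y => by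
  simp only [Rop, DDg, muW, hγ.periodic y, hu.periodic y, hγ.periodic_deriv y]

theorem integral_norm_remainderNum_sq_le (hs : 0 < s) (hγ : InM s γ) (hu : InHs s u)
    {a b Q : ℝ} (hab : a ≤ b) (hba : b ≤ a + 1)
    (hQ : RmuSqE s γ u ≤ ENNReal.ofReal (Q ^ 2)) :
    ∫ x in a..b, ∫ y in a..b, ‖remainderNum γ u x y‖ ^ 2 * (‖deriv γ x‖ * ‖deriv γ y‖) ≤
      (∫ x in a..b, ‖deriv γ x‖) ^ (2 * s + 1) * Q ^ 2 := by
  have hcont := continuous_remainderNum hγ hu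
  have hγ' := hγ.inHs.continuous_deriv
  have hl0 : 0 ≤ ∫ x in a..b, ‖deriv γ x‖ :=
    intervalIntegral.integral_nonneg hab fun _ _ => norm_nonneg _
  exact integral_integral_le_mul_of_periodic (by fun_prop) (fun x y => by positivity)
    (periodic_norm_Rop_sq_mul_muW_left hγ.inHs hu) (periodic_norm_Rop_sq_mul_muW_right hγ.inHs hu)
    hab hba (by positivity) (sq_nonneg Q)
    (fun x hx y hy => norm_remainderNum_sq_mul_le hs hγ hu
      (norm_sub_le_integral_norm_deriv hγ.inHs.2.1 hx hy)) hQ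

end RmuSqE

/-- `φ` is an arc-length parametrization for the `1`-periodic speed `w`: it inverts an
antiderivative of `w`, and `L` is the total length of one period. -/
structure IsArcLengthParam (w φ : ℝ → ℝ) (L : ℝ) : Prop where
  hasDerivAt : ∀ y, HasDerivAt φ (w (φ y))⁻¹ y
  surjective : Function.Surjective φ
  apply_add : ∀ y, φ (y + L) = φ y + 1

theorem exists_isArcLengthParam {w : ℝ → ℝ} (hw : Continuous w) (hpos : ∀ x, 0 < w x)
    (hper : Function.Periodic w 1) : ∃ φ L, IsArcLengthParam w φ L := by
  have hint : ∀ a b, IntervalIntegrable w volume a b := fun a b => hw.intervalIntegrable a b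
  set S : ℝ → ℝ := fun x => ∫ t in (0 : ℝ)..x, w t
  have hS : ∀ x, HasDerivAt S (w x) x := fun x =>
    intervalIntegral.integral_hasDerivAt_right (hint _ _) (hw.stronglyMeasurableAtFilter _ _)
      hw.continuousAt
  have hmono : StrictMono S := strictMono_of_deriv_pos fun x => by rw [(hS x).deriv]; exact hpos x
  have hsurj : Function.Surjective S :=
    (continuous_iff_continuousAt.2 fun x => (hS x).continuousAt).surjective
      (hper.tendsto_atTop_intervalIntegral_of_pos' (hint _ _) hpos one_pos)
      (hper.tendsto_atBot_intervalIntegral_of_pos' (hint _ _) hpos one_pos)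
  have hadd : ∀ x, S (x + 1) = S x + S 1 := fun x => by
    simp only [S]
    rw [hper.intervalIntegral_add_eq_add 0 x fun a b => hint a b, zero_add]
  let e := hmono.orderIsoOfSurjective S hsurj
  have hright : ∀ y, S (e.symm y) = y := e.apply_symm_apply
  refine ⟨e.symm, S 1, fun y => ?_, e.symm.surjective, fun y => hmono.injective ?_⟩
  · exact HasDerivAt.of_local_left_inverse e.symm.continuous.continuousAt (hS _) (hpos _).ne'
      (Eventually.of_forall hright)
  · rw [hadd, hright, hright]

namespace IsArcLengthParam

variable {w φ : ℝ → ℝ} {L : ℝ}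

theorem continuous (h : IsArcLengthParam w φ L) : Continuous φ :=
  continuous_iff_continuousAt.2 fun y => (h.hasDerivAt y).continuousAt

theorem strictMono (h : IsArcLengthParam w φ L) (hpos : ∀ x, 0 < w x) : StrictMono φ :=
  strictMono_of_deriv_pos fun y => by
    rw [(h.hasDerivAt y).deriv]
    exact inv_pos.2 (hpos _)

theorem length_pos (h : IsArcLengthParam w φ L) (hpos : ∀ x, 0 < w x) : 0 < L := by
  refine (h.strictMono hpos).lt_iff_lt.1 ?_
  have := h.apply_add 0
  rw [zero_add] at this
  linarith

theorem apply_le_apply_add_one (h : IsArcLengthParam w φ L) (hpos : ∀ x, 0 < w x) {a b : ℝ}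
    (hab : b - a ≤ L) : φ b ≤ φ a + 1 := by
  rw [← h.apply_add]
  exact (h.strictMono hpos).monotone (by linarith)

theorem integral_comp (h : IsArcLengthParam w φ L) (hw : Continuous w) (hpos : ∀ x, 0 < w x)
    {H : ℝ → ℝ} (hH : Continuous H) (a b : ℝ) :
    ∫ y in a..b, H (φ y) = ∫ x in φ a..φ b, H x * w x := by
  rw [← intervalIntegral.integral_comp_mul_deriv (g := fun x => H x * w x)
    (fun y _ => h.hasDerivAt y) ((hw.comp h.continuous).inv₀ fun y => (hpos _).ne').continuousOn
    (hH.mul hw)]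
  refine intervalIntegral.integral_congr fun y _ => ?_
  simp only [Function.comp_apply, mul_inv_cancel_right₀ (hpos (φ y)).ne']

theorem integral_eq_sub (h : IsArcLengthParam w φ L) (hw : Continuous w) (hpos : ∀ x, 0 < w x)
    (a b : ℝ) : ∫ x in φ a..φ b, w x = b - a := by
  simpa only [one_mul, intervalIntegral.integral_const, smul_eq_mul, mul_one] using
    (h.integral_comp hw hpos (continuous_const (y := (1 : ℝ))) a b).symm

theorem periodic_comp (h : IsArcLengthParam w φ L) {E : Type*} {f : ℝ → E}
    (hf : Function.Periodic f 1) : Function.Periodic (f ∘ φ) L := fun y => by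
  rw [Function.comp_apply, Function.comp_apply, h.apply_add, hf]

end IsArcLengthParam

section SupBound

variable {n : ℕ} {s L : ℝ} {γ u : ℝ → En n} {φ : ℝ → ℝ}

theorem isUnitSpeed_comp_arcLengthParam (hγ : InM s γ)
    (hφ : IsArcLengthParam (fun x => ‖deriv γ x‖) φ L) :
    IsUnitSpeed (γ ∘ φ) (Dg γ γ ∘ φ) where
  hasDerivAt y := (hγ.inHs.hasDerivAt (φ y)).scomp y (hφ.hasDerivAt y)
  norm_tangent y := by
    rw [Function.comp_apply, Dg, norm_smul, norm_inv, norm_norm,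
      inv_mul_cancel₀ (hγ.norm_deriv_ne_zero _)]
  uniformContinuous_tangent := uniformContinuous_of_periodic (hφ.length_pos hγ.norm_deriv_pos)
    ((hγ.continuous_Dg hγ.inHs).comp hφ.continuous)
    (hφ.periodic_comp (periodic_Dg hγ.inHs hγ.inHs))

theorem remainderDecay_comp_arcLengthParam (hs : 0 < s) (hγ : InM s γ) (hu : InHs s u)
    (hφ : IsArcLengthParam (fun x => ‖deriv γ x‖) φ L) {Q : ℝ}
    (hQ : RmuSqE s γ u ≤ ENNReal.ofReal (Q ^ 2)) :
    RemainderDecay (γ ∘ φ) (Dg γ γ ∘ φ) (u ∘ φ) (Dg γ u ∘ φ) s Q L := by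
  intro a b hab hbL
  have hγ' := hγ.inHs.continuous_deriv
  have hw := hγ'.norm
  have hpos := hγ.norm_deriv_pos
  have hcont := continuous_remainderNum hγ hu
  have hcont' : Continuous fun x => ∫ y in φ a..φ b, ‖remainderNum γ u x y‖ ^ 2 * ‖deriv γ y‖ :=
    intervalIntegral.continuous_parametric_intervalIntegral_of_continuous'
      (by unfold Function.uncurry; fun_prop) _ _
  calc ∫ x in a..b, ∫ y in a..b,
        ‖tangentRemainder (γ ∘ φ) (Dg γ γ ∘ φ) (u ∘ φ) (Dg γ u ∘ φ) x y‖ ^ 2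
      = ∫ x in a..b, ∫ y in a..b, ‖remainderNum γ u (φ x) (φ y)‖ ^ 2 := by
        simp only [remainderNum_eq_tangentRemainder, tangentRemainder, Function.comp_apply]
    _ = ∫ x in a..b, ∫ y in φ a..φ b, ‖remainderNum γ u (φ x) y‖ ^ 2 * ‖deriv γ y‖ := by
        congr with x
        exact hφ.integral_comp hw hpos (H := fun y => ‖remainderNum γ u (φ x) y‖ ^ 2)
          (by fun_prop) a b
    _ = ∫ x in φ a..φ b, (∫ y in φ a..φ b, ‖remainderNum γ u x y‖ ^ 2 * ‖deriv γ y‖) *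
          ‖deriv γ x‖ := hφ.integral_comp hw hpos hcont' a b
    _ = ∫ x in φ a..φ b, ∫ y in φ a..φ b,
          ‖remainderNum γ u x y‖ ^ 2 * (‖deriv γ x‖ * ‖deriv γ y‖) := by
        congr with x
        rw [← intervalIntegral.integral_mul_const]
        congr with y
        ring
    _ ≤ (∫ x in φ a..φ b, ‖deriv γ x‖) ^ (2 * s + 1) * Q ^ 2 :=
        integral_norm_remainderNum_sq_le hs hγ hu (hφ.strictMono hpos hab).le
          (hφ.apply_le_apply_add_one hpos hbL) hQ
    _ = Q ^ 2 * (b - a) ^ (2 * s + 1) := by rw [hφ.integral_eq_sub hw hpos, mul_comm]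

theorem integral_norm_Dg_comp_arcLengthParam_le (hγ : InM s γ) (hu : InHs s u)
    (hφ : IsArcLengthParam (fun x => ‖deriv γ x‖) φ L) {a b : ℝ} (hab : a ≤ b) (hbL : b - a ≤ L) :
    ∫ y in a..b, ‖Dg γ u (φ y)‖ ^ 2 ≤ ∫ x in I01, ‖Dg γ u x‖ ^ 2 * ‖deriv γ x‖ := by
  have hw := hγ.inHs.continuous_deriv.norm
  have hpos := hγ.norm_deriv_pos
  have hD := hγ.continuous_Dg hu
  have hper : Function.Periodic (fun x => ‖Dg γ u x‖ ^ 2 * ‖deriv γ x‖) 1 := fun x => by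
    simp only [periodic_Dg hγ.inHs hu x, hγ.inHs.periodic_deriv x]
  rw [hφ.integral_comp hw hpos (H := fun x => ‖Dg γ u x‖ ^ 2) (by fun_prop),
    ← integral_Ioc_eq_of_periodic hper (φ a)]
  exact intervalIntegral.integral_mono_interval le_rfl ((hφ.strictMono hpos).monotone hab)
    (hφ.apply_le_apply_add_one hpos hbL) (ae_of_all _ fun _ => by positivity)
    ((by fun_prop : Continuous fun x => ‖Dg γ u x‖ ^ 2 * ‖deriv γ x‖).intervalIntegrable _ _)

/-- The scale `l` up to which the unit tangent oscillates by at most one depends on the curve only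
through the energy bound `A`. -/
theorem exists_norm_Dg_le (hs : 3 / 2 < s) {A : ℝ} (hA : 0 < A) :
    ∃ K > 0, ∀ (n : ℕ) (γ u : ℝ → En n), InM s γ → InHs s u → ∀ Q ≥ 0,
      RmuSqE s γ γ ≤ ENNReal.ofReal (A ^ 2) → RmuSqE s γ u ≤ ENNReal.ofReal (Q ^ 2) →
      ∫ x in I01, ‖Dg γ u x‖ ^ 2 * ‖deriv γ x‖ ≤ Q ^ 2 → ∀ x, ‖Dg γ u x‖ ≤ K * Q := by
  have hs0 : 0 < s := by linarith
  have hα : 0 < s - 3 / 2 := sub_pos.2 hs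
  have hC := campanatoConst_pos hα
  set l : ℝ := (1 / (96 * campanatoConst (s - 3 / 2) * A)) ^ (1 / (s - 3 / 2)) with hl
  have hl0 : 0 < l := by positivity
  have hlA : 48 * campanatoConst (s - 3 / 2) * A * l ^ (s - 3 / 2) ≤ 1 / 2 := by
    rw [hl, ← rpow_mul (by positivity), one_div_mul_cancel hα.ne', rpow_one, mul_one_div,
      div_le_div_iff₀ (by positivity) two_pos]
    linarith
  refine ⟨4 / 3 * (1 / √l + 24 * campanatoConst (s - 3 / 2) * l ^ (s - 3 / 2)), by positivity,
    fun n γ u hγ hu Q hQ hγA huQ hDQ => ?_⟩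
  obtain ⟨φ, L, hφ⟩ := exists_isArcLengthParam hγ.inHs.continuous_deriv.norm hγ.norm_deriv_pos
    fun x => by rw [hγ.inHs.periodic_deriv x]
  have hL := hφ.length_pos hγ.norm_deriv_pos
  have hunit := isUnitSpeed_comp_arcLengthParam hγ hφ
  have hper := hφ.periodic_comp hγ.inHs.periodic
  have hγdecay := remainderDecay_comp_arcLengthParam hs0 hγ hγ.inHs hφ hγA
  have hlL : l < L := hunit.lt_period hs hA.le hL hper hlA hγdecay
  obtain ⟨x₀, hx₀⟩ := exists_forall_norm_le_of_periodic one_pos (hγ.continuous_Dg hu)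
    (periodic_Dg hγ.inHs hu)
  obtain ⟨y₀, rfl⟩ := hφ.surjective x₀
  have hmax := hunit.norm_le_of_remainderDecay (hu.continuous.comp hφ.continuous)
    ((hγ.continuous_Dg hu).comp hφ.continuous) hs hA.le hQ hl0 hL hper hlA (fun y => hx₀ (φ y))
    hγdecay (remainderDecay_comp_arcLengthParam hs0 hγ hu hφ huQ)
    ((integral_norm_Dg_comp_arcLengthParam_le hγ hu hφ (by linarith) (by linarith)).trans hDQ)
  exact fun x => (hx₀ x).trans hmax

end SupBound

section CircleDistance

theorem dT_eq_abs_sub_round (x y : ℝ) : dT x y = |x - y - round (x - y)| :=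
  le_antisymm (ciInf_le ⟨0, by rintro _ ⟨k, rfl⟩; exact abs_nonneg _⟩ (round (x - y)))
    (le_ciInf fun k => round_le (x - y) k)

theorem dT_eq_norm (x y : ℝ) : dT x y = ‖((x - y : ℝ) : UnitAddCircle)‖ := by
  rw [dT_eq_abs_sub_round, UnitAddCircle.norm_eq]

theorem dT_nonneg (x y : ℝ) : 0 ≤ dT x y := by
  rw [dT_eq_norm]
  exact norm_nonneg _

theorem dT_le_abs_sub (x y : ℝ) : dT x y ≤ |x - y| := by
  simpa only [dT_eq_abs_sub_round, Int.cast_zero, sub_zero] using round_le (x - y) 0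

theorem dT_self_add {h : ℝ} (hh : |h| ≤ 1 / 2) (x : ℝ) : dT x (x + h) = |h| := by
  rw [dT_eq_norm, sub_add_cancel_left, (AddCircle.norm_coe_eq_abs_iff 1 one_ne_zero).2, abs_neg]
  rwa [abs_neg, abs_one]

theorem eq_add_round_of_dT_eq_zero {x y : ℝ} (h : dT x y = 0) : x = y + round (x - y) := by
  rw [dT_eq_abs_sub_round, abs_eq_zero] at h
  linarith

theorem periodic_dT_left : Function.Periodic dT 1 := fun x => funext fun y => by
  rw [dT_eq_norm, dT_eq_norm, add_sub_right_comm, AddCircle.coe_add_period]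

theorem periodic_dT_right (x : ℝ) : Function.Periodic (dT x) 1 := fun y => by
  rw [dT_eq_norm, dT_eq_norm, ← sub_sub, ← AddCircle.coe_add_period 1 (x - y - 1),
    sub_add_cancel]

theorem continuous_dT : Continuous fun z : ℝ × ℝ => dT z.1 z.2 := by
  simp_rw [dT_eq_norm]
  exact ((AddCircle.continuous_mk' 1).comp (continuous_fst.sub continuous_snd)).norm

end CircleDistance

section Gagliardo

variable {E : Type*} [NormedAddCommGroup E] {f : ℝ → E} {σ : ℝ}

theorem measurable_gagliardo_integrand (hf : Continuous f) (σ : ℝ) :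
    Measurable fun z : ℝ × ℝ =>
      ENNReal.ofReal (‖f z.2 - f z.1‖ ^ 2 / dT z.1 z.2 ^ (2 * σ + 1)) :=
  ((by fun_prop : Continuous fun z : ℝ × ℝ => ‖f z.2 - f z.1‖ ^ 2).measurable.div
    (continuous_dT.measurable.pow_const _)).ennreal_ofReal

theorem norm_sub_sq_le_rpow_mul_gagliardo_integrand (hσ : 0 ≤ 2 * σ + 1)
    (hper : Function.Periodic f 1) {x y l : ℝ} (hl : |x - y| ≤ l) :
    ‖f y - f x‖ ^ 2 ≤ l ^ (2 * σ + 1) * (‖f y - f x‖ ^ 2 / dT x y ^ (2 * σ + 1)) := by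
  rcases (dT_nonneg x y).eq_or_lt with h | h
  · rw [eq_add_round_of_dT_eq_zero h.symm, apply_add_intCast_of_periodic hper]
    simp only [sub_self, norm_zero, zero_pow two_ne_zero, zero_div, mul_zero, le_refl]
  · have hpow : dT x y ^ (2 * σ + 1) ≤ l ^ (2 * σ + 1) :=
      rpow_le_rpow h.le ((dT_le_abs_sub x y).trans hl) hσ
    rw [← mul_div_assoc, le_div_iff₀ (rpow_pos_of_pos h _), mul_comm]
    gcongr

theorem integral_norm_sub_sq_le_of_gagliardoSqE_le (hσ : 0 ≤ 2 * σ + 1) (hf : Continuous f)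
    (hper : Function.Periodic f 1) {a b Q : ℝ} (hab : a ≤ b) (hba : b ≤ a + 1)
    (hQ : gagliardoSqE σ f ≤ ENNReal.ofReal (Q ^ 2)) :
    ∫ x in a..b, ∫ y in a..b, ‖f y - f x‖ ^ 2 ≤ (b - a) ^ (2 * σ + 1) * Q ^ 2 :=
  integral_integral_le_mul_of_periodic
    (D := fun x y => ‖f y - f x‖ ^ 2 / dT x y ^ (2 * σ + 1)) (by fun_prop)
    (fun x y => by positivity) (fun x => by simp only [hper x, periodic_dT_left x])
    (fun x y => by simp only [hper y, periodic_dT_right x y]) hab hba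
    (rpow_nonneg (sub_nonneg.2 hab) _) (sq_nonneg Q)
    (fun x hx y hy => norm_sub_sq_le_rpow_mul_gagliardo_integrand hσ hper
      (abs_sub_le_of_le_of_le hx.1 hx.2 hy.1 hy.2)) hQ

end Gagliardo

section GagliardoHolder

variable {E : Type*} [NormedAddCommGroup E] [InnerProductSpace ℝ E] {f : ℝ → E}
  {σ Q : ℝ}

theorem norm_sub_le_of_gagliardoSqE_le_of_lt (hσ : 1 / 2 < σ) (hf : Continuous f)
    (hper : Function.Periodic f 1) (hQ : 0 ≤ Q)
    (hfQ : gagliardoSqE σ f ≤ ENNReal.ofReal (Q ^ 2)) {x y : ℝ} (hxy : x < y)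
    (hyx : y ≤ x + 1) : ‖f x - f y‖ ≤ 2 * campanatoConst (σ - 1 / 2) * Q := by
  have hα : 0 < σ - 1 / 2 := sub_pos.2 hσ
  have hC := campanatoConst_pos hα
  have hdecay : RemainderDecay (fun _ => (0 : E)) (fun _ => 0) f (fun _ => 0) σ Q 1 := by
    intro a b hab hba
    simpa only [tangentRemainder, smul_zero, sub_zero, mul_comm] using
      integral_norm_sub_sq_le_of_gagliardoSqE_le (by linarith) hf hper hab.le (by linarith) hfQ
  have hholder : ‖f x - f y‖ ≤ 2 * campanatoConst (σ - 1 / 2) * Q * (y - x) ^ (σ - 1 / 2) := by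
    refine norm_sub_le_of_integral_norm_sub_le hf hα hxy fun a b ha hab hb => ?_
    have hint := (hdecay.mono (by linarith : b - a ≤ 1)).integral_norm_le continuous_const
      continuous_const hf continuous_const hab hQ
    simp only [tangentRemainder, smul_zero, sub_zero] at hint
    have hcont : Continuous fun z => ∫ w in a..b, ‖f w - f z‖ :=
      intervalIntegral.continuous_parametric_intervalIntegral_of_continuous'
        (by unfold Function.uncurry; fun_prop) a b
    obtain ⟨z, -, hz⟩ := exists_mul_le_integral hcont hab
    have hba : 0 < b - a := sub_pos.2 hab
    refine ⟨f z, le_of_mul_le_mul_left (hz.trans (hint.trans_eq ?_)) hba⟩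
    rw [mul_left_comm, ← rpow_one_add_eq_mul hba]
    ring_nf
  exact hholder.trans (mul_le_of_le_one_right (by positivity)
    (rpow_le_one (by linarith) (by linarith) hα.le))

theorem norm_sub_le_of_gagliardoSqE_le (hσ : 1 / 2 < σ) (hf : Continuous f)
    (hper : Function.Periodic f 1) (hQ : 0 ≤ Q)
    (hfQ : gagliardoSqE σ f ≤ ENNReal.ofReal (Q ^ 2)) (x y : ℝ) :
    ‖f x - f y‖ ≤ 2 * campanatoConst (σ - 1 / 2) * Q := by
  obtain ⟨z, ⟨hxz, hzx⟩, hz⟩ := hper.exists_mem_Ico one_pos y x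
  rw [hz]
  rcases hxz.eq_or_lt with rfl | hlt
  · have := campanatoConst_pos (sub_pos.2 hσ)
    rw [sub_self, norm_zero]
    positivity
  · exact norm_sub_le_of_gagliardoSqE_le_of_lt hσ hf hper hQ hfQ hlt hzx.le

end GagliardoHolder

theorem lintegral_lintegral_const_mul_add {α β : Type*} [MeasurableSpace α] [MeasurableSpace β]
    {μ : Measure α} {ν : Measure β} [SFinite ν] {F G : α → β → ℝ≥0∞} {a b : ℝ≥0∞} (ha : a ≠ ⊤)
    (hb : b ≠ ⊤) (hF : Measurable fun z : α × β => F z.1 z.2) :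
    ∫⁻ x, ∫⁻ y, (a * F x y + b * G x y) ∂ν ∂μ =
      a * ∫⁻ x, ∫⁻ y, F x y ∂ν ∂μ + b * ∫⁻ x, ∫⁻ y, G x y ∂ν ∂μ := by
  have hFx : ∀ x, Measurable fun y => a * F x y := fun x =>
    (hF.comp measurable_prodMk_left).const_mul a
  simp_rw [lintegral_add_left (hFx _), lintegral_const_mul' _ _ ha, lintegral_const_mul' _ _ hb]
  rw [lintegral_add_left (hF.lintegral_prod_right'.const_mul a), lintegral_const_mul' _ _ ha,
    lintegral_const_mul' _ _ hb]

section LinearCombination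

theorem norm_smul_add_smul_sq_le {E : Type*} [NormedAddCommGroup E] [NormedSpace ℝ E]
    (a b : ℝ) (v w : E) :
    ‖a • v + b • w‖ ^ 2 ≤ 2 * a ^ 2 * ‖v‖ ^ 2 + 2 * b ^ 2 * ‖w‖ ^ 2 := by
  calc ‖a • v + b • w‖ ^ 2 ≤ (|a| * ‖v‖ + |b| * ‖w‖) ^ 2 := by
        gcongr
        exact (norm_add_le _ _).trans_eq (by simp only [norm_smul, norm_eq_abs])
    _ ≤ 2 * ((|a| * ‖v‖) ^ 2 + (|b| * ‖w‖) ^ 2) := add_sq_le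
    _ = 2 * a ^ 2 * ‖v‖ ^ 2 + 2 * b ^ 2 * ‖w‖ ^ 2 := by
        rw [mul_pow, mul_pow, sq_abs, sq_abs]
        ring

theorem gagliardoSqE_smul_add_smul_le {E : Type*} [NormedAddCommGroup E] [NormedSpace ℝ E]
    {f : ℝ → E} (hf : Continuous f) (g : ℝ → E) (σ a b : ℝ) :
    gagliardoSqE σ (fun x => a • f x + b • g x) ≤
      ENNReal.ofReal (2 * a ^ 2) * gagliardoSqE σ f +
        ENNReal.ofReal (2 * b ^ 2) * gagliardoSqE σ g := by
  unfold gagliardoSqE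
  rw [← lintegral_lintegral_const_mul_add ENNReal.ofReal_ne_top ENNReal.ofReal_ne_top
    (measurable_gagliardo_integrand hf σ)]
  refine lintegral_mono fun x => lintegral_mono fun y => ?_
  have hd : 0 ≤ dT x y ^ (2 * σ + 1) := rpow_nonneg (dT_nonneg x y) _
  rw [← ENNReal.ofReal_mul (by positivity), ← ENNReal.ofReal_mul (by positivity),
    ← ENNReal.ofReal_add (by positivity) (by positivity), ← mul_div_assoc, ← mul_div_assoc,
    ← add_div, add_sub_add_comm, ← smul_sub, ← smul_sub]
  gcongr
  exact norm_smul_add_smul_sq_le a b _ _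

theorem setIntegral_I01_norm_smul_add_smul_sq_le {E : Type*} [NormedAddCommGroup E]
    [NormedSpace ℝ E] {f g : ℝ → E} (hf : Continuous f) (hg : Continuous g) (a b : ℝ) :
    ∫ x in I01, ‖a • f x + b • g x‖ ^ 2 ≤
      2 * a ^ 2 * (∫ x in I01, ‖f x‖ ^ 2) + 2 * b ^ 2 * ∫ x in I01, ‖g x‖ ^ 2 := by
  have hint : ∀ h : ℝ → ℝ, Continuous h → IntegrableOn h I01 := fun h hh =>
    hh.integrableOn_Icc.mono_set Ico_subset_Icc_self
  rw [← integral_const_mul, ← integral_const_mul,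
    ← integral_add (hint _ (by fun_prop)) (hint _ (by fun_prop))]
  exact setIntegral_mono (hint _ (by fun_prop)) (hint _ (by fun_prop)) fun x =>
    norm_smul_add_smul_sq_le a b _ _

end LinearCombination

section Sobolev

variable {n : ℕ} {s : ℝ} {f g v : ℝ → En n}

theorem HsNormSq_nonneg (s : ℝ) (f : ℝ → En n) : 0 ≤ HsNormSq s f := by
  unfold HsNormSq
  have : ∀ h : ℝ → En n, 0 ≤ ∫ x in I01, ‖h x‖ ^ 2 := fun h => by positivity
  exact add_nonneg (add_nonneg (this _) (this _)) ENNReal.toReal_nonneg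

theorem HsNorm_sq (s : ℝ) (f : ℝ → En n) : HsNorm s f ^ 2 = HsNormSq s f :=
  sq_sqrt (HsNormSq_nonneg s f)

theorem InHs.deriv_smul_add_smul (hf : InHs s f) (hg : InHs s g) (a b : ℝ) :
    deriv (fun x => a • f x + b • g x) = fun x => a • deriv f x + b • deriv g x :=
  funext fun x => (((hf.hasDerivAt x).const_smul a).add ((hg.hasDerivAt x).const_smul b)).deriv

theorem InHs.smul_add_smul (hf : InHs s f) (hg : InHs s g) (a b : ℝ) :
    InHs s fun x => a • f x + b • g x := by
  refine ⟨fun x => by simp only [hf.periodic x, hg.periodic x],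
    (hf.2.1.const_smul a).add (hg.2.1.const_smul b), ?_⟩
  rw [hf.deriv_smul_add_smul hg]
  exact (gagliardoSqE_smul_add_smul_le hf.continuous_deriv _ _ a b).trans_lt (ENNReal.add_lt_top.2
    ⟨ENNReal.mul_lt_top ENNReal.ofReal_lt_top hf.2.2,
      ENNReal.mul_lt_top ENNReal.ofReal_lt_top hg.2.2⟩)

theorem InHs.sub (hf : InHs s f) (hg : InHs s g) : InHs s fun x => f x - g x := by
  simpa only [one_smul, neg_smul, ← sub_eq_add_neg] using hf.smul_add_smul hg 1 (-1)

theorem InHs.smul_sub_sub (hf : InHs s f) (hg : InHs s g) (hv : InHs s v) (c : ℝ) :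
    InHs s fun x => c • (f x - g x) - v x := by
  simpa only [one_smul, neg_smul, ← sub_eq_add_neg] using (hf.sub hg).smul_add_smul hv c (-1)

theorem HsNormSq_smul_add_smul_le (hf : InHs s f) (hg : InHs s g) (a b : ℝ) :
    HsNormSq s (fun x => a • f x + b • g x) ≤
      2 * a ^ 2 * HsNormSq s f + 2 * b ^ 2 * HsNormSq s g := by
  have hG := gagliardoSqE_smul_add_smul_le hf.continuous_deriv (deriv g) (s - 1) a b
  have htop_f := (ENNReal.mul_lt_top (ENNReal.ofReal_lt_top (r := 2 * a ^ 2)) hf.2.2).ne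
  have htop_g := (ENNReal.mul_lt_top (ENNReal.ofReal_lt_top (r := 2 * b ^ 2)) hg.2.2).ne
  have hG' := ENNReal.toReal_mono (ENNReal.add_ne_top.2 ⟨htop_f, htop_g⟩) hG
  rw [ENNReal.toReal_add htop_f htop_g, ENNReal.toReal_mul, ENNReal.toReal_mul,
    ENNReal.toReal_ofReal (by positivity), ENNReal.toReal_ofReal (by positivity)] at hG'
  have h₀ := setIntegral_I01_norm_smul_add_smul_sq_le hf.continuous hg.continuous a b
  have h₁ := setIntegral_I01_norm_smul_add_smul_sq_le hf.continuous_deriv hg.continuous_deriv a b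
  unfold HsNormSq
  rw [hf.deriv_smul_add_smul hg]
  linarith

theorem HsNorm_smul_add_smul_le (hf : InHs s f) (hg : InHs s g) (a b : ℝ) :
    HsNorm s (fun x => a • f x + b • g x) ≤ 2 * (|a| * HsNorm s f + |b| * HsNorm s g) := by
  have hf0 : 0 ≤ HsNorm s f := sqrt_nonneg _
  have hg0 : 0 ≤ HsNorm s g := sqrt_nonneg _
  refine le_of_sq_le_sq ?_ (by positivity)
  rw [HsNorm_sq]
  refine (HsNormSq_smul_add_smul_le hf hg a b).trans ?_
  have hcross : 0 ≤ |a| * HsNorm s f * (|b| * HsNorm s g) := by positivity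
  have ha := sq_abs a
  have hb := sq_abs b
  rw [← HsNorm_sq, ← HsNorm_sq, ← ha, ← hb]
  nlinarith [sq_nonneg (|a| * HsNorm s f), sq_nonneg (|b| * HsNorm s g)]

theorem gagliardoSqE_deriv_le (hf : InHs s f) :
    gagliardoSqE (s - 1) (deriv f) ≤ ENNReal.ofReal (HsNorm s f ^ 2) := by
  rw [← ENNReal.ofReal_toReal hf.2.2.ne, HsNorm_sq]
  exact ENNReal.ofReal_le_ofReal (le_add_of_nonneg_left (by positivity))

theorem norm_deriv_le_mul_HsNorm (hs : 3 / 2 < s) (hf : InHs s f) (x : ℝ) :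
    ‖deriv f x‖ ≤ (2 * campanatoConst (s - 3 / 2) + 1) * HsNorm s f := by
  have hQ : 0 ≤ HsNorm s f := sqrt_nonneg _
  have hsq := HsNorm_sq s f
  have h₀ : 0 ≤ ∫ x in I01, ‖f x‖ ^ 2 := by positivity
  have hE0 : 0 ≤ (gagliardoSqE (s - 1) (deriv f)).toReal := ENNReal.toReal_nonneg
  obtain ⟨z, -, hz⟩ := exists_norm_le_div_sqrt hf.continuous_deriv hQ one_pos (a := 0) (b := 1) (by
    rw [← zero_add (1 : ℝ), integral_Ioc_eq_of_periodic
      (fun x => by simp only [hf.periodic_deriv x]) 0, hsq, HsNormSq]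
    linarith)
  rw [sub_zero, sqrt_one, div_one] at hz
  have hosc := norm_sub_le_of_gagliardoSqE_le (by linarith) hf.continuous_deriv hf.periodic_deriv
    hQ (gagliardoSqE_deriv_le hf) x z
  rw [show s - 1 - 1 / 2 = s - 3 / 2 by ring] at hosc
  linarith [norm_sub_norm_le (deriv f x) (deriv f z)]

theorem norm_le_mul_HsNorm (hs : 3 / 2 < s) (hf : InHs s f) (x : ℝ) :
    ‖f x‖ ≤ (2 * campanatoConst (s - 3 / 2) + 2) * HsNorm s f := by
  have hQ : 0 ≤ HsNorm s f := sqrt_nonneg _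
  have hC := campanatoConst_pos (sub_pos.2 hs)
  obtain ⟨z, hz, hfz⟩ := exists_norm_le_div_sqrt hf.continuous hQ one_pos (a := 0) (b := 1) (by
    have h₁ : 0 ≤ ∫ x in I01, ‖deriv f x‖ ^ 2 := by positivity
    rw [← zero_add (1 : ℝ), integral_Ioc_eq_of_periodic (fun x => by simp only [hf.periodic x]) 0,
      HsNorm_sq, HsNormSq]
    linarith [ENNReal.toReal_nonneg (a := gagliardoSqE (s - 1) (deriv f))])
  rw [sub_zero, sqrt_one, div_one] at hfz
  obtain ⟨y, hy, hxy⟩ := hf.periodic.exists_mem_Ico₀ one_pos x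
  have hmvt := convex_univ.norm_image_sub_le_of_norm_deriv_le
    (fun w _ => (hf.hasDerivAt w).differentiableAt)
    (fun w _ => norm_deriv_le_mul_HsNorm hs hf w) (mem_univ z) (mem_univ y)
  have hyz : ‖y - z‖ ≤ 1 := by
    simpa only [sub_zero, norm_eq_abs] using abs_sub_le_of_le_of_le hy.1 hy.2.le hz.1 hz.2
  have hosc := hmvt.trans (mul_le_of_le_one_right (by positivity) hyz)
  rw [hxy]
  linarith [norm_sub_norm_le (f y) (f z)]

end Sobolev

theorem continuous_uncurry_of_norm_sub_le {X Y E : Type*} [TopologicalSpace X] [TopologicalSpace Y]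
    [SeminormedAddCommGroup E] {G : X → Y → E} {δ : X → X → ℝ} (hG : ∀ t, Continuous (G t))
    (hδ : ∀ t, Tendsto (δ t) (𝓝 t) (𝓝 0)) (h : ∀ t t' y, ‖G t' y - G t y‖ ≤ δ t t') :
    Continuous fun z : X × Y => G z.1 z.2 := by
  refine continuous_iff_continuousAt.2 fun z => ?_
  have hdiff : Tendsto (fun w : X × Y => G w.1 w.2 - G z.1 w.2) (𝓝 z) (𝓝 0) :=
    squeeze_zero_norm (fun w => h z.1 w.1 w.2) ((hδ z.1).comp continuous_fst.continuousAt)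
  have hfixed : Tendsto (fun w : X × Y => G z.1 w.2) (𝓝 z) (𝓝 (G z.1 z.2)) :=
    ((hG z.1).comp continuous_snd).continuousAt
  simpa only [ContinuousAt, sub_add_cancel, zero_add] using hdiff.add hfixed

section HsContOn

variable {n : ℕ} {s : ℝ} {F : ℝ → ℝ → En n}

theorem HsNorm_nonneg (s : ℝ) (f : ℝ → En n) : 0 ≤ HsNorm s f := sqrt_nonneg _

theorem HsContOn.exists_HsNorm_le {S : Set ℝ} (hS : IsCompact S) (hF : ∀ t ∈ S, InHs s (F t))
    (hc : HsContOn s F S) : ∃ C, ∀ t ∈ S, HsNorm s (F t) ≤ C := by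
  refine hS.induction_on (p := fun T => ∃ C, ∀ t ∈ T, HsNorm s (F t) ≤ C)
    ⟨0, fun _ h => h.elim⟩ (fun T T' hT ⟨C, hC⟩ => ⟨C, fun t ht => hC t (hT ht)⟩)
    (fun T T' ⟨C, hC⟩ ⟨C', hC'⟩ => ⟨max C C', fun t ht => ht.elim
      (fun h => (hC t h).trans (le_max_left _ _)) fun h => (hC' t h).trans (le_max_right _ _)⟩)
    fun t ht => ?_
  refine ⟨_, ((hc t ht).eventually (gt_mem_nhds one_pos)).and self_mem_nhdsWithin,
    2 * (1 + HsNorm s (F t)), fun τ hτ => ?_⟩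
  have htri := HsNorm_smul_add_smul_le ((hF τ hτ.2).sub (hF t ht)) (hF t ht) 1 1
  simp only [one_smul, sub_add_cancel, abs_one, one_mul] at htri
  linarith [hτ.1]

theorem HsContOn.continuous_comp (hs : 3 / 2 < s) {c : ℝ → ℝ} {S : Set ℝ} (hc : Continuous c)
    (hcS : ∀ t, c t ∈ S) (hF : ∀ t ∈ S, InHs s (F t)) (hcont : HsContOn s F S) :
    Continuous fun z : ℝ × ℝ => F (c z.1) z.2 := by
  refine continuous_uncurry_of_norm_sub_le (G := fun t => F (c t))
    (δ := fun t t' => (2 * campanatoConst (s - 3 / 2) + 2) *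
      HsNorm s fun x => F (c t') x - F (c t) x)
    (fun t => (hF _ (hcS t)).continuous) (fun t => ?_)
    fun t t' x => norm_le_mul_HsNorm hs ((hF _ (hcS t')).sub (hF _ (hcS t))) x
  simpa only [mul_zero, Function.comp_def] using ((hcont _ (hcS t)).comp (tendsto_nhdsWithin_iff.2
    ⟨hc.tendsto t, Eventually.of_forall hcS⟩)).const_mul (2 * campanatoConst (s - 3 / 2) + 2)

theorem InHs.deriv_sub {f g : ℝ → En n} (hf : InHs s f) (hg : InHs s g) (x : ℝ) :
    deriv (fun y => f y - g y) x = deriv f x - deriv g x :=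
  ((hf.hasDerivAt x).sub (hg.hasDerivAt x)).deriv

theorem HsContOn.continuous_deriv_comp (hs : 3 / 2 < s) {c : ℝ → ℝ} {S : Set ℝ}
    (hc : Continuous c) (hcS : ∀ t, c t ∈ S) (hF : ∀ t ∈ S, InHs s (F t))
    (hcont : HsContOn s F S) : Continuous fun z : ℝ × ℝ => deriv (F (c z.1)) z.2 := by
  refine continuous_uncurry_of_norm_sub_le (G := fun t => deriv (F (c t)))
    (δ := fun t t' => (2 * campanatoConst (s - 3 / 2) + 1) *
      HsNorm s fun x => F (c t') x - F (c t) x)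
    (fun t => (hF _ (hcS t)).continuous_deriv) (fun t => ?_) fun t t' x => ?_
  · simpa only [mul_zero, Function.comp_def] using ((hcont _ (hcS t)).comp (tendsto_nhdsWithin_iff.2
      ⟨hc.tendsto t, Eventually.of_forall hcS⟩)).const_mul (2 * campanatoConst (s - 3 / 2) + 1)
  · rw [← (hF _ (hcS t')).deriv_sub (hF _ (hcS t))]
    exact norm_deriv_le_mul_HsNorm hs ((hF _ (hcS t')).sub (hF _ (hcS t))) x

end HsContOn

namespace C1Path

variable {n : ℕ} {s : ℝ} {t : ℝ}

theorem hsContOn (P : C1Path s n) : HsContOn s P.Γ (Icc 0 1) := by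
  intro t ht
  have hslope : ∀ᶠ h in 𝓝 (0 : ℝ), t + h ∈ Icc (0 : ℝ) 1 ∧ h ≠ 0 →
      HsNorm s (fun x => h⁻¹ • (P.Γ (t + h) x - P.Γ t x) - P.V t x) < 1 :=
    eventually_nhdsWithin_iff.1 ((P.isDeriv t ht).eventually (gt_mem_nhds one_pos))
  have hsub : Tendsto (fun τ => τ - t) (𝓝 t) (𝓝 0) := tendsto_sub_nhds_zero_iff.2 tendsto_id
  refine squeeze_zero' (g := fun τ => |τ - t| * (2 * (1 + HsNorm s (P.V t))))
    (Eventually.of_forall fun _ => HsNorm_nonneg _ _) ?_ ?_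
  · filter_upwards [mem_nhdsWithin_of_mem_nhds (hsub.eventually hslope), self_mem_nhdsWithin]
      with τ hτ hτI
    rcases eq_or_ne τ t with rfl | hne
    · simp [HsNorm, HsNormSq, gagliardoSqE]
    · have hne' : τ - t ≠ 0 := sub_ne_zero.2 hne
      rw [add_sub_cancel] at hτ
      have htri := HsNorm_smul_add_smul_le ((P.mem τ hτI).inHs.smul_sub_sub (P.mem t ht).inHs
        (P.memV t ht) (τ - t)⁻¹) (P.memV t ht) (τ - t) (τ - t)
      simp only [← smul_add, sub_add_cancel, smul_inv_smul₀ hne'] at htri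
      calc HsNorm s (fun x => P.Γ τ x - P.Γ t x) ≤ _ := htri
        _ ≤ 2 * (|τ - t| * 1 + |τ - t| * HsNorm s (P.V t)) := by gcongr; exact (hτ ⟨hτI, hne'⟩).le
        _ = |τ - t| * (2 * (1 + HsNorm s (P.V t))) := by ring
  · simpa only [abs_zero, zero_mul] using
      (hsub.abs.mul_const (2 * (1 + HsNorm s (P.V t)))).mono_left nhdsWithin_le_nhds

theorem eventually_add_mem_Icc (ht : t ∈ Ioo (0 : ℝ) 1) :
    ∀ᶠ h in 𝓝[≠] (0 : ℝ), t + h ∈ Icc (0 : ℝ) 1 := by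
  have hadd : Tendsto (fun h => t + h) (𝓝 0) (𝓝 t) := by
    simpa only [add_zero, id] using tendsto_const_nhds.add (tendsto_id (x := 𝓝 (0 : ℝ)))
  exact mem_nhdsWithin_of_mem_nhds (hadd.eventually (Icc_mem_nhds ht.1 ht.2))

theorem tendsto_const_mul_HsNorm (P : C1Path s n) (ht : t ∈ Ioo (0 : ℝ) 1) (K : ℝ) :
    Tendsto (fun h : ℝ => K * HsNorm s fun x => h⁻¹ • (P.Γ (t + h) x - P.Γ t x) - P.V t x)
      (𝓝[≠] 0) (𝓝 0) := by
  have hle : 𝓝[≠] (0 : ℝ) ≤ 𝓝[{h : ℝ | t + h ∈ Icc (0 : ℝ) 1 ∧ h ≠ 0}] 0 :=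
    nhdsWithin_le_of_mem (inter_mem (eventually_add_mem_Icc ht) self_mem_nhdsWithin)
  simpa only [mul_zero] using
    ((P.isDeriv t (Ioo_subset_Icc_self ht)).mono_left hle).const_mul K

theorem hasDerivAt (hs : 3 / 2 < s) (P : C1Path s n) (ht : t ∈ Ioo (0 : ℝ) 1) (x : ℝ) :
    HasDerivAt (fun τ => P.Γ τ x) (P.V t x) t := by
  have htI := Ioo_subset_Icc_self ht
  rw [hasDerivAt_iff_tendsto_slope_zero, ← tendsto_sub_nhds_zero_iff]
  refine squeeze_zero_norm' ?_ (P.tendsto_const_mul_HsNorm ht (2 * campanatoConst (s - 3 / 2) + 2))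
  filter_upwards [eventually_add_mem_Icc ht] with h hh
  exact norm_le_mul_HsNorm hs
    ((P.mem _ hh).inHs.smul_sub_sub (P.mem t htI).inHs (P.memV t htI) h⁻¹) x

theorem hasDerivAt_deriv (hs : 3 / 2 < s) (P : C1Path s n) (ht : t ∈ Ioo (0 : ℝ) 1) (x : ℝ) :
    HasDerivAt (fun τ => deriv (P.Γ τ) x) (deriv (P.V t) x) t := by
  have htI := Ioo_subset_Icc_self ht
  rw [hasDerivAt_iff_tendsto_slope_zero, ← tendsto_sub_nhds_zero_iff]
  refine squeeze_zero_norm' ?_ (P.tendsto_const_mul_HsNorm ht (2 * campanatoConst (s - 3 / 2) + 1))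
  filter_upwards [eventually_add_mem_Icc ht] with h hh
  have hderiv : deriv (fun y => h⁻¹ • (P.Γ (t + h) y - P.Γ t y) - P.V t y) x =
      h⁻¹ • (deriv (P.Γ (t + h)) x - deriv (P.Γ t) x) - deriv (P.V t) x :=
    (((((P.mem _ hh).inHs.hasDerivAt x).sub ((P.mem t htI).inHs.hasDerivAt x)).const_smul h⁻¹).sub
      ((P.memV t htI).hasDerivAt x)).deriv
  rw [← hderiv]
  exact norm_deriv_le_mul_HsNorm hs
    ((P.mem _ hh).inHs.smul_sub_sub (P.mem t htI).inHs (P.memV t htI) h⁻¹) x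

end C1Path

/-- A motion `Γ` of embedded curves with velocity `V`: what remains of a `C¹` path in `𝓜` once
the `H^s` topology is traded for uniform bounds and pointwise regularity. Time runs over all of
`ℝ`, which spares restrictions to `[0,1]` in continuity and measurability statements; velocities
are derivatives only on `(0,1)`. -/
structure IsMotion {n : ℕ} (s : ℝ) (Γ V : ℝ → ℝ → En n) : Prop where
  inM : ∀ t, InM s (Γ t)
  inHs : ∀ t, InHs s (V t)
  continuous : Continuous fun z : ℝ × ℝ => Γ z.1 z.2
  continuous_deriv : Continuous fun z : ℝ × ℝ => deriv (Γ z.1) z.2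
  continuous_velocity : Continuous fun z : ℝ × ℝ => V z.1 z.2
  continuous_deriv_velocity : Continuous fun z : ℝ × ℝ => deriv (V z.1) z.2
  exists_HsNorm_le : ∃ C, ∀ t, HsNorm s (Γ t) ≤ C
  exists_HsNorm_velocity_le : ∃ C, ∀ t, HsNorm s (V t) ≤ C
  hasDerivAt : ∀ t ∈ Ioo (0 : ℝ) 1, ∀ x, HasDerivAt (fun τ => Γ τ x) (V t x) t
  hasDerivAt_deriv : ∀ t ∈ Ioo (0 : ℝ) 1, ∀ x,
    HasDerivAt (fun τ => deriv (Γ τ) x) (deriv (V t) x) t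

theorem C1Path.isMotion {n : ℕ} {s : ℝ} (hs : 3 / 2 < s) (P : C1Path s n) :
    IsMotion s (fun t => P.Γ (projIcc 0 1 zero_le_one t))
      (fun t => P.V (projIcc 0 1 zero_le_one t)) := by
  set c : ℝ → ℝ := fun t => projIcc (0 : ℝ) 1 zero_le_one t
  have hc : Continuous c := continuous_subtype_val.comp continuous_projIcc
  have hcI : ∀ t, c t ∈ Icc (0 : ℝ) 1 := fun t => (projIcc (0 : ℝ) 1 zero_le_one t).2
  have hceq : ∀ t ∈ Ioo (0 : ℝ) 1, c =ᶠ[𝓝 t] id := fun t ht => by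
    filter_upwards [Icc_mem_nhds ht.1 ht.2] with τ hτ
    exact congrArg Subtype.val (projIcc_of_mem zero_le_one hτ)
  have hΓ : ∀ t ∈ Icc (0 : ℝ) 1, InHs s (P.Γ t) := fun t ht => (P.mem t ht).inHs
  exact
    { inM := fun t => P.mem _ (hcI t)
      inHs := fun t => P.memV _ (hcI t)
      continuous := P.hsContOn.continuous_comp hs hc hcI hΓ
      continuous_deriv := P.hsContOn.continuous_deriv_comp hs hc hcI hΓ
      continuous_velocity := HsContOn.continuous_comp hs hc hcI P.memV P.contV
      continuous_deriv_velocity := HsContOn.continuous_deriv_comp hs hc hcI P.memV P.contV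
      exists_HsNorm_le :=
        (P.hsContOn.exists_HsNorm_le isCompact_Icc hΓ).imp fun C hC t => hC _ (hcI t)
      exists_HsNorm_velocity_le := (HsContOn.exists_HsNorm_le isCompact_Icc P.memV P.contV).imp
        fun C hC t => hC _ (hcI t)
      hasDerivAt := fun t ht x => ((P.hasDerivAt hs ht x).congr_of_eventuallyEq
        ((hceq t ht).fun_comp fun τ => P.Γ τ x)).congr_deriv
          (congrArg (P.V · x) (hceq t ht).eq_of_nhds.symm)
      hasDerivAt_deriv := fun t ht x => ((P.hasDerivAt_deriv hs ht x).congr_of_eventuallyEq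
        ((hceq t ht).fun_comp fun τ => deriv (P.Γ τ) x)).congr_deriv
          (congrArg (fun τ => deriv (P.V τ) x) (hceq t ht).eq_of_nhds.symm) }

section TaylorRemainder

theorem setLIntegral_add_left_eq_of_periodic {f : ℝ → ℝ≥0∞} (hf : Function.Periodic f 1)
    (x : ℝ) : ∫⁻ h in Ioc (-(1 / 2) : ℝ) (1 / 2), f (x + h) = ∫⁻ y in I01, f y := by
  rw [← setLIntegral_Ioc_eq_of_periodic hf (x - 1 / 2),
    ← (measurePreserving_add_left volume x).setLIntegral_comp_preimage_emb
      (measurableEmbedding_addLeft x) f (Ioc (x - 1 / 2) (x - 1 / 2 + 1)), preimage_const_add_Ioc]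
  ring_nf

theorem gagliardoSqE_eq_lintegral_add {E : Type*} [NormedAddCommGroup E] {f : ℝ → E}
    (hf : Function.Periodic f 1) (σ : ℝ) :
    gagliardoSqE σ f = ∫⁻ x in I01, ∫⁻ h in Ioc (-(1 / 2) : ℝ) (1 / 2),
      ENNReal.ofReal (‖f (x + h) - f x‖ ^ 2 / |h| ^ (2 * σ + 1)) := by
  refine lintegral_congr fun x => ?_
  rw [← setLIntegral_add_left_eq_of_periodic
    (fun y => by simp only [hf y, periodic_dT_right x y]) x]
  refine setLIntegral_congr_fun measurableSet_Ioc fun h hh => ?_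
  simp only [dT_self_add (abs_le.2 (Ioc_subset_Icc_self hh))]

theorem lintegral_comp_const_mul {θ : ℝ} (hθ : θ ≠ 0) {g : ℝ → ℝ≥0∞} (hg : Measurable g) :
    ∫⁻ h, g (θ * h) = ENNReal.ofReal |θ⁻¹| * ∫⁻ k, g k := by
  rw [← lintegral_map hg (measurable_const_mul θ), Real.map_volume_mul_left hθ,
    lintegral_smul_measure, smul_eq_mul]

theorem lintegral_comp_mul_div_rpow_le {θ e r : ℝ} (hθ : θ ∈ Ioc (0 : ℝ) 1) (he : 1 ≤ e)
    (hr : 0 ≤ r) {g : ℝ → ℝ} (hg : Measurable g) :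
    ∫⁻ h in Ioc (-r) r, ENNReal.ofReal (g (θ * h) / |h| ^ e) ≤
      ∫⁻ h in Ioc (-r) r, ENNReal.ofReal (g h / |h| ^ e) := by
  set G : ℝ → ℝ≥0∞ := (Ioc (-r) r).indicator fun k => ENNReal.ofReal (g k / |k| ^ e) with hG
  have hGm : Measurable G :=
    (hg.div (by fun_prop)).ennreal_ofReal.indicator measurableSet_Ioc
  have hθe : 0 < θ ^ e := rpow_pos_of_pos hθ.1 e
  have hscale : ∀ h ∈ Ioc (-r) r,
      ENNReal.ofReal (g (θ * h) / |h| ^ e) = ENNReal.ofReal (θ ^ e) * G (θ * h) := by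
    intro h hh
    have hmem : θ * h ∈ Ioc (-r) r :=
      ⟨by nlinarith [hh.1, hθ.1, hθ.2], by nlinarith [hh.2, hθ.1, hθ.2]⟩
    rw [hG, indicator_of_mem hmem, ← ENNReal.ofReal_mul hθe.le, abs_mul, abs_of_pos hθ.1,
      mul_rpow hθ.1.le (abs_nonneg h), ← mul_div_assoc, mul_div_mul_left _ _ hθe.ne']
  calc ∫⁻ h in Ioc (-r) r, ENNReal.ofReal (g (θ * h) / |h| ^ e)
      = ∫⁻ h in Ioc (-r) r, ENNReal.ofReal (θ ^ e) * G (θ * h) :=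
        setLIntegral_congr_fun measurableSet_Ioc hscale
    _ ≤ ENNReal.ofReal (θ ^ e) * ∫⁻ h, G (θ * h) := by
        rw [← lintegral_const_mul' _ _ ENNReal.ofReal_ne_top]
        exact setLIntegral_le_lintegral _ _
    _ = ENNReal.ofReal (θ ^ e * θ⁻¹) * ∫⁻ k, G k := by
        rw [lintegral_comp_const_mul hθ.1.ne' hGm, abs_of_pos (inv_pos.2 hθ.1), ← mul_assoc,
          ENNReal.ofReal_mul hθe.le]
    _ ≤ ∫⁻ k, G k := by
        refine mul_le_of_le_one_left zero_le (ENNReal.ofReal_le_one.2 ?_)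
        rw [← div_eq_mul_inv, div_le_one hθ.1]
        exact (rpow_le_rpow_of_exponent_ge hθ.1 hθ.2 he).trans_eq (rpow_one θ)
    _ = ∫⁻ h in Ioc (-r) r, ENNReal.ofReal (g h / |h| ^ e) :=
        lintegral_indicator measurableSet_Ioc _

namespace InHs

variable {n : ℕ} {s : ℝ} {f : ℝ → En n}

theorem smul_integral_deriv (hf : InHs s f) (x h : ℝ) :
    h • ∫ θ in (0 : ℝ)..1, deriv f (x + θ * h) = f (x + h) - f x :=
  intervalIntegral.integral_unitInterval_deriv_eq_sub
    (by have := hf.continuous_deriv; simp only [smul_eq_mul]; fun_prop)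
    fun θ _ => hf.hasDerivAt _

theorem norm_taylorRemainder_sq_le (hf : InHs s f) (x h : ℝ) :
    ‖f (x + h) - f x - h • deriv f x‖ ^ 2 ≤
      h ^ 2 * ∫ θ in (0 : ℝ)..1, ‖deriv f (x + θ * h) - deriv f x‖ ^ 2 := by
  have hc := hf.continuous_deriv
  have hrepr : f (x + h) - f x - h • deriv f x =
      h • ∫ θ in (0 : ℝ)..1, (deriv f (x + θ * h) - deriv f x) := by
    rw [intervalIntegral.integral_sub (Continuous.intervalIntegrable (by fun_prop) _ _)
      intervalIntegrable_const, smul_sub, hf.smul_integral_deriv, intervalIntegral.integral_const,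
      sub_zero, one_smul]
  have hsq := sq_integral_le_mul_integral_sq (a := 0) (b := 1)
    (g := fun θ => ‖deriv f (x + θ * h) - deriv f x‖) (by fun_prop) zero_le_one
  rw [sub_zero, one_mul] at hsq
  rw [hrepr, norm_smul, mul_pow, norm_eq_abs, sq_abs]
  gcongr
  refine le_trans ?_ hsq
  gcongr
  exact intervalIntegral.norm_integral_le_integral_norm zero_le_one

theorem ofReal_norm_taylorRemainder_sq_div_le (hf : InHs s f) (x h : ℝ) :
    ENNReal.ofReal (‖f (x + h) - f x - h • deriv f x‖ ^ 2 / |h| ^ (2 * s + 1)) ≤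
      ∫⁻ θ in Ioc (0 : ℝ) 1,
        ENNReal.ofReal (‖deriv f (x + θ * h) - deriv f x‖ ^ 2 / |h| ^ (2 * (s - 1) + 1)) := by
  have hc := hf.continuous_deriv
  rw [← ofReal_integral_eq_lintegral_ofReal
    ((Continuous.integrableOn_Icc (by fun_prop)).mono_set Ioc_subset_Icc_self)
    (Eventually.of_forall fun _ => by positivity), integral_div,
    ← intervalIntegral.integral_of_le zero_le_one]
  refine ENNReal.ofReal_le_ofReal ?_
  rcases eq_or_ne h 0 with rfl | h0
  · simp
  · have ha : 0 < |h| := abs_pos.2 h0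
    have hpow : |h| ^ (2 * s + 1) = h ^ 2 * |h| ^ (2 * (s - 1) + 1) := by
      rw [← sq_abs h, ← rpow_natCast, ← rpow_add ha]
      push_cast
      ring_nf
    rw [hpow, ← div_div, div_eq_inv_mul _ (h ^ 2)]
    gcongr
    exact (inv_mul_le_iff₀ (by positivity)).2 (hf.norm_taylorRemainder_sq_le x h)

theorem lintegral_norm_taylorRemainder_sq_le (hs : 1 ≤ s) (hf : InHs s f) :
    ∫⁻ x in I01, ∫⁻ h in Ioc (-(1 / 2) : ℝ) (1 / 2),
        ENNReal.ofReal (‖f (x + h) - f x - h • deriv f x‖ ^ 2 / |h| ^ (2 * s + 1)) ≤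
      gagliardoSqE (s - 1) (deriv f) := by
  have hc := hf.continuous_deriv
  rw [gagliardoSqE_eq_lintegral_add hf.periodic_deriv]
  refine lintegral_mono fun x => ?_
  set D : ℝ → ℝ → ℝ≥0∞ := fun h θ =>
    ENNReal.ofReal (‖deriv f (x + θ * h) - deriv f x‖ ^ 2 / |h| ^ (2 * (s - 1) + 1))
  have hD : Measurable (Function.uncurry D) := by
    unfold D Function.uncurry
    have : Continuous fun z : ℝ × ℝ => ‖deriv f (x + z.2 * z.1) - deriv f x‖ ^ 2 := by fun_prop
    exact (this.measurable.div (by fun_prop)).ennreal_ofReal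
  calc _ ≤ ∫⁻ h in Ioc (-(1 / 2) : ℝ) (1 / 2), ∫⁻ θ in Ioc (0 : ℝ) 1, D h θ :=
        lintegral_mono fun h => hf.ofReal_norm_taylorRemainder_sq_div_le x h
    _ = ∫⁻ θ in Ioc (0 : ℝ) 1, ∫⁻ h in Ioc (-(1 / 2) : ℝ) (1 / 2), D h θ :=
        lintegral_lintegral_swap hD.aemeasurable
    _ ≤ ∫⁻ θ in Ioc (0 : ℝ) 1, ∫⁻ h in Ioc (-(1 / 2) : ℝ) (1 / 2), D h 1 :=
        setLIntegral_mono' measurableSet_Ioc fun θ hθ => by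
          simp only [D, one_mul]
          exact lintegral_comp_mul_div_rpow_le hθ (by linarith) (by norm_num)
            (g := fun h => ‖deriv f (x + h) - deriv f x‖ ^ 2)
            (Continuous.measurable (by fun_prop))
    _ = _ := by simp [D]

theorem measurable_norm_taylorRemainder_sq_div (hf : InHs s f) (e : ℝ) :
    Measurable fun z : ℝ × ℝ =>
      ENNReal.ofReal (‖f (z.1 + z.2) - f z.1 - z.2 • deriv f z.1‖ ^ 2 / |z.2| ^ e) := by
  have hf₀ := hf.continuous
  have hf₁ := hf.continuous_deriv
  have : Continuous fun z : ℝ × ℝ => ‖f (z.1 + z.2) - f z.1 - z.2 • deriv f z.1‖ ^ 2 := by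
    fun_prop
  exact (this.measurable.div (by fun_prop)).ennreal_ofReal

end InHs

end TaylorRemainder

section EnergyBounds

variable {n : ℕ} {s b M K : ℝ} {γ u : ℝ → En n}

theorem norm_Dg_self_le (γ : ℝ → En n) (x : ℝ) : ‖Dg γ γ x‖ ≤ 1 := by
  rw [Dg, norm_smul, norm_inv, norm_norm]
  exact inv_mul_le_one

theorem InM.norm_remainderNum_add_sq_le (hγ : InM s γ) {x : ℝ} (hK : ‖Dg γ u x‖ ≤ K) (h : ℝ) :
    ‖remainderNum γ u x (x + h)‖ ^ 2 ≤ 2 * ‖u (x + h) - u x - h • deriv u x‖ ^ 2 +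
      2 * K ^ 2 * ‖γ (x + h) - γ x - h • deriv γ x‖ ^ 2 := by
  set p := u (x + h) - u x - h • deriv u x with hp
  set q := γ (x + h) - γ x - h • deriv γ x
  have hrem : remainderNum γ u x (x + h) = (1 : ℝ) • p + (-⟪Dg γ γ x, q⟫) • Dg γ u x := by
    have hinner : ⟪Dg γ γ x, h • deriv γ x⟫ • Dg γ u x = h • deriv u x := by
      rw [← DDg_eq_inner_smul_Dg, DDg, inner_smul_right, real_inner_self_eq_norm_sq,
        mul_left_comm, inv_mul_cancel₀ (pow_ne_zero 2 (hγ.norm_deriv_ne_zero x)), mul_one]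
    rw [remainderNum, DDg_eq_inner_smul_Dg, ← sub_add_cancel (γ (x + h) - γ x) (h • deriv γ x),
      inner_add_right, add_smul, hinner, hp]
    module
  have hinner_le : ⟪Dg γ γ x, q⟫ ^ 2 ≤ ‖q‖ ^ 2 := sq_le_sq.2 <| by
    rw [abs_norm]
    exact (abs_real_inner_le_norm _ _).trans
      (mul_le_of_le_one_left (norm_nonneg q) (norm_Dg_self_le γ x))
  calc _ ≤ 2 * 1 ^ 2 * ‖p‖ ^ 2 + 2 * (-⟪Dg γ γ x, q⟫) ^ 2 * ‖Dg γ u x‖ ^ 2 := by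
        rw [hrem]
        exact norm_smul_add_smul_sq_le _ _ _ _
    _ ≤ 2 * 1 ^ 2 * ‖p‖ ^ 2 + 2 * ‖q‖ ^ 2 * K ^ 2 := by rw [neg_sq]; gcongr
    _ = _ := by ring

theorem InM.norm_Rop_sq_mul_muW_add_le (hs : 0 ≤ 2 * s + 1) (hγ : InM s γ) {x h : ℝ} (hb : 0 < b)
    (hbh : b * |h| ≤ ‖γ (x + h) - γ x‖) (hM : ∀ y, ‖deriv γ y‖ ≤ M) (hK : ‖Dg γ u x‖ ≤ K) :
    ‖Rop s γ u x (x + h)‖ ^ 2 * muW γ x (x + h) ≤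
      M ^ 2 / b ^ (2 * s + 1) *
        (2 * (‖u (x + h) - u x - h • deriv u x‖ ^ 2 / |h| ^ (2 * s + 1)) +
          2 * K ^ 2 * (‖γ (x + h) - γ x - h • deriv γ x‖ ^ 2 / |h| ^ (2 * s + 1))) := by
  rcases eq_or_ne h 0 with rfl | h0
  · simp [muW]
  have ha : 0 < |h| := abs_pos.2 h0
  have hM0 : 0 ≤ M := (norm_nonneg _).trans (hM 0)
  have hne : γ x ≠ γ (x + h) := fun heq => by
    rw [heq, sub_self, norm_zero] at hbh
    exact (mul_pos hb ha).not_ge hbh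
  have hpow : b ^ (2 * s + 1) * |h| ^ (2 * s + 1) ≤ ‖γ (x + h) - γ x‖ ^ (2 * s + 1) := by
    rw [← mul_rpow hb.le ha.le]
    exact rpow_le_rpow (by positivity) hbh hs
  have : 0 < b ^ (2 * s + 1) * |h| ^ (2 * s + 1) := by positivity
  rw [norm_Rop_sq_mul_muW hne]
  calc _ ≤ (2 * ‖u (x + h) - u x - h • deriv u x‖ ^ 2 +
            2 * K ^ 2 * ‖γ (x + h) - γ x - h • deriv γ x‖ ^ 2) * (M * M) *
          (b ^ (2 * s + 1) * |h| ^ (2 * s + 1))⁻¹ := by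
        gcongr
        · exact hγ.norm_remainderNum_add_sq_le hK h
        · exact hM x
        · exact hM (x + h)
    _ = _ := by rw [mul_inv]; ring

theorem InM.RmuSqE_le (hs : 1 ≤ s) (hγ : InM s γ) (hu : InHs s u) (hb : 0 < b)
    (hbil : ∀ x h, |h| ≤ 1 / 2 → b * |h| ≤ ‖γ (x + h) - γ x‖) (hM : ∀ x, ‖deriv γ x‖ ≤ M)
    (hK : ∀ x, ‖Dg γ u x‖ ≤ K) {N : ℝ} (hγN : HsNorm s γ ≤ N) (huN : HsNorm s u ≤ N) :
    RmuSqE s γ u ≤ ENNReal.ofReal (2 * (M ^ 2 / b ^ (2 * s + 1)) * (1 + K ^ 2) * N ^ 2) := by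
  set c := M ^ 2 / b ^ (2 * s + 1)
  have : 0 ≤ c := by positivity
  set T : (ℝ → En n) → ℝ → ℝ → ℝ≥0∞ := fun f x h =>
    ENNReal.ofReal (‖f (x + h) - f x - h • deriv f x‖ ^ 2 / |h| ^ (2 * s + 1)) with hT
  have hTN : ∀ f, InHs s f → HsNorm s f ≤ N →
      ∫⁻ x in I01, ∫⁻ h in Ioc (-(1 / 2) : ℝ) (1 / 2), T f x h ≤ ENNReal.ofReal (N ^ 2) :=
    fun f hf hN => (hf.lintegral_norm_taylorRemainder_sq_le hs).trans <|
      (gagliardoSqE_deriv_le hf).trans <| ENNReal.ofReal_le_ofReal <|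
        pow_le_pow_left₀ (HsNorm_nonneg s f) hN 2
  calc RmuSqE s γ u
      = ∫⁻ x in I01, ∫⁻ h in Ioc (-(1 / 2) : ℝ) (1 / 2),
          ENNReal.ofReal (‖Rop s γ u x (x + h)‖ ^ 2 * muW γ x (x + h)) :=
        lintegral_congr fun x => (setLIntegral_add_left_eq_of_periodic
          ((periodic_norm_Rop_sq_mul_muW_right hγ.inHs hu x).comp ENNReal.ofReal) x).symm
    _ ≤ ∫⁻ x in I01, ∫⁻ h in Ioc (-(1 / 2) : ℝ) (1 / 2),
          (ENNReal.ofReal (2 * c) * T u x h + ENNReal.ofReal (2 * c * K ^ 2) * T γ x h) := by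
        refine lintegral_mono fun x => setLIntegral_mono' measurableSet_Ioc fun h hh => ?_
        simp only [hT]
        rw [← ENNReal.ofReal_mul (by positivity), ← ENNReal.ofReal_mul (by positivity),
          ← ENNReal.ofReal_add (by positivity) (by positivity)]
        refine ENNReal.ofReal_le_ofReal ((hγ.norm_Rop_sq_mul_muW_add_le (by linarith) hb
          (hbil x h (abs_le.2 (Ioc_subset_Icc_self hh))) hM (hK x)).trans_eq ?_)
        ring
    _ ≤ ENNReal.ofReal (2 * c) * ENNReal.ofReal (N ^ 2) +
          ENNReal.ofReal (2 * c * K ^ 2) * ENNReal.ofReal (N ^ 2) := by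
        rw [lintegral_lintegral_const_mul_add ENNReal.ofReal_ne_top ENNReal.ofReal_ne_top
          (hu.measurable_norm_taylorRemainder_sq_div _)]
        gcongr
        · exact hTN u hu huN
        · exact hTN γ hγ.inHs hγN
    _ = ENNReal.ofReal (2 * c * (1 + K ^ 2) * N ^ 2) := by
        rw [← ENNReal.ofReal_mul (by positivity), ← ENNReal.ofReal_mul (by positivity),
          ← ENNReal.ofReal_add (by positivity) (by positivity)]
        ring_nf

end EnergyBounds

section Compactness

theorem exists_norm_le_of_isCompact_of_periodic {X E : Type*} [TopologicalSpace X]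
    [SeminormedAddCommGroup E] {S : Set X} (hS : IsCompact S) {g : X → ℝ → E}
    (hg : ContinuousOn (fun z : X × ℝ => g z.1 z.2) (S ×ˢ univ))
    (hper : ∀ t ∈ S, Function.Periodic (g t) 1) : ∃ C, ∀ t ∈ S, ∀ x, ‖g t x‖ ≤ C := by
  obtain ⟨C, hC⟩ := (hS.prod (isCompact_Icc (a := (0 : ℝ)) (b := 1))).exists_bound_of_continuousOn
    (hg.mono (prod_mono_right (subset_univ _)))
  refine ⟨C, fun t ht x => ?_⟩
  obtain ⟨y, hy, hxy⟩ := (hper t ht).exists_mem_Ico₀ one_pos x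
  rw [hxy]
  exact hC (t, y) ⟨ht, Ico_subset_Icc_self hy⟩

theorem InM.integral_deriv_ne_zero {n : ℕ} {s : ℝ} {γ : ℝ → En n} (hγ : InM s γ) (x : ℝ) {h : ℝ}
    (hh : |h| ≤ 1 / 2) : ∫ θ in (0 : ℝ)..1, deriv γ (x + θ * h) ≠ 0 := by
  intro hzero
  have hchord := hγ.inHs.smul_integral_deriv x h
  rw [hzero, smul_zero, eq_comm, sub_eq_zero] at hchord
  obtain ⟨k, hk⟩ := hγ.exists_int_of_eq hchord.symm
  rw [add_right_inj] at hk
  have hk0 : k = 0 := by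
    rw [hk] at hh
    exact Int.abs_lt_one_iff.1 (by exact_mod_cast hh.trans_lt one_half_lt_one)
  refine hγ.2.2 x ?_
  simpa [hk, hk0] using hzero

namespace IsMotion

variable {n : ℕ} {s : ℝ} {Γ V : ℝ → ℝ → En n}

theorem exists_mul_abs_le_norm_sub (hΓ : IsMotion s Γ V) :
    ∃ b > 0, ∀ t ∈ Icc (0 : ℝ) 1, ∀ x h, |h| ≤ 1 / 2 → b * |h| ≤ ‖Γ t (x + h) - Γ t x‖ := by
  set D : ℝ × ℝ → ℝ → En n := fun z x => ∫ θ in (0 : ℝ)..1, deriv (Γ z.1) (x + θ * z.2) with hD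
  have hDc : Continuous fun w : (ℝ × ℝ) × ℝ => D w.1 w.2 := by
    refine intervalIntegral.continuous_parametric_intervalIntegral_of_continuous'
      (f := fun (w : (ℝ × ℝ) × ℝ) θ => deriv (Γ w.1.1) (w.2 + θ * w.1.2)) ?_ 0 1
    exact hΓ.continuous_deriv.comp (f := fun p : ((ℝ × ℝ) × ℝ) × ℝ =>
      (p.1.1.1, p.1.2 + p.2 * p.1.1.2)) (by fun_prop)
  have hDne : ∀ z ∈ Icc (0 : ℝ) 1 ×ˢ Icc (-(1 / 2) : ℝ) (1 / 2), ∀ x, D z x ≠ 0 :=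
    fun z hz x => (hΓ.inM z.1).integral_deriv_ne_zero x (abs_le.2 hz.2)
  obtain ⟨C, hC⟩ := exists_norm_le_of_isCompact_of_periodic (g := fun z x => ‖D z x‖⁻¹)
    (isCompact_Icc.prod isCompact_Icc)
    (hDc.norm.continuousOn.inv₀ fun w hw => norm_ne_zero_iff.2 (hDne w.1 hw.1 w.2))
    fun z _ x => by simp only [hD, add_right_comm x, (hΓ.inM z.1).inHs.periodic_deriv _]
  have hmax : 0 < max C 1 := by positivity
  refine ⟨(max C 1)⁻¹, inv_pos.2 hmax, fun t ht x h hh => ?_⟩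
  have hz : (t, h) ∈ Icc (0 : ℝ) 1 ×ˢ Icc (-(1 / 2) : ℝ) (1 / 2) := ⟨ht, abs_le.1 hh⟩
  have hinv : ‖D (t, h) x‖⁻¹ ≤ max C 1 := by
    simpa only [norm_inv, norm_norm] using (hC _ hz x).trans (le_max_left _ _)
  rw [← (hΓ.inM t).inHs.smul_integral_deriv, norm_smul, norm_eq_abs, mul_comm]
  gcongr
  exact inv_le_of_inv_le₀ (norm_pos_iff.2 (hDne _ hz x)) hinv

theorem continuous_Dg_velocity (hΓ : IsMotion s Γ V) :
    Continuous fun z : ℝ × ℝ => Dg (Γ z.1) (V z.1) z.2 :=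
  (hΓ.continuous_deriv.norm.inv₀ fun z => (hΓ.inM z.1).norm_deriv_ne_zero z.2).smul
    hΓ.continuous_deriv_velocity

end IsMotion

/-- Quantitative control of an embedded curve `γ` and a vector field `u` along it: a bi-Lipschitz
constant `b`, an upper bound `M` on the speed, a bound `K` on `u` and its arc-length derivative,
and a bound `E` on the `R^s_γ`-energies of `γ` and `u`. -/
structure CurveBounds {n : ℕ} (s : ℝ) (γ u : ℝ → En n) (b M K E : ℝ) : Prop where
  pos : 0 < b
  energy_nonneg : 0 ≤ E
  mul_abs_le : ∀ x h, |h| ≤ 1 / 2 → b * |h| ≤ ‖γ (x + h) - γ x‖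
  norm_deriv_le : ∀ x, ‖deriv γ x‖ ≤ M
  norm_le : ∀ x, ‖u x‖ ≤ K
  norm_Dg_le : ∀ x, ‖Dg γ u x‖ ≤ K
  RmuSqE_self_le : RmuSqE s γ γ ≤ ENNReal.ofReal E
  RmuSqE_le : RmuSqE s γ u ≤ ENNReal.ofReal E

theorem IsMotion.exists_curveBounds {n : ℕ} {s : ℝ} {Γ V : ℝ → ℝ → En n} (hs : 1 ≤ s)
    (hΓ : IsMotion s Γ V) :
    ∃ b M K E, ∀ t ∈ Icc (0 : ℝ) 1, CurveBounds s (Γ t) (V t) b M K E := by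
  obtain ⟨b, hb, hbil⟩ := hΓ.exists_mul_abs_le_norm_sub
  obtain ⟨M, hM⟩ := exists_norm_le_of_isCompact_of_periodic isCompact_Icc
    hΓ.continuous_deriv.continuousOn fun t _ => (hΓ.inM t).inHs.periodic_deriv
  obtain ⟨K₀, hK₀⟩ := exists_norm_le_of_isCompact_of_periodic isCompact_Icc
    hΓ.continuous_velocity.continuousOn fun t _ => (hΓ.inHs t).periodic
  obtain ⟨K₁, hK₁⟩ := exists_norm_le_of_isCompact_of_periodic isCompact_Icc
    hΓ.continuous_Dg_velocity.continuousOn fun t _ => periodic_Dg (hΓ.inM t).inHs (hΓ.inHs t)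
  obtain ⟨N₀, hN₀⟩ := hΓ.exists_HsNorm_le
  obtain ⟨N₁, hN₁⟩ := hΓ.exists_HsNorm_velocity_le
  set K := max 1 (max K₀ K₁)
  set N := max N₀ N₁
  have hK₀K : K₀ ≤ K := (le_max_left K₀ K₁).trans (le_max_right _ _)
  have hK₁K : K₁ ≤ K := (le_max_right K₀ K₁).trans (le_max_right _ _)
  have hΓN : ∀ t, HsNorm s (Γ t) ≤ N := fun t => (hN₀ t).trans (le_max_left _ _)
  refine ⟨b, M, K, 2 * (M ^ 2 / b ^ (2 * s + 1)) * (1 + K ^ 2) * N ^ 2, fun t ht => ?_⟩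
  exact
    { pos := hb
      energy_nonneg := by positivity
      mul_abs_le := hbil t ht
      norm_deriv_le := hM t ht
      norm_le := fun x => (hK₀ t ht x).trans hK₀K
      norm_Dg_le := fun x => (hK₁ t ht x).trans hK₁K
      RmuSqE_self_le := (hΓ.inM t).RmuSqE_le hs (hΓ.inM t).inHs hb (hbil t ht) (hM t ht)
        (fun x => (norm_Dg_self_le _ x).trans (le_max_left _ _)) (hΓN t) (hΓN t)
      RmuSqE_le := (hΓ.inM t).RmuSqE_le hs (hΓ.inHs t) hb (hbil t ht) (hM t ht)
        (fun x => (hK₁ t ht x).trans hK₁K) (hΓN t) ((hN₁ t).trans (le_max_right _ _)) }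

end Compactness

/-- Lebesgue measure on the fundamental square of `𝕋 × 𝕋`. -/
abbrev squareMeasure : Measure (ℝ × ℝ) := (volume.restrict I01).prod (volume.restrict I01)

/-- The integrand of the `R^s_γ`-energy `RmuSqE s γ u`, so that
`B¹_γ(u, u) = ∫ energyDensity s γ u`. -/
def energyDensity {n : ℕ} (s : ℝ) (γ u : ℝ → En n) (x y : ℝ) : ℝ :=
  ‖Rop s γ u x y‖ ^ 2 * muW γ x y

/-- The integrand of the double-integral part `2 B¹ + (2s + 1) B² + B³` of `G_γ(u, u)`. -/
def metricDensity {n : ℕ} (s : ℝ) (γ u : ℝ → En n) (x y : ℝ) : ℝ :=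
  2 * energyDensity s γ u x y + energyDensity s γ γ x y *
    ((2 * s + 1) * (‖u y - u x‖ / ‖γ y - γ x‖) ^ 2 + ‖Dg γ u x‖ ^ 2 + ‖Dg γ u y‖ ^ 2)

section Measurability

variable {n : ℕ} {α : Type*} [MeasurableSpace α] {Γ V : α → ℝ → En n}

theorem measurable_energyDensity (s : ℝ) (hΓ : Measurable fun z : α × ℝ => Γ z.1 z.2)
    (hΓ' : Measurable fun z : α × ℝ => deriv (Γ z.1) z.2)
    (hV : Measurable fun z : α × ℝ => V z.1 z.2)
    (hV' : Measurable fun z : α × ℝ => deriv (V z.1) z.2) :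
    Measurable fun w : α × ℝ × ℝ => energyDensity s (Γ w.1) (V w.1) w.2.1 w.2.2 := by
  have hx : Measurable fun w : α × ℝ × ℝ => (w.1, w.2.1) := by fun_prop
  have hy : Measurable fun w : α × ℝ × ℝ => (w.1, w.2.2) := by fun_prop
  have : Measurable fun w : α × ℝ × ℝ => Γ w.1 w.2.1 := hΓ.comp hx
  have : Measurable fun w : α × ℝ × ℝ => Γ w.1 w.2.2 := hΓ.comp hy
  have : Measurable fun w : α × ℝ × ℝ => deriv (Γ w.1) w.2.1 := hΓ'.comp hx
  have : Measurable fun w : α × ℝ × ℝ => deriv (Γ w.1) w.2.2 := hΓ'.comp hy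
  have : Measurable fun w : α × ℝ × ℝ => V w.1 w.2.1 := hV.comp hx
  have : Measurable fun w : α × ℝ × ℝ => V w.1 w.2.2 := hV.comp hy
  have : Measurable fun w : α × ℝ × ℝ => deriv (V w.1) w.2.1 := hV'.comp hx
  simp only [energyDensity, Rop, DDg, muW]
  fun_prop

theorem measurable_metricDensity (s : ℝ) (hΓ : Measurable fun z : α × ℝ => Γ z.1 z.2)
    (hΓ' : Measurable fun z : α × ℝ => deriv (Γ z.1) z.2)
    (hV : Measurable fun z : α × ℝ => V z.1 z.2)
    (hV' : Measurable fun z : α × ℝ => deriv (V z.1) z.2) :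
    Measurable fun w : α × ℝ × ℝ => metricDensity s (Γ w.1) (V w.1) w.2.1 w.2.2 := by
  have hx : Measurable fun w : α × ℝ × ℝ => (w.1, w.2.1) := by fun_prop
  have hy : Measurable fun w : α × ℝ × ℝ => (w.1, w.2.2) := by fun_prop
  have : Measurable fun w : α × ℝ × ℝ => Γ w.1 w.2.1 := hΓ.comp hx
  have : Measurable fun w : α × ℝ × ℝ => Γ w.1 w.2.2 := hΓ.comp hy
  have : Measurable fun w : α × ℝ × ℝ => V w.1 w.2.1 := hV.comp hx
  have : Measurable fun w : α × ℝ × ℝ => V w.1 w.2.2 := hV.comp hy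
  have hD : Measurable fun z : α × ℝ => Dg (Γ z.1) (V z.1) z.2 := by
    simp only [Dg]
    fun_prop
  have hquot : Measurable fun w : α × ℝ × ℝ =>
      (2 * s + 1) * (‖V w.1 w.2.2 - V w.1 w.2.1‖ / ‖Γ w.1 w.2.2 - Γ w.1 w.2.1‖) ^ 2 := by fun_prop
  exact ((measurable_energyDensity s hΓ hΓ' hV hV').const_mul 2).add
    ((measurable_energyDensity (V := Γ) s hΓ hΓ' hΓ hΓ').mul
      ((hquot.add ((hD.comp hx).norm.pow_const 2)).add ((hD.comp hy).norm.pow_const 2)))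

end Measurability

section Metric

variable {n : ℕ} {s b M K E : ℝ} {γ u : ℝ → En n}

theorem energyDensity_nonneg (s : ℝ) (γ u : ℝ → En n) (x y : ℝ) : 0 ≤ energyDensity s γ u x y :=
  mul_nonneg (sq_nonneg _) (muW_nonneg γ x y)

theorem two_mul_energyDensity_le_metricDensity (hs : 0 ≤ s) (γ u : ℝ → En n) (x y : ℝ) :
    2 * energyDensity s γ u x y ≤ metricDensity s γ u x y := by
  have := energyDensity_nonneg s γ γ x y
  rw [metricDensity, le_add_iff_nonneg_right]
  positivity

theorem metricDensity_nonneg (hs : 0 ≤ s) (γ u : ℝ → En n) (x y : ℝ) :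
    0 ≤ metricDensity s γ u x y :=
  (mul_nonneg zero_le_two (energyDensity_nonneg s γ u x y)).trans
    (two_mul_energyDensity_le_metricDensity hs γ u x y)

theorem InM.measurable_energyDensity (hγ : InM s γ) (hu : InHs s u) :
    Measurable fun z : ℝ × ℝ => energyDensity s γ u z.1 z.2 :=
  (_root_.measurable_energyDensity (Γ := fun _ => γ) (V := fun _ => u) s
    (hγ.inHs.continuous.measurable.comp measurable_snd)
    (hγ.inHs.continuous_deriv.measurable.comp measurable_snd)
    (hu.continuous.measurable.comp measurable_snd)
    (hu.continuous_deriv.measurable.comp measurable_snd)).comp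
    (g := fun w : Unit × ℝ × ℝ => energyDensity s γ u w.2.1 w.2.2) (f := fun z => ((), z))
    measurable_prodMk_left

theorem InM.RmuSqE_eq_lintegral (hγ : InM s γ) (hu : InHs s u) :
    RmuSqE s γ u = ∫⁻ z, ENNReal.ofReal (energyDensity s γ u z.1 z.2) ∂squareMeasure :=
  (lintegral_prod _ (hγ.measurable_energyDensity hu).ennreal_ofReal.aemeasurable).symm

theorem ae_energyDensity_nonneg (s : ℝ) (γ u : ℝ → En n) :
    ∀ᵐ z ∂squareMeasure, 0 ≤ energyDensity s γ u z.1 z.2 :=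
  .of_forall fun z => energyDensity_nonneg s γ u z.1 z.2

theorem InM.integrable_energyDensity (hγ : InM s γ) (hu : InHs s u) (hfin : RmuSqE s γ u ≠ ⊤) :
    Integrable (fun z : ℝ × ℝ => energyDensity s γ u z.1 z.2) squareMeasure := by
  rw [hγ.RmuSqE_eq_lintegral hu] at hfin
  exact ⟨(hγ.measurable_energyDensity hu).aestronglyMeasurable,
    (hasFiniteIntegral_iff_ofReal (ae_energyDensity_nonneg s γ u)).2 hfin.lt_top⟩

theorem InM.ofReal_integral_energyDensity (hγ : InM s γ) (hu : InHs s u)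
    (hfin : RmuSqE s γ u ≠ ⊤) :
    ENNReal.ofReal (∫ z, energyDensity s γ u z.1 z.2 ∂squareMeasure) = RmuSqE s γ u := by
  rw [hγ.RmuSqE_eq_lintegral hu, ofReal_integral_eq_lintegral_ofReal
    (hγ.integrable_energyDensity hu hfin) (ae_energyDensity_nonneg s γ u)]

theorem norm_deriv_eq_norm_Dg_mul (hγ : InM s γ) (u : ℝ → En n) (x : ℝ) :
    ‖deriv u x‖ = ‖Dg γ u x‖ * ‖deriv γ x‖ := by
  rw [Dg, norm_smul, norm_inv, norm_norm, mul_right_comm,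
    inv_mul_cancel₀ (hγ.norm_deriv_ne_zero x), one_mul]

theorem innerH1g_self (γ u : ℝ → En n) :
    innerH1g γ u u = ∫ x in I01, ‖Dg γ u x‖ ^ 2 * ‖deriv γ x‖ := by
  simp only [innerH1g, real_inner_self_eq_norm_sq]

theorem innerL2g_self (γ u : ℝ → En n) :
    innerL2g γ u u = ∫ x in I01, ‖u x‖ ^ 2 * ‖deriv γ x‖ := by
  simp only [innerL2g, real_inner_self_eq_norm_sq]

theorem innerH1g_self_nonneg (γ u : ℝ → En n) : 0 ≤ innerH1g γ u u := by
  rw [innerH1g_self]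
  exact integral_nonneg fun x => by positivity

theorem innerL2g_self_nonneg (γ u : ℝ → En n) : 0 ≤ innerL2g γ u u := by
  rw [innerL2g_self]
  exact integral_nonneg fun x => by positivity

theorem integral_I01_le_of_norm_le {f : ℝ → ℝ} {C : ℝ} (hf : ∀ x, ‖f x‖ ≤ C) :
    ∫ x in I01, f x ≤ C := by
  have hle := norm_setIntegral_le_of_norm_le_const (μ := volume) (s := I01) (f := f) (C := C)
    (by simp [I01]) fun x _ => hf x
  simp only [I01, volume_real_Ico, sub_zero, max_eq_left zero_le_one, mul_one] at hle
  exact (le_norm_self _).trans hle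

namespace CurveBounds

theorem div_norm_sub_le (h : CurveBounds s γ u b M K E) (hγ : InM s γ) (hu : InHs s u) (x y : ℝ) :
    ‖u y - u x‖ / ‖γ y - γ x‖ ≤ K * M / b := by
  have hK : 0 ≤ K := (norm_nonneg _).trans (h.norm_Dg_le 0)
  have hM : 0 ≤ M := (norm_nonneg _).trans (h.norm_deriv_le 0)
  have hb := h.pos
  obtain ⟨δ, hδ, hγy, huy⟩ : ∃ δ : ℝ, |δ| ≤ 1 / 2 ∧ γ y = γ (x + δ) ∧ u y = u (x + δ) := by
    have hy : y = x + (y - x - round (y - x)) + round (y - x) := by ring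
    refine ⟨y - x - round (y - x), abs_sub_round _, ?_, ?_⟩
    · conv_lhs => rw [hy, apply_add_intCast_of_periodic hγ.inHs.periodic]
    · conv_lhs => rw [hy, apply_add_intCast_of_periodic hu.periodic]
  have hlip : ‖u (x + δ) - u x‖ ≤ K * M * |δ| := by
    have hmvt := convex_univ.norm_image_sub_le_of_norm_deriv_le (f := u) (C := K * M)
      (fun z _ => (hu.hasDerivAt z).differentiableAt)
      (fun z _ => by
        rw [norm_deriv_eq_norm_Dg_mul hγ]
        exact mul_le_mul (h.norm_Dg_le z) (h.norm_deriv_le z) (norm_nonneg _) hK)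
      (mem_univ x) (mem_univ (x + δ))
    rwa [add_sub_cancel_left, norm_eq_abs] at hmvt
  rw [hγy, huy]
  refine div_le_of_le_mul₀ (norm_nonneg _) (by positivity) (hlip.trans ?_)
  calc K * M * |δ| = K * M / b * (b * |δ|) := by field_simp
    _ ≤ K * M / b * ‖γ (x + δ) - γ x‖ := by
        gcongr
        exact h.mul_abs_le x δ hδ

theorem RmuSqE_self_ne_top (h : CurveBounds s γ u b M K E) : RmuSqE s γ γ ≠ ⊤ :=
  (h.RmuSqE_self_le.trans_lt ENNReal.ofReal_lt_top).ne

theorem RmuSqE_ne_top (h : CurveBounds s γ u b M K E) : RmuSqE s γ u ≠ ⊤ :=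
  (h.RmuSqE_le.trans_lt ENNReal.ofReal_lt_top).ne

theorem metricDensity_le (hs : 0 ≤ s) (h : CurveBounds s γ u b M K E) (hγ : InM s γ)
    (hu : InHs s u) (x y : ℝ) :
    metricDensity s γ u x y ≤ 2 * energyDensity s γ u x y +
      ((2 * s + 1) * (K * M / b) ^ 2 + K ^ 2 + K ^ 2) * energyDensity s γ γ x y := by
  have := energyDensity_nonneg s γ γ x y
  have hquot : (‖u y - u x‖ / ‖γ y - γ x‖) ^ 2 ≤ (K * M / b) ^ 2 :=
    pow_le_pow_left₀ (by positivity) (h.div_norm_sub_le hγ hu x y) 2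
  rw [metricDensity, mul_comm (energyDensity s γ γ x y)]
  gcongr
  · exact h.norm_Dg_le x
  · exact h.norm_Dg_le y

theorem integrable_energyDensity_mul_div_norm_sub_sq (h : CurveBounds s γ u b M K E)
    (hγ : InM s γ) (hu : InHs s u) :
    Integrable (fun z : ℝ × ℝ =>
      energyDensity s γ γ z.1 z.2 * (‖u z.2 - u z.1‖ / ‖γ z.2 - γ z.1‖) ^ 2) squareMeasure := by
  have : Measurable γ := hγ.inHs.continuous.measurable
  have : Measurable u := hu.continuous.measurable
  refine (hγ.integrable_energyDensity hγ.inHs h.RmuSqE_self_ne_top).mul_bdd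
    (c := (K * M / b) ^ 2) (Measurable.aestronglyMeasurable (by fun_prop)) (.of_forall fun z => ?_)
  rw [norm_of_nonneg (sq_nonneg _)]
  exact pow_le_pow_left₀ (by positivity) (h.div_norm_sub_le hγ hu z.1 z.2) 2

theorem integrable_energyDensity_mul_norm_Dg_sq (h : CurveBounds s γ u b M K E)
    (hγ : InM s γ) (hu : InHs s u) :
    Integrable (fun z : ℝ × ℝ =>
      energyDensity s γ γ z.1 z.2 * (‖Dg γ u z.1‖ ^ 2 + ‖Dg γ u z.2‖ ^ 2)) squareMeasure := by
  have := hγ.continuous_Dg hu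
  refine (hγ.integrable_energyDensity hγ.inHs h.RmuSqE_self_ne_top).mul_bdd
    (c := K ^ 2 + K ^ 2) (Continuous.aestronglyMeasurable (by fun_prop)) (.of_forall fun z => ?_)
  rw [norm_of_nonneg (by positivity)]
  gcongr
  · exact h.norm_Dg_le z.1
  · exact h.norm_Dg_le z.2

theorem hasIntegral_metricDensity (h : CurveBounds s γ u b M K E) (hγ : InM s γ)
    (hu : InHs s u) :
    Integrable (fun z : ℝ × ℝ => metricDensity s γ u z.1 z.2) squareMeasure ∧
      ∫ z, metricDensity s γ u z.1 z.2 ∂squareMeasure =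
        2 * B1 s γ u u + (2 * s + 1) * B2 s γ u u + B3 s γ u u := by
  have h₁ := hγ.integrable_energyDensity hu h.RmuSqE_ne_top
  have h₂ := h.integrable_energyDensity_mul_div_norm_sub_sq hγ hu
  have h₃ := h.integrable_energyDensity_mul_norm_Dg_sq hγ hu
  have hB₁ : B1 s γ u u = ∫ z, energyDensity s γ u z.1 z.2 ∂squareMeasure := by
    rw [integral_prod _ h₁]
    simp only [B1, real_inner_self_eq_norm_sq, energyDensity]
  have hB₂ : B2 s γ u u = ∫ z, energyDensity s γ γ z.1 z.2 *
      (‖u z.2 - u z.1‖ / ‖γ z.2 - γ z.1‖) ^ 2 ∂squareMeasure := by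
    rw [integral_prod _ h₂]
    simp only [B2, real_inner_self_eq_norm_sq, energyDensity, div_pow, mul_right_comm]
  have hB₃ : B3 s γ u u = ∫ z, energyDensity s γ γ z.1 z.2 *
      (‖Dg γ u z.1‖ ^ 2 + ‖Dg γ u z.2‖ ^ 2) ∂squareMeasure := by
    rw [integral_prod _ h₃]
    simp only [B3, real_inner_self_eq_norm_sq, energyDensity, mul_right_comm]
  have hsplit : ∀ z : ℝ × ℝ, metricDensity s γ u z.1 z.2 = 2 * energyDensity s γ u z.1 z.2 +
      (2 * s + 1) * (energyDensity s γ γ z.1 z.2 * (‖u z.2 - u z.1‖ / ‖γ z.2 - γ z.1‖) ^ 2) +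
      energyDensity s γ γ z.1 z.2 * (‖Dg γ u z.1‖ ^ 2 + ‖Dg γ u z.2‖ ^ 2) := fun z => by
    rw [metricDensity]
    ring
  simp only [hsplit, hB₁, hB₂, hB₃]
  have h₁₂ : Integrable (fun z : ℝ × ℝ => 2 * energyDensity s γ u z.1 z.2 + (2 * s + 1) *
      (energyDensity s γ γ z.1 z.2 * (‖u z.2 - u z.1‖ / ‖γ z.2 - γ z.1‖) ^ 2)) squareMeasure :=
    (h₁.const_mul 2).add (h₂.const_mul (2 * s + 1))
  refine ⟨h₁₂.add h₃, ?_⟩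
  rw [integral_add h₁₂ h₃, integral_add (h₁.const_mul 2) (h₂.const_mul (2 * s + 1)),
    integral_const_mul, integral_const_mul]

theorem Gmet_self_eq (h : CurveBounds s γ u b M K E) (hγ : InM s γ) (hu : InHs s u) :
    Gmet s γ u u = ∫ z, metricDensity s γ u z.1 z.2 ∂squareMeasure +
      innerH1g γ u u + innerL2g γ u u := by
  rw [(h.hasIntegral_metricDensity hγ hu).2, Gmet]

theorem integral_metricDensity_le_Gmet (h : CurveBounds s γ u b M K E) (hγ : InM s γ)
    (hu : InHs s u) : ∫ z, metricDensity s γ u z.1 z.2 ∂squareMeasure ≤ Gmet s γ u u := by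
  rw [h.Gmet_self_eq hγ hu]
  linarith [innerH1g_self_nonneg γ u, innerL2g_self_nonneg γ u]

theorem innerH1g_self_le_Gmet (hs : 0 ≤ s) (h : CurveBounds s γ u b M K E) (hγ : InM s γ)
    (hu : InHs s u) : innerH1g γ u u ≤ Gmet s γ u u := by
  rw [h.Gmet_self_eq hγ hu]
  have hnonneg : 0 ≤ ∫ z, metricDensity s γ u z.1 z.2 ∂squareMeasure :=
    integral_nonneg_of_ae (.of_forall fun z => metricDensity_nonneg hs γ u z.1 z.2 :
      ∀ᵐ z ∂squareMeasure, 0 ≤ metricDensity s γ u z.1 z.2)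
  linarith [innerL2g_self_nonneg γ u]

theorem RmuSqE_le_Gmet (hs : 0 ≤ s) (h : CurveBounds s γ u b M K E) (hγ : InM s γ)
    (hu : InHs s u) : RmuSqE s γ u ≤ ENNReal.ofReal (Gmet s γ u u) := by
  rw [← hγ.ofReal_integral_energyDensity hu h.RmuSqE_ne_top]
  refine ENNReal.ofReal_le_ofReal (le_trans ?_ (h.integral_metricDensity_le_Gmet hγ hu))
  refine integral_mono (hγ.integrable_energyDensity hu h.RmuSqE_ne_top)
    (h.hasIntegral_metricDensity hγ hu).1 fun z => ?_
  have := energyDensity_nonneg s γ u z.1 z.2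
  have := two_mul_energyDensity_le_metricDensity hs γ u z.1 z.2
  dsimp only
  linarith

theorem Gmet_self_le (hs : 0 ≤ s) (h : CurveBounds s γ u b M K E) (hγ : InM s γ)
    (hu : InHs s u) :
    Gmet s γ u u ≤ 2 * E + ((2 * s + 1) * (K * M / b) ^ 2 + K ^ 2 + K ^ 2) * E +
      K ^ 2 * M + K ^ 2 * M := by
  set C := (2 * s + 1) * (K * M / b) ^ 2 + K ^ 2 + K ^ 2
  have hself := hγ.integrable_energyDensity hγ.inHs h.RmuSqE_self_ne_top
  have hvel := hγ.integrable_energyDensity hu h.RmuSqE_ne_top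
  have hself_le : ∫ z, energyDensity s γ γ z.1 z.2 ∂squareMeasure ≤ E :=
    (ENNReal.ofReal_le_ofReal_iff h.energy_nonneg).1 <|
      (hγ.ofReal_integral_energyDensity hγ.inHs h.RmuSqE_self_ne_top).trans_le h.RmuSqE_self_le
  have hvel_le : ∫ z, energyDensity s γ u z.1 z.2 ∂squareMeasure ≤ E :=
    (ENNReal.ofReal_le_ofReal_iff h.energy_nonneg).1 <|
      (hγ.ofReal_integral_energyDensity hu h.RmuSqE_ne_top).trans_le h.RmuSqE_le
  have hdensity : ∫ z, metricDensity s γ u z.1 z.2 ∂squareMeasure ≤ 2 * E + C * E := by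
    refine (integral_mono (h.hasIntegral_metricDensity hγ hu).1
      ((hvel.const_mul 2).add (hself.const_mul C))
      fun z => h.metricDensity_le hs hγ hu z.1 z.2).trans ?_
    rw [integral_add' (hvel.const_mul 2) (hself.const_mul C), integral_const_mul,
      integral_const_mul]
    gcongr
  have hH1 : innerH1g γ u u ≤ K ^ 2 * M := by
    rw [innerH1g_self]
    refine integral_I01_le_of_norm_le fun x => ?_
    rw [norm_of_nonneg (by positivity)]
    gcongr
    exacts [h.norm_Dg_le x, h.norm_deriv_le x]
  have hL2 : innerL2g γ u u ≤ K ^ 2 * M := by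
    rw [innerL2g_self]
    refine integral_I01_le_of_norm_le fun x => ?_
    rw [norm_of_nonneg (by positivity)]
    gcongr
    exacts [h.norm_le x, h.norm_deriv_le x]
  rw [h.Gmet_self_eq hγ hu]
  gcongr

end CurveBounds

namespace IsMotion

variable {n : ℕ} {s : ℝ} {Γ V : ℝ → ℝ → En n}

theorem measurable_metricDensity (hΓ : IsMotion s Γ V) :
    Measurable fun w : ℝ × ℝ × ℝ => metricDensity s (Γ w.1) (V w.1) w.2.1 w.2.2 :=
  _root_.measurable_metricDensity s hΓ.continuous.measurable hΓ.continuous_deriv.measurable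
    hΓ.continuous_velocity.measurable hΓ.continuous_deriv_velocity.measurable

theorem measurable_energyDensity (hΓ : IsMotion s Γ V) :
    Measurable fun w : ℝ × ℝ × ℝ => energyDensity s (Γ w.1) (Γ w.1) w.2.1 w.2.2 :=
  _root_.measurable_energyDensity s hΓ.continuous.measurable hΓ.continuous_deriv.measurable
    hΓ.continuous.measurable hΓ.continuous_deriv.measurable

theorem aestronglyMeasurable_Gmet (hs : 1 ≤ s) (hΓ : IsMotion s Γ V) :
    AEStronglyMeasurable (fun t => Gmet s (Γ t) (V t) (V t)) (volume.restrict (Icc 0 1)) := by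
  have hdensity : StronglyMeasurable fun t =>
      ∫ z, metricDensity s (Γ t) (V t) z.1 z.2 ∂squareMeasure :=
    StronglyMeasurable.integral_prod_right hΓ.measurable_metricDensity.stronglyMeasurable
  have hH1 : StronglyMeasurable fun t => innerH1g (Γ t) (V t) (V t) :=
    StronglyMeasurable.integral_prod_right (Continuous.stronglyMeasurable
      ((hΓ.continuous_Dg_velocity.inner hΓ.continuous_Dg_velocity).mul hΓ.continuous_deriv.norm))
  have hL2 : StronglyMeasurable fun t => innerL2g (Γ t) (V t) (V t) :=
    StronglyMeasurable.integral_prod_right (Continuous.stronglyMeasurable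
      ((hΓ.continuous_velocity.inner hΓ.continuous_velocity).mul hΓ.continuous_deriv.norm))
  obtain ⟨b, M, K, E, hbd⟩ := hΓ.exists_curveBounds hs
  refine ((hdensity.add hH1).add hL2).aestronglyMeasurable.congr ?_
  filter_upwards [ae_restrict_mem measurableSet_Icc] with t ht
  exact ((hbd t ht).Gmet_self_eq (hΓ.inM t) (hΓ.inHs t)).symm

theorem integrableOn_sqrt_Gmet (hs : 1 ≤ s) (hΓ : IsMotion s Γ V) :
    IntegrableOn (fun t => √(Gmet s (Γ t) (V t) (V t))) (Icc 0 1) := by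
  obtain ⟨b, M, K, E, hbd⟩ := hΓ.exists_curveBounds hs
  refine Integrable.of_bound
    (continuous_sqrt.comp_aestronglyMeasurable (hΓ.aestronglyMeasurable_Gmet hs))
    (√(2 * E + ((2 * s + 1) * (K * M / b) ^ 2 + K ^ 2 + K ^ 2) * E + K ^ 2 * M + K ^ 2 * M)) ?_
  filter_upwards [ae_restrict_mem measurableSet_Icc] with t ht
  rw [norm_of_nonneg (sqrt_nonneg _)]
  exact sqrt_le_sqrt
    ((hbd t ht).Gmet_self_le (zero_le_one.trans hs) (hΓ.inM t) (hΓ.inHs t))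

end IsMotion

end Metric

section Derivatives

variable {F : Type*} [NormedAddCommGroup F] [InnerProductSpace ℝ F] {t : ℝ}

theorem hasDerivAt_norm_of_ne_zero {v : ℝ → F} {v' : F} (hv : HasDerivAt v v' t) (h0 : v t ≠ 0) :
    HasDerivAt (fun τ => ‖v τ‖) (⟪v t, v'⟫ / ‖v t‖) t := by
  have hsqrt := hv.norm_sq.sqrt (pow_ne_zero 2 (norm_ne_zero_iff.2 h0))
  simpa only [sqrt_sq (norm_nonneg _), mul_div_mul_left _ _ (two_ne_zero' ℝ)] using hsqrt

theorem abs_logDeriv_norm_le {v : ℝ → F} {v' : F} (hv : HasDerivAt v v' t) (h0 : v t ≠ 0) :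
    |logDeriv (fun τ => ‖v τ‖) t| ≤ ‖v'‖ / ‖v t‖ := by
  have hpos : 0 < ‖v t‖ := norm_pos_iff.2 h0
  rw [logDeriv_apply, (hasDerivAt_norm_of_ne_zero hv h0).deriv, abs_div, abs_div, abs_norm]
  gcongr
  rw [div_le_iff₀ hpos, mul_comm]
  exact abs_real_inner_le_norm _ _

theorem logDeriv_rpow_const {f : ℝ → ℝ} (p : ℝ) (hf : DifferentiableAt ℝ f t) (h0 : 0 < f t) :
    logDeriv (fun τ => f τ ^ p) t = p * logDeriv f t := by
  rw [logDeriv_apply, logDeriv_apply, (hf.hasDerivAt.rpow_const (Or.inl h0.ne')).deriv,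
    rpow_sub_one h0.ne']
  have := (rpow_pos_of_pos h0 p).ne'
  field_simp

/-- Since the residual is orthogonal to `A t`, the derivative of the coefficient `c` drops out. -/
theorem hasDerivAt_norm_sq_sub_smul {A D : ℝ → F} {A' D' : F} {c : ℝ → ℝ}
    (hA : HasDerivAt A A' t) (hD : HasDerivAt D D' t) (hc : DifferentiableAt ℝ c t)
    (horth : ⟪D t - c t • A t, A t⟫ = 0) :
    HasDerivAt (fun τ => ‖D τ - c τ • A τ‖ ^ 2) (2 * ⟪D t - c t • A t, D' - c t • A'⟫) t := by
  refine (hD.sub (hc.hasDerivAt.smul hA)).norm_sq.congr_deriv ?_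
  change 2 * ⟪D t - c t • A t, D' - (c t • A' + deriv c t • A t)⟫ = _
  rw [← sub_sub, inner_sub_right _ _ (deriv c t • A t), real_inner_smul_right, horth, mul_zero,
    sub_zero]

theorem differentiableAt_norm_mul_norm_mul_inv_rpow {A B D : ℝ → F} {A' B' D' : F} (p : ℝ)
    (hA : HasDerivAt A A' t) (hB : HasDerivAt B B' t) (hD : HasDerivAt D D' t)
    (hA0 : A t ≠ 0) (hB0 : B t ≠ 0) (hD0 : D t ≠ 0) :
    DifferentiableAt ℝ (fun τ => ‖A τ‖ * ‖B τ‖ * (‖D τ‖ ^ p)⁻¹) t :=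
  (((hasDerivAt_norm_of_ne_zero hA hA0).mul (hasDerivAt_norm_of_ne_zero hB hB0)).mul
    (((hasDerivAt_norm_of_ne_zero hD hD0).rpow_const (Or.inl (norm_ne_zero_iff.2 hD0))).inv
      (rpow_pos_of_pos (norm_pos_iff.2 hD0) p).ne')).differentiableAt

theorem abs_logDeriv_norm_mul_norm_mul_inv_rpow_le {A B D : ℝ → F} {A' B' D' : F} {p : ℝ}
    (hp : 0 ≤ p) (hA : HasDerivAt A A' t) (hB : HasDerivAt B B' t) (hD : HasDerivAt D D' t)
    (hA0 : A t ≠ 0) (hB0 : B t ≠ 0) (hD0 : D t ≠ 0) :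
    |logDeriv (fun τ => ‖A τ‖ * ‖B τ‖ * (‖D τ‖ ^ p)⁻¹) t| ≤
      ‖A'‖ / ‖A t‖ + ‖B'‖ / ‖B t‖ + p * (‖D'‖ / ‖D t‖) := by
  have hDpos : 0 < ‖D t‖ := norm_pos_iff.2 hD0
  have hnA := (hasDerivAt_norm_of_ne_zero hA hA0).differentiableAt
  have hnB := (hasDerivAt_norm_of_ne_zero hB hB0).differentiableAt
  have hnD := (hasDerivAt_norm_of_ne_zero hD hD0).differentiableAt
  simp only [← div_eq_mul_inv]
  rw [logDeriv_div (f := fun τ => ‖A τ‖ * ‖B τ‖) (g := fun τ => ‖D τ‖ ^ p) t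
      (mul_ne_zero (norm_ne_zero_iff.2 hA0) (norm_ne_zero_iff.2 hB0))
      (rpow_pos_of_pos hDpos p).ne' (hnA.mul hnB) (hnD.rpow_const (Or.inl hDpos.ne')),
    logDeriv_mul (f := fun τ => ‖A τ‖) (g := fun τ => ‖B τ‖) t (norm_ne_zero_iff.2 hA0)
      (norm_ne_zero_iff.2 hB0) hnA hnB,
    logDeriv_rpow_const p hnD hDpos, sub_eq_add_neg]
  refine (abs_add_le _ _).trans (add_le_add ((abs_add_le _ _).trans (add_le_add
    (abs_logDeriv_norm_le hA hA0) (abs_logDeriv_norm_le hB hB0))) ?_)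
  rw [abs_neg, abs_mul, abs_of_nonneg hp]
  gcongr
  exact abs_logDeriv_norm_le hD hD0

theorem abs_deriv_mul_le_of_abs_logDeriv_le {N W : ℝ → ℝ} {r ρ : F} {B : ℝ}
    (hN : HasDerivAt N (2 * ⟪r, ρ⟫) t) (hNt : N t = ‖r‖ ^ 2) (hW : DifferentiableAt ℝ W t)
    (hWpos : 0 < W t) (hB : |logDeriv W t| ≤ B) :
    |deriv (fun τ => N τ * W τ) t| ≤ 2 * (‖r‖ * ‖ρ‖) * W t + ‖r‖ ^ 2 * W t * B := by
  have hlog : deriv W t = W t * logDeriv W t := by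
    rw [logDeriv_apply, mul_div_cancel₀ _ hWpos.ne']
  have hderiv : HasDerivAt (fun τ => N τ * W τ) (2 * ⟪r, ρ⟫ * W t + N t * deriv W t) t :=
    hN.mul hW.hasDerivAt
  rw [hderiv.deriv, hNt, hlog, ← mul_assoc]
  refine (abs_add_le _ _).trans (add_le_add ?_ ?_)
  · rw [abs_mul, abs_mul, abs_two, abs_of_pos hWpos]
    gcongr
    exact abs_real_inner_le_norm r ρ
  · rw [abs_mul, abs_of_nonneg (by positivity : 0 ≤ ‖r‖ ^ 2 * W t)]
    gcongr

/-- Cauchy–Schwarz for the weights `2, p, 1, 1`. -/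
theorem two_mul_add_le_sqrt_mul_sqrt {r ρ W a c q p : ℝ} (hW : 0 ≤ W) (hp : 0 ≤ p) :
    2 * (r * ρ) * W + r ^ 2 * W * (a + c + p * q) ≤ √(p + 4) *
      (√(r ^ 2 * W) * √(2 * (ρ ^ 2 * W) + r ^ 2 * W * (p * q ^ 2 + a ^ 2 + c ^ 2))) := by
  have hCS : (2 * ρ + r * (a + c + p * q)) ^ 2 ≤
      (p + 4) * (2 * ρ ^ 2 + r ^ 2 * (p * q ^ 2 + a ^ 2 + c ^ 2)) := by
    have h₁ := mul_nonneg hp (sq_nonneg (ρ - r * q))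
    have h₂ := mul_nonneg hp (sq_nonneg (r * a - r * q))
    have h₃ := mul_nonneg hp (sq_nonneg (r * c - r * q))
    linarith [sq_nonneg (ρ - r * a), sq_nonneg (ρ - r * c), sq_nonneg (r * a - r * c)]
  rw [← sqrt_mul (by positivity), ← sqrt_mul (by positivity)]
  refine (le_abs_self _).trans (abs_le_sqrt ?_)
  calc (2 * (r * ρ) * W + r ^ 2 * W * (a + c + p * q)) ^ 2
      = r ^ 2 * W ^ 2 * (2 * ρ + r * (a + c + p * q)) ^ 2 := by ring
    _ ≤ r ^ 2 * W ^ 2 * ((p + 4) * (2 * ρ ^ 2 + r ^ 2 * (p * q ^ 2 + a ^ 2 + c ^ 2))) := by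
        gcongr
    _ = _ := by ring

end Derivatives

/-- A bound for the rate of change of `energyDensity s γ γ` when `γ` moves with velocity `u`. -/
def energyRateBound {n : ℕ} (s : ℝ) (γ u : ℝ → En n) (x y : ℝ) : ℝ :=
  √(2 * s + 5) * (√(energyDensity s γ γ x y) * √(metricDensity s γ u x y))

section EnergyVariation

variable {n : ℕ} {s t x y : ℝ} {γ u : ℝ → En n}

theorem inner_remainderNum_self_deriv (γ : ℝ → En n) (x y : ℝ) :
    ⟪remainderNum γ γ x y, deriv γ x⟫ = 0 := by
  rcases eq_or_ne (deriv γ x) 0 with h | h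
  · rw [h, inner_zero_right]
  · have := norm_ne_zero_iff.2 h
    rw [remainderNum, DDg, inner_sub_left, real_inner_smul_left, real_inner_self_eq_norm_sq,
      real_inner_comm]
    field_simp
    ring

theorem energyDensity_eq (hxy : γ x ≠ γ y) :
    energyDensity s γ u x y = ‖remainderNum γ u x y‖ ^ 2 *
      (‖deriv γ x‖ * ‖deriv γ y‖ * (‖γ y - γ x‖ ^ (2 * s + 1))⁻¹) := by
  rw [energyDensity, norm_Rop_sq_mul_muW hxy, mul_assoc]

theorem norm_Dg (γ u : ℝ → En n) (x : ℝ) : ‖Dg γ u x‖ = ‖deriv u x‖ / ‖deriv γ x‖ := by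
  rw [Dg, norm_smul, norm_inv, norm_norm, div_eq_inv_mul]

namespace IsMotion

variable {Γ V : ℝ → ℝ → En n}

theorem ne_of_ne (hΓ : IsMotion s Γ V) (hx : x ∈ I01) (hy : y ∈ I01) (hxy : x ≠ y) (t : ℝ) :
    Γ t x ≠ Γ t y :=
  fun h => hxy ((hΓ.inM t).2.1 hx hy h)

theorem deriv_ne_zero (hΓ : IsMotion s Γ V) (t x : ℝ) : deriv (Γ t) x ≠ 0 :=
  (hΓ.inM t).2.2 x

theorem hasDerivAt_norm_remainderNum_sq (hΓ : IsMotion s Γ V) (ht : t ∈ Ioo 0 1) (x y : ℝ) :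
    HasDerivAt (fun τ => ‖remainderNum (Γ τ) (Γ τ) x y‖ ^ 2)
      (2 * ⟪remainderNum (Γ t) (Γ t) x y, remainderNum (Γ t) (V t) x y⟫) t := by
  have hA := hΓ.hasDerivAt_deriv t ht x
  have hD := (hΓ.hasDerivAt t ht y).sub (hΓ.hasDerivAt t ht x)
  have hc := (hA.norm_sq.inv (pow_ne_zero 2 (norm_ne_zero_iff.2 (hΓ.deriv_ne_zero t x)))).mul
    (hA.inner ℝ hD)
  exact hasDerivAt_norm_sq_sub_smul hA hD hc.differentiableAt
    (inner_remainderNum_self_deriv (Γ t) x y)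

theorem differentiableAt_energyDensity_and_abs_deriv_le (hs : 0 ≤ s) (hΓ : IsMotion s Γ V)
    (ht : t ∈ Ioo 0 1) (hx : x ∈ I01) (hy : y ∈ I01) (hxy : x ≠ y) :
    DifferentiableAt ℝ (fun τ => energyDensity s (Γ τ) (Γ τ) x y) t ∧
      |deriv (fun τ => energyDensity s (Γ τ) (Γ τ) x y) t| ≤
        energyRateBound s (Γ t) (V t) x y := by
  have hp : 0 ≤ 2 * s + 1 := by positivity
  have hne := hΓ.ne_of_ne hx hy hxy
  have hDne : Γ t y - Γ t x ≠ 0 := sub_ne_zero.2 (hne t).symm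
  have hN := hΓ.hasDerivAt_norm_remainderNum_sq ht x y
  have hA := hΓ.hasDerivAt_deriv t ht x
  have hB := hΓ.hasDerivAt_deriv t ht y
  have hD := (hΓ.hasDerivAt t ht y).sub (hΓ.hasDerivAt t ht x)
  set W : ℝ → ℝ := fun τ =>
    ‖deriv (Γ τ) x‖ * ‖deriv (Γ τ) y‖ * (‖Γ τ y - Γ τ x‖ ^ (2 * s + 1))⁻¹
  have hWpos : 0 < W t := by
    have := norm_pos_iff.2 (hΓ.deriv_ne_zero t x)
    have := norm_pos_iff.2 (hΓ.deriv_ne_zero t y)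
    have := norm_pos_iff.2 hDne
    positivity
  have hWdiff : DifferentiableAt ℝ W t := differentiableAt_norm_mul_norm_mul_inv_rpow (2 * s + 1)
    hA hB hD (hΓ.deriv_ne_zero t x) (hΓ.deriv_ne_zero t y) hDne
  have hWlog : |logDeriv W t| ≤ _ := abs_logDeriv_norm_mul_norm_mul_inv_rpow_le hp hA hB hD
    (hΓ.deriv_ne_zero t x) (hΓ.deriv_ne_zero t y) hDne
  have hE : ∀ τ u, energyDensity s (Γ τ) u x y = ‖remainderNum (Γ τ) u x y‖ ^ 2 * W τ :=
    fun τ u => energyDensity_eq (hne τ)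
  simp only [← norm_Dg] at hWlog
  rw [funext fun τ => hE τ (Γ τ)]
  refine ⟨hN.differentiableAt.mul hWdiff, ?_⟩
  refine (abs_deriv_mul_le_of_abs_logDeriv_le hN rfl hWdiff hWpos hWlog).trans
    ((two_mul_add_le_sqrt_mul_sqrt hWpos.le hp).trans_eq ?_)
  rw [energyRateBound, metricDensity, hE, hE]
  ring_nf

end IsMotion

end EnergyVariation

theorem energyRateBound_nonneg {n : ℕ} (s : ℝ) (γ u : ℝ → En n) (x y : ℝ) :
    0 ≤ energyRateBound s γ u x y := by
  unfold energyRateBound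
  positivity

theorem energyDensity_diag {n : ℕ} (s : ℝ) (γ u : ℝ → En n) (x : ℝ) :
    energyDensity s γ u x x = 0 := by
  simp [energyDensity, muW]

namespace IsMotion

variable {n : ℕ} {s t x y : ℝ} {Γ V : ℝ → ℝ → En n}

theorem continuous_apply (hΓ : IsMotion s Γ V) (x : ℝ) : Continuous fun τ => Γ τ x :=
  hΓ.continuous.along_fst

theorem continuous_deriv_apply (hΓ : IsMotion s Γ V) (x : ℝ) :
    Continuous fun τ => deriv (Γ τ) x :=
  hΓ.continuous_deriv.along_fst

theorem continuous_energyDensity (hΓ : IsMotion s Γ V) (hne : ∀ τ, Γ τ x ≠ Γ τ y)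
    {U : ℝ → ℝ → En n} (hUx : Continuous fun τ => U τ x) (hUy : Continuous fun τ => U τ y)
    (hUx' : Continuous fun τ => deriv (U τ) x) :
    Continuous fun τ => energyDensity s (Γ τ) (U τ) x y := by
  have := hΓ.continuous_apply x
  have := hΓ.continuous_apply y
  have := hΓ.continuous_deriv_apply x
  have := hΓ.continuous_deriv_apply y
  have hdist : ∀ τ, ‖Γ τ y - Γ τ x‖ ≠ 0 := fun τ => norm_ne_zero_iff.2 (sub_ne_zero.2 (hne τ).symm)
  have hinv : Continuous fun τ => (‖deriv (Γ τ) x‖ ^ 2)⁻¹ :=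
    Continuous.inv₀ (by fun_prop) fun τ => pow_ne_zero 2 ((hΓ.inM τ).norm_deriv_ne_zero x)
  have hrpow : Continuous fun τ => (‖Γ τ y - Γ τ x‖ ^ (2 * s + 1))⁻¹ :=
    Continuous.inv₀ (Continuous.rpow_const (by fun_prop) fun τ => Or.inl (hdist τ)) fun τ =>
      (rpow_pos_of_pos ((norm_nonneg _).lt_of_ne' (hdist τ)) _).ne'
  simp only [energyDensity_eq (hne _), remainderNum, DDg]
  fun_prop

theorem continuous_metricDensity (hΓ : IsMotion s Γ V) (hne : ∀ τ, Γ τ x ≠ Γ τ y) :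
    Continuous fun τ => metricDensity s (Γ τ) (V τ) x y := by
  have hVx : Continuous fun τ => V τ x := hΓ.continuous_velocity.along_fst
  have hVy : Continuous fun τ => V τ y := hΓ.continuous_velocity.along_fst
  have hVx' : Continuous fun τ => deriv (V τ) x := hΓ.continuous_deriv_velocity.along_fst
  have hDx : Continuous fun τ => Dg (Γ τ) (V τ) x := hΓ.continuous_Dg_velocity.along_fst
  have hDy : Continuous fun τ => Dg (Γ τ) (V τ) y := hΓ.continuous_Dg_velocity.along_fst
  have hquot : Continuous fun τ =>
      (2 * s + 1) * (‖V τ y - V τ x‖ / ‖Γ τ y - Γ τ x‖) ^ 2 :=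
    (((hVy.sub hVx).norm.div ((hΓ.continuous_apply y).sub (hΓ.continuous_apply x)).norm
      fun τ => norm_ne_zero_iff.2 (sub_ne_zero.2 (hne τ).symm)).pow 2).const_mul _
  have hself : Continuous fun τ => energyDensity s (Γ τ) (Γ τ) x y :=
    hΓ.continuous_energyDensity (U := Γ) hne (hΓ.continuous_apply x) (hΓ.continuous_apply y)
      (hΓ.continuous_deriv_apply x)
  have hvel : Continuous fun τ => energyDensity s (Γ τ) (V τ) x y :=
    hΓ.continuous_energyDensity (U := V) hne hVx hVy hVx'
  exact (hvel.const_mul 2).add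
    (hself.mul ((hquot.add (hDx.norm.pow 2)).add (hDy.norm.pow 2)))

theorem continuous_energyRateBound (hΓ : IsMotion s Γ V) (hne : ∀ τ, Γ τ x ≠ Γ τ y) :
    Continuous fun τ => energyRateBound s (Γ τ) (V τ) x y :=
  ((hΓ.continuous_energyDensity (U := Γ) hne (hΓ.continuous_apply x) (hΓ.continuous_apply y)
    (hΓ.continuous_deriv_apply x)).sqrt.mul (hΓ.continuous_metricDensity hne).sqrt).const_mul _

theorem measurable_energyRateBound (hΓ : IsMotion s Γ V) :
    Measurable fun w : ℝ × ℝ × ℝ => energyRateBound s (Γ w.1) (V w.1) w.2.1 w.2.2 :=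
  (hΓ.measurable_energyDensity.sqrt.mul hΓ.measurable_metricDensity.sqrt).const_mul _

theorem energyDensity_sub_le_integral (hs : 0 ≤ s) (hΓ : IsMotion s Γ V) (hx : x ∈ I01)
    (hy : y ∈ I01) (hxy : x ≠ y) (ht : t ∈ Icc 0 1) :
    energyDensity s (Γ t) (Γ t) x y - energyDensity s (Γ 1) (Γ 1) x y ≤
      ∫ τ in Icc 0 1, energyRateBound s (Γ τ) (V τ) x y := by
  have hne := hΓ.ne_of_ne hx hy hxy
  have hcont := hΓ.continuous_energyRateBound hne
  have hderiv := fun τ (hτ : τ ∈ Ioo t 1) =>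
    hΓ.differentiableAt_energyDensity_and_abs_deriv_le hs (Ioo_subset_Ioo_left ht.1 hτ) hx hy hxy
  have hftc := norm_sub_le_integral_of_norm_deriv_le_of_le
    (f := fun τ => energyDensity s (Γ τ) (Γ τ) x y)
    (B := fun τ => energyRateBound s (Γ τ) (V τ) x y) ht.2
    (hΓ.continuous_energyDensity (U := Γ) hne (hΓ.continuous_apply x) (hΓ.continuous_apply y)
      (hΓ.continuous_deriv_apply x)).continuousOn
    (fun τ hτ => (hderiv τ hτ).1.differentiableWithinAt)
    (.of_forall fun τ hτ => (hderiv τ hτ).2) (hcont.intervalIntegrable t 1)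
  rw [norm_sub_rev, intervalIntegral.integral_of_le ht.2] at hftc
  refine (le_norm_self _).trans (hftc.trans ?_)
  exact setIntegral_mono_set hcont.integrableOn_Icc
    (.of_forall fun τ => energyRateBound_nonneg s (Γ τ) (V τ) x y)
    (LE.le.eventuallyLE (Ioc_subset_Icc_self.trans (Icc_subset_Icc_left ht.1)))

theorem ofReal_energyDensity_le (hs : 0 ≤ s) (hΓ : IsMotion s Γ V) (hx : x ∈ I01)
    (hy : y ∈ I01) (ht : t ∈ Icc 0 1) :
    ENNReal.ofReal (energyDensity s (Γ t) (Γ t) x y) ≤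
      ENNReal.ofReal (energyDensity s (Γ 1) (Γ 1) x y) +
        ∫⁻ τ in Icc 0 1, ENNReal.ofReal (energyRateBound s (Γ τ) (V τ) x y) := by
  rcases eq_or_ne x y with rfl | hxy
  · simp [energyDensity_diag]
  have hnonneg : ∀ᵐ τ ∂volume.restrict (Icc 0 1), 0 ≤ energyRateBound s (Γ τ) (V τ) x y :=
    .of_forall fun τ => energyRateBound_nonneg s (Γ τ) (V τ) x y
  rw [← ofReal_integral_eq_lintegral_ofReal
      (hΓ.continuous_energyRateBound (hΓ.ne_of_ne hx hy hxy)).integrableOn_Icc hnonneg,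
    ← ENNReal.ofReal_add (energyDensity_nonneg s (Γ 1) (Γ 1) x y)
      (integral_nonneg_of_ae hnonneg)]
  exact ENNReal.ofReal_le_ofReal
    (sub_le_iff_le_add'.1 (hΓ.energyDensity_sub_le_integral hs hx hy hxy ht))

end IsMotion

theorem ofReal_sqrt_rpow_two (a : ℝ) : ENNReal.ofReal (√a) ^ (2 : ℝ) = ENNReal.ofReal a := by
  rw [ENNReal.ofReal_rpow_of_nonneg (sqrt_nonneg a) zero_le_two, rpow_two, sq_sqrt',
    ENNReal.ofReal_max, ENNReal.ofReal_zero, max_eq_left zero_le]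

theorem ofReal_sq_rpow_one_half {a : ℝ} (ha : 0 ≤ a) :
    ENNReal.ofReal (a ^ 2) ^ (1 / 2 : ℝ) = ENNReal.ofReal a := by
  rw [ENNReal.ofReal_rpow_of_nonneg (sq_nonneg a) one_half_pos.le, ← sqrt_eq_rpow, sqrt_sq ha]

theorem lintegral_ofReal_sqrt_mul_sqrt_le {α : Type*} [MeasurableSpace α] {μ : Measure α}
    {f g : α → ℝ} {a c : ℝ} (hf : AEMeasurable f μ) (hg : AEMeasurable g μ) (ha : 0 ≤ a)
    (hc : 0 ≤ c) (hfa : ∫⁻ z, ENNReal.ofReal (f z) ∂μ ≤ ENNReal.ofReal (a ^ 2))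
    (hgc : ∫⁻ z, ENNReal.ofReal (g z) ∂μ ≤ ENNReal.ofReal (c ^ 2)) :
    ∫⁻ z, ENNReal.ofReal (√(f z) * √(g z)) ∂μ ≤ ENNReal.ofReal (a * c) := by
  have hholder := ENNReal.lintegral_mul_le_Lp_mul_Lq μ (p := 2) (q := 2) .two_two
    hf.sqrt.ennreal_ofReal hg.sqrt.ennreal_ofReal
  simp only [Pi.mul_apply, ofReal_sqrt_rpow_two, ← ENNReal.ofReal_mul (sqrt_nonneg _)] at hholder
  refine hholder.trans ?_
  rw [ENNReal.ofReal_mul ha, ← ofReal_sq_rpow_one_half ha, ← ofReal_sq_rpow_one_half hc]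
  gcongr

namespace CurveBounds

variable {n : ℕ} {s a b M K E : ℝ} {γ u : ℝ → En n}

theorem lintegral_metricDensity_le_Gmet (hs : 0 ≤ s) (h : CurveBounds s γ u b M K E)
    (hγ : InM s γ) (hu : InHs s u) :
    ∫⁻ z, ENNReal.ofReal (metricDensity s γ u z.1 z.2) ∂squareMeasure ≤
      ENNReal.ofReal (Gmet s γ u u) := by
  have hnonneg : ∀ᵐ z ∂squareMeasure, 0 ≤ metricDensity s γ u z.1 z.2 :=
    .of_forall fun z => metricDensity_nonneg hs γ u z.1 z.2
  rw [← ofReal_integral_eq_lintegral_ofReal (h.hasIntegral_metricDensity hγ hu).1 hnonneg]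
  exact ENNReal.ofReal_le_ofReal (h.integral_metricDensity_le_Gmet hγ hu)

theorem Gmet_self_nonneg (hs : 0 ≤ s) (h : CurveBounds s γ u b M K E) (hγ : InM s γ)
    (hu : InHs s u) : 0 ≤ Gmet s γ u u :=
  (innerH1g_self_nonneg γ u).trans (h.innerH1g_self_le_Gmet hs hγ hu)

theorem lintegral_energyRateBound_le (hs : 0 ≤ s) (h : CurveBounds s γ u b M K E)
    (hγ : InM s γ) (hu : InHs s u) (ha : 0 ≤ a)
    (hE : RmuSqE s γ γ ≤ ENNReal.ofReal (a ^ 2)) :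
    ∫⁻ z, ENNReal.ofReal (energyRateBound s γ u z.1 z.2) ∂squareMeasure ≤
      ENNReal.ofReal (√(2 * s + 5) * a * √(Gmet s γ u u)) := by
  have hCS := lintegral_ofReal_sqrt_mul_sqrt_le (c := √(Gmet s γ u u))
    (hγ.measurable_energyDensity hγ.inHs).aemeasurable
    (h.hasIntegral_metricDensity hγ hu).1.aestronglyMeasurable.aemeasurable ha (sqrt_nonneg _)
    ((hγ.RmuSqE_eq_lintegral hγ.inHs).symm.trans_le hE)
    (by
      rw [sq_sqrt (h.Gmet_self_nonneg hs hγ hu)]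
      exact h.lintegral_metricDensity_le_Gmet hs hγ hu)
  simp only [energyRateBound, mul_assoc, ENNReal.ofReal_mul (sqrt_nonneg (2 * s + 5))]
  rw [lintegral_const_mul' _ _ ENNReal.ofReal_ne_top]
  gcongr

end CurveBounds

/-- The length, with respect to `G`, of a motion with velocity field `V`. -/
def motionLength {n : ℕ} (s : ℝ) (Γ V : ℝ → ℝ → En n) : ℝ :=
  ∫ t in (0 : ℝ)..1, √(Gmet s (Γ t) (V t) (V t))

theorem ae_squareMeasure_mem : ∀ᵐ z ∂squareMeasure, z.1 ∈ I01 ∧ z.2 ∈ I01 := by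
  rw [squareMeasure, Measure.prod_restrict]
  exact ae_restrict_mem (measurableSet_Ico.prod measurableSet_Ico)

theorem le_sqrt_add_sq_of_le_add_sqrt_mul {S e c : ℝ} (hS : 0 ≤ S) (he : 0 ≤ e) (hc : 0 ≤ c)
    (h : S ≤ e + √S * c) : S ≤ (√e + c) ^ 2 := by
  refine (sqrt_le_left (by positivity)).1 (le_of_not_gt fun hlt => ?_)
  have he' : √e * √e ≤ √e * √S :=
    mul_le_mul_of_nonneg_left (by linarith) (sqrt_nonneg e)
  have hS' : √S * (√e + c) < √S * √S :=
    mul_lt_mul_of_pos_left hlt ((by positivity : 0 ≤ √e + c).trans_lt hlt)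
  rw [mul_self_sqrt he] at he'
  rw [mul_self_sqrt hS] at hS'
  linarith

namespace IsMotion

variable {n : ℕ} {s t a : ℝ} {Γ V : ℝ → ℝ → En n}

theorem lintegral_sqrt_Gmet (hs : 1 ≤ s) (hΓ : IsMotion s Γ V) :
    ∫⁻ t in Icc 0 1, ENNReal.ofReal (√(Gmet s (Γ t) (V t) (V t))) =
      ENNReal.ofReal (motionLength s Γ V) := by
  rw [motionLength, intervalIntegral.integral_of_le zero_le_one, ← integral_Icc_eq_integral_Ioc,
    ofReal_integral_eq_lintegral_ofReal (hΓ.integrableOn_sqrt_Gmet hs)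
      (.of_forall fun t => sqrt_nonneg _)]

theorem RmuSqE_le_add (hs : 1 ≤ s) (hΓ : IsMotion s Γ V) (ha : 0 ≤ a)
    (hE : ∀ t ∈ Icc 0 1, RmuSqE s (Γ t) (Γ t) ≤ ENNReal.ofReal (a ^ 2)) (ht : t ∈ Icc 0 1) :
    RmuSqE s (Γ t) (Γ t) ≤
      RmuSqE s (Γ 1) (Γ 1) + ENNReal.ofReal (√(2 * s + 5) * a * motionLength s Γ V) := by
  have hs₀ : 0 ≤ s := zero_le_one.trans hs
  obtain ⟨b, M, K, E, hbd⟩ := hΓ.exists_curveBounds hs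
  have hrate : ∀ τ ∈ Icc (0 : ℝ) 1,
      ∫⁻ z, ENNReal.ofReal (energyRateBound s (Γ τ) (V τ) z.1 z.2) ∂squareMeasure ≤
        ENNReal.ofReal (√(2 * s + 5) * a * √(Gmet s (Γ τ) (V τ) (V τ))) := fun τ hτ =>
    (hbd τ hτ).lintegral_energyRateBound_le hs₀ (hΓ.inM τ) (hΓ.inHs τ) ha (hE τ hτ)
  have hmeas : AEMeasurable (Function.uncurry fun (z : ℝ × ℝ) (τ : ℝ) =>
      ENNReal.ofReal (energyRateBound s (Γ τ) (V τ) z.1 z.2))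
      (squareMeasure.prod (volume.restrict (Icc (0 : ℝ) 1))) :=
    (hΓ.measurable_energyRateBound.ennreal_ofReal.comp measurable_swap).aemeasurable
  rw [(hΓ.inM t).RmuSqE_eq_lintegral (hΓ.inM t).inHs]
  calc ∫⁻ z, ENNReal.ofReal (energyDensity s (Γ t) (Γ t) z.1 z.2) ∂squareMeasure
      ≤ ∫⁻ z, (ENNReal.ofReal (energyDensity s (Γ 1) (Γ 1) z.1 z.2) +
          ∫⁻ τ in Icc 0 1, ENNReal.ofReal (energyRateBound s (Γ τ) (V τ) z.1 z.2))
          ∂squareMeasure := by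
        refine lintegral_mono_ae (ae_squareMeasure_mem.mono fun z hz => ?_)
        exact hΓ.ofReal_energyDensity_le hs₀ hz.1 hz.2 ht
    _ = RmuSqE s (Γ 1) (Γ 1) + ∫⁻ τ in Icc 0 1, ∫⁻ z,
          ENNReal.ofReal (energyRateBound s (Γ τ) (V τ) z.1 z.2) ∂squareMeasure := by
        rw [lintegral_add_left
          ((hΓ.inM 1).measurable_energyDensity (hΓ.inM 1).inHs).ennreal_ofReal,
          ← (hΓ.inM 1).RmuSqE_eq_lintegral (hΓ.inM 1).inHs, lintegral_lintegral_swap hmeas]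
    _ ≤ RmuSqE s (Γ 1) (Γ 1) + ∫⁻ τ in Icc 0 1,
          ENNReal.ofReal (√(2 * s + 5) * a * √(Gmet s (Γ τ) (V τ) (V τ))) := by
        gcongr 1
        exact setLIntegral_mono' measurableSet_Icc hrate
    _ = RmuSqE s (Γ 1) (Γ 1) + ENNReal.ofReal (√(2 * s + 5) * a * motionLength s Γ V) := by
        have hC : 0 ≤ √(2 * s + 5) * a := by positivity
        simp only [ENNReal.ofReal_mul hC]
        rw [lintegral_const_mul' _ _ ENNReal.ofReal_ne_top, hΓ.lintegral_sqrt_Gmet hs]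

theorem RmuSqE_le (hs : 1 ≤ s) (hΓ : IsMotion s Γ V) (ht : t ∈ Icc 0 1) :
    RmuSqE s (Γ t) (Γ t) ≤ ENNReal.ofReal
      ((√(RmuSqE s (Γ 1) (Γ 1)).toReal + √(2 * s + 5) * motionLength s Γ V) ^ 2) := by
  obtain ⟨b, M, K, E, hbd⟩ := hΓ.exists_curveBounds hs
  set e : ℝ → ℝ := fun τ => (RmuSqE s (Γ τ) (Γ τ)).toReal
  have hofReal : ∀ τ ∈ Icc (0 : ℝ) 1, RmuSqE s (Γ τ) (Γ τ) = ENNReal.ofReal (e τ) := fun τ hτ =>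
    (ENNReal.ofReal_toReal (hbd τ hτ).RmuSqE_self_ne_top).symm
  have hnonneg : ∀ τ, 0 ≤ e τ := fun τ => ENNReal.toReal_nonneg
  have hlen : 0 ≤ motionLength s Γ V :=
    intervalIntegral.integral_nonneg zero_le_one fun τ _ => sqrt_nonneg _
  have hbdd : BddAbove (e '' Icc 0 1) := by
    refine ⟨E, forall_mem_image.2 fun τ hτ => ?_⟩
    exact ENNReal.toReal_le_of_le_ofReal (hbd τ hτ).energy_nonneg (hbd τ hτ).RmuSqE_self_le
  set S := sSup (e '' Icc 0 1)
  have hle : ∀ τ ∈ Icc (0 : ℝ) 1, e τ ≤ S := fun τ hτ => le_csSup hbdd (mem_image_of_mem e hτ)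
  have hS : 0 ≤ S := (hnonneg t).trans (hle t ht)
  have hstep : S ≤ e 1 + √S * (√(2 * s + 5) * motionLength s Γ V) := by
    refine csSup_le ⟨e t, mem_image_of_mem e ht⟩ (forall_mem_image.2 fun τ hτ => ?_)
    have hadd := hΓ.RmuSqE_le_add hs (sqrt_nonneg S) (fun σ hσ => by
      rw [sq_sqrt hS, hofReal σ hσ]
      exact ENNReal.ofReal_le_ofReal (hle σ hσ)) hτ
    rw [hofReal 1 (right_mem_Icc.2 zero_le_one),
      ← ENNReal.ofReal_add (hnonneg 1) (by positivity)] at hadd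
    refine (ENNReal.toReal_le_of_le_ofReal (add_nonneg (hnonneg 1) (by positivity)) hadd).trans_eq
      ?_
    ring
  rw [hofReal t ht]
  exact ENNReal.ofReal_le_ofReal ((hle t ht).trans
    (le_sqrt_add_sq_of_le_add_sqrt_mul hS (hnonneg 1) (by positivity) hstep))

end IsMotion

section LogEstimate

variable {n : ℕ} {s Q L : ℝ} {γ γ₁ : ℝ → En n} {Γ V : ℝ → ℝ → En n}

theorem IsMotion.abs_log_norm_deriv_sub_le (hs : 1 ≤ s) (hΓ : IsMotion s Γ V) (x : ℝ)
    (hQ : ∀ t ∈ Icc 0 1, ‖Dg (Γ t) (V t) x‖ ≤ Q * √(Gmet s (Γ t) (V t) (V t))) :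
    |log ‖deriv (Γ 1) x‖ - log ‖deriv (Γ 0) x‖| ≤ Q * motionLength s Γ V := by
  have hne : ∀ t, ‖deriv (Γ t) x‖ ≠ 0 := fun t => (hΓ.inM t).norm_deriv_ne_zero x
  have hdiff : ∀ t ∈ Ioo (0 : ℝ) 1, DifferentiableAt ℝ (fun t => ‖deriv (Γ t) x‖) t :=
    fun t ht => (hasDerivAt_norm_of_ne_zero (hΓ.hasDerivAt_deriv t ht x)
      (hΓ.deriv_ne_zero t x)).differentiableAt
  have hint : IntervalIntegrable (fun t => √(Gmet s (Γ t) (V t) (V t))) volume 0 1 :=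
    (intervalIntegrable_iff_integrableOn_Icc_of_le zero_le_one).2 (hΓ.integrableOn_sqrt_Gmet hs)
  have hftc := norm_sub_le_integral_of_norm_deriv_le_of_le
    (f := fun t => log ‖deriv (Γ t) x‖) (B := fun t => Q * √(Gmet s (Γ t) (V t) (V t)))
    zero_le_one ((hΓ.continuous_deriv_apply x).norm.log hne).continuousOn
    (fun t ht => ((hdiff t ht).log (hne t)).differentiableWithinAt)
    (.of_forall fun t ht => by
      have hlog := deriv_log_comp_eq_logDeriv (hdiff t ht) (hne t)
      rw [Function.comp_def] at hlog
      rw [hlog, norm_eq_abs]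
      refine (abs_logDeriv_norm_le (hΓ.hasDerivAt_deriv t ht x) (hΓ.deriv_ne_zero t x)).trans ?_
      rw [← norm_Dg]
      exact hQ t (Ioo_subset_Icc_self ht))
    (hint.const_mul Q)
  rwa [intervalIntegral.integral_const_mul, norm_eq_abs] at hftc

theorem IsMotion.exists_abs_log_norm_deriv_sub_le (hs : 3 / 2 < s) (γ₁ : ℝ → En n) (hL : 0 < L) :
    ∃ r ≥ 0, ∀ Γ V : ℝ → ℝ → En n, IsMotion s Γ V → Γ 1 = γ₁ → motionLength s Γ V ≤ L →
      ∀ x, |log ‖deriv γ₁ x‖ - log ‖deriv (Γ 0) x‖| ≤ r := by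
  have hs₁ : 1 ≤ s := by linarith
  have hs₀ : 0 ≤ s := by linarith
  have hA : 0 < √(RmuSqE s γ₁ γ₁).toReal + √(2 * s + 5) * L := by positivity
  obtain ⟨Q, hQ, hbound⟩ := exists_norm_Dg_le hs hA
  refine ⟨Q * L, by positivity, ?_⟩
  rintro Γ V hΓ rfl hlen x
  obtain ⟨b, M, K, E, hbd⟩ := hΓ.exists_curveBounds hs₁
  have hlen₀ : 0 ≤ motionLength s Γ V :=
    intervalIntegral.integral_nonneg zero_le_one fun τ _ => sqrt_nonneg _
  have hDg : ∀ t ∈ Icc 0 1, ‖Dg (Γ t) (V t) x‖ ≤ Q * √(Gmet s (Γ t) (V t) (V t)) := by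
    intro t ht
    have hG := (hbd t ht).Gmet_self_nonneg hs₀ (hΓ.inM t) (hΓ.inHs t)
    refine hbound n (Γ t) (V t) (hΓ.inM t) (hΓ.inHs t) _ (sqrt_nonneg _) ?_ ?_ ?_ x
    · refine (hΓ.RmuSqE_le hs₁ ht).trans (ENNReal.ofReal_le_ofReal ?_)
      gcongr
    · rw [sq_sqrt hG]
      exact (hbd t ht).RmuSqE_le_Gmet hs₀ (hΓ.inM t) (hΓ.inHs t)
    · rw [sq_sqrt hG, ← innerH1g_self]
      exact (hbd t ht).innerH1g_self_le_Gmet hs₀ (hΓ.inM t) (hΓ.inHs t)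
  exact (hΓ.abs_log_norm_deriv_sub_le hs₁ x hDg).trans (by gcongr)

theorem exists_isMotion_of_geodDist_lt {γ₀ : ℝ → En n} (hs : 3 / 2 < s) (hL : 0 < L)
    (h : geodDist s γ₀ γ₁ < ENNReal.ofReal L) :
    ∃ Γ V, IsMotion s Γ V ∧ Γ 0 = γ₀ ∧ Γ 1 = γ₁ ∧ motionLength s Γ V ≤ L := by
  simp only [geodDist, iInf_lt_iff] at h
  obtain ⟨P, ⟨rfl, rfl⟩, hlen⟩ := h
  refine ⟨_, _, P.isMotion hs, by simp, by simp, ?_⟩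
  refine le_trans (le_of_eq ?_) ((ENNReal.ofReal_lt_ofReal_iff hL).1 hlen).le
  refine intervalIntegral.integral_congr fun t ht => ?_
  rw [uIcc_of_le zero_le_one] at ht
  simp only [projIcc_of_mem zero_le_one ht]

theorem exists_abs_log_norm_deriv_sub_le_of_geodDist_le (hs : 3 / 2 < s) (γ₁ : ℝ → En n)
    (R : ℝ) :
    ∃ r ≥ 0, ∀ γ, geodDist s γ γ₁ ≤ ENNReal.ofReal R →
      ∀ x, |log ‖deriv γ₁ x‖ - log ‖deriv γ x‖| ≤ r := by
  have hL : 0 < max R 0 + 1 := by positivity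
  have hRL : ENNReal.ofReal R < ENNReal.ofReal (max R 0 + 1) :=
    (ENNReal.ofReal_lt_ofReal_iff hL).2 ((le_max_left R 0).trans_lt (lt_add_one _))
  obtain ⟨r, hr, hlog⟩ := IsMotion.exists_abs_log_norm_deriv_sub_le hs γ₁ hL
  refine ⟨r, hr, fun γ hγ x => ?_⟩
  obtain ⟨Γ, V, hΓ, rfl, hΓ₁, hlen⟩ :=
    exists_isMotion_of_geodDist_lt hs hL (hγ.trans_lt hRL)
  exact hlog Γ V hΓ hΓ₁ hlen x

theorem InM.exists_abs_log_norm_deriv_le (hγ : InM s γ) :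
    ∃ B ≥ 0, ∀ x, |log ‖deriv γ x‖| ≤ B := by
  have hcont : Continuous fun x => log ‖deriv γ x‖ :=
    hγ.inHs.continuous_deriv.norm.log hγ.norm_deriv_ne_zero
  obtain ⟨x₀, hx₀⟩ := exists_forall_norm_le_of_periodic zero_lt_one hcont
    fun x => by rw [hγ.inHs.periodic_deriv x]
  exact ⟨_, abs_nonneg _, hx₀⟩

end LogEstimate

/-- uniform immersion bounds on `G`-bounded sets: for every
`G`-bounded `U ⊆ 𝓜` there are `0 < c ≤ C < ∞` with `c ≤ |γ'(x)| ≤ C` for all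
`γ ∈ U` and all `x ∈ 𝕋`. -/
theorem statement12 (s : ℝ) (hs : s ∈ Set.Ioo (3 / 2 : ℝ) 2) (n : ℕ) (hn : 2 ≤ n)
    (U : Set (ℝ → En n)) (hU : GBounded s U) :
    ∃ c C : ℝ, 0 < c ∧ c ≤ C ∧ ∀ γ ∈ U, ∀ x : ℝ,
      c ≤ ‖deriv γ x‖ ∧ ‖deriv γ x‖ ≤ C := by
  obtain ⟨hUM, γ₀, hγ₀, R, hR⟩ := hU
  obtain ⟨B, hB, hlog₀⟩ := hγ₀.exists_abs_log_norm_deriv_le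
  obtain ⟨r, hr, hlog⟩ := exists_abs_log_norm_deriv_sub_le_of_geodDist_le hs.1 γ₀ R
  refine ⟨exp (-(B + r)), exp (B + r), exp_pos _, exp_le_exp.2 (by linarith), fun γ hγ x => ?_⟩
  have hpos : 0 < ‖deriv γ x‖ := (hUM γ hγ).norm_deriv_pos x
  obtain ⟨hlower₀, hupper₀⟩ := abs_le.1 (hlog₀ x)
  obtain ⟨hlower, hupper⟩ := abs_le.1 (hlog γ (hR γ hγ) x)
  exact ⟨(le_log_iff_exp_le hpos).1 (by linarith), (log_le_iff_le_exp hpos).1 (by linarith)⟩
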